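/- Let p be a prime and let ℤ/p act linearly on S^n via an orthogonal representation ρ : ℤ/p → O(n+1) with fixed point set the great k-sphere S^k, where 0 < k < n. Suppose that either (i) k < n − 2, or (ii) k = n − 2 and n is even, or (iii) k = n − 1 and n is odd. Then TC^{ℤ/p}(S^n) = 3. -/

import Mathlib

open Set unitInterval

namespace PaperTC

variable {G X : Type*}

/-- The orbit of `x` under the action `act`. -/
def orbit (act : G → X → X) (x : X) : Set X := {y | ∃ g, act g x = y}

/-- The fixed point set of the action `act`. -/
def fixedSet (act : G → X → X) : Set X := {x | ∀ g, act g x = x}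

/-- The fixed point set of a subset `S` of the acting group. -/
def fixedSetOf (act : G → X → X) (S : Set G) : Set X := {x | ∀ g ∈ S, act g x = x}

/-- `minCover P` is the least `k ≥ 1` satisfying `P k`, as an element of `ℕ∞`
(equal to `∞` if there is no such `k`). -/
noncomputable def minCover (P : ℕ → Prop) : ℕ∞ :=
  sInf {k : ℕ∞ | ∃ m : ℕ, k = m ∧ 1 ≤ m ∧ P m}

section Plain

variable (Y : Type*) [TopologicalSpace Y]

/-- `Y × Y` can be covered by `k` open sets each admitting a motion planner. -/
def TCcover (k : ℕ) : Prop :=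
  ∃ U : Fin k → Set (Y × Y),
    (∀ i, IsOpen (U i)) ∧ (⋃ i, U i) = univ ∧
    ∀ i, ∃ s : Y × Y → C(I, Y),
      ContinuousOn s (U i) ∧ ∀ p ∈ U i, s p 0 = p.1 ∧ s p 1 = p.2

/-- Topological complexity (non-reduced, possibly infinite). -/
noncomputable def TC : ℕ∞ := minCover (TCcover Y)

/-- `Y` can be covered by `k` open sets, each of which can be deformed within `Y`
to a point. -/
def catCover (k : ℕ) : Prop :=
  ∃ U : Fin k → Set Y,
    (∀ i, IsOpen (U i)) ∧ (⋃ i, U i) = univ ∧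
    ∀ i, ∃ H : Y × I → Y,
      ContinuousOn H (U i ×ˢ (univ : Set I)) ∧ (∀ x ∈ U i, H (x, 0) = x) ∧
      ∃ y₀, ∀ x ∈ U i, H (x, 1) = y₀

/-- Non-reduced Lusternik–Schnirelmann category. -/
noncomputable def cat : ℕ∞ := minCover (catCover Y)

end Plain

section Equivariant

variable [TopologicalSpace X] (act : G → X → X)

/-- `X × X` can be covered by `k` invariant open sets each admitting an
equivariant motion planner. -/
def eqTCcover (k : ℕ) : Prop :=
  ∃ U : Fin k → Set (X × X),
    (∀ i, IsOpen (U i)) ∧ (⋃ i, U i) = univ ∧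
    ∀ i, (∀ g p, p ∈ U i → (act g p.1, act g p.2) ∈ U i) ∧
      ∃ s : X × X → C(I, X),
        ContinuousOn s (U i) ∧
        (∀ p ∈ U i, s p 0 = p.1 ∧ s p 1 = p.2) ∧
        (∀ g p, p ∈ U i → ∀ t : I, s (act g p.1, act g p.2) t = act g (s p t))

/-- Equivariant topological complexity `TC_G` of Colman and Grant. -/
noncomputable def eqTC : ℕ∞ := minCover (eqTCcover act)

/-- `X × X` can be covered by `k` `(G × G)`-invariant open sets, each admitting a
`(G × G)`-equivariant section of `π^G : P X ×_{X/G} P X → X × X`; such a section is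
recorded by a pair of paths `s₁ p`, `s₂ p`, with the orbit of the endpoint of the first
equal to the orbit of the starting point of the second. -/
def invTCcover (k : ℕ) : Prop :=
  ∃ U : Fin k → Set (X × X),
    (∀ i, IsOpen (U i)) ∧ (⋃ i, U i) = univ ∧
    ∀ i, (∀ g₁ g₂ : G, ∀ p, p ∈ U i → (act g₁ p.1, act g₂ p.2) ∈ U i) ∧
      ∃ s₁ s₂ : X × X → C(I, X),
        ContinuousOn s₁ (U i) ∧ ContinuousOn s₂ (U i) ∧
        (∀ p ∈ U i, s₁ p 0 = p.1 ∧ s₂ p 1 = p.2 ∧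
          orbit act (s₁ p 1) = orbit act (s₂ p 0)) ∧
        (∀ g₁ g₂ : G, ∀ p, p ∈ U i → ∀ t : I,
          s₁ (act g₁ p.1, act g₂ p.2) t = act g₁ (s₁ p t) ∧
          s₂ (act g₁ p.1, act g₂ p.2) t = act g₂ (s₂ p t))

/-- Invariant topological complexity `TC^G` of Lubawski and Marzantowicz. -/
noncomputable def invTC : ℕ∞ := minCover (invTCcover act)

/-- The invariant open set `U` is `G`-compressible into `A`: the inclusion `U ↪ X` is
`G`-equivariantly homotopic to a `G`-map with values in `A`. -/
def GCompressible (A : Set X) (U : Set X) : Prop :=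
  (∀ g x, x ∈ U → act g x ∈ U) ∧
  ∃ H : X × I → X,
    ContinuousOn H (U ×ˢ (univ : Set I)) ∧ (∀ x ∈ U, H (x, 0) = x) ∧
    (∀ g x, x ∈ U → ∀ t : I, H (act g x, t) = act g (H (x, t))) ∧
    (∀ x ∈ U, H (x, 1) ∈ A)

/-- A `G`-categorical set: compressible into a single orbit. -/
def GCategorical (U : Set X) : Prop :=
  ∃ x₀ : X, GCompressible act (orbit act x₀) U

/-- `X` can be covered by `k` open `G`-categorical sets. -/
def catGCover (k : ℕ) : Prop :=
  ∃ U : Fin k → Set X,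
    (∀ i, IsOpen (U i)) ∧ (⋃ i, U i) = univ ∧ ∀ i, GCategorical act (U i)

/-- Equivariant Lusternik–Schnirelmann category `cat_G`. -/
noncomputable def catG : ℕ∞ := minCover (catGCover act)

/-- `X` can be covered by `k` open sets `G`-compressible into `{star}`. -/
def pointedCatGCover (star : X) (k : ℕ) : Prop :=
  ∃ U : Fin k → Set X,
    (∀ i, IsOpen (U i)) ∧ (⋃ i, U i) = univ ∧
    ∀ i, GCompressible act {star} (U i)

/-- The pointed equivariant category `_{{⋆}}cat_G(X)`. -/
noncomputable def pointedCatG (star : X) : ℕ∞ := minCover (pointedCatGCover act star)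

/-- `X` is `G`-contractible: the identity is `G`-homotopic to a map with values in a
single orbit. -/
def GContractible : Prop :=
  ∃ H : X × I → X,
    Continuous H ∧ (∀ x, H (x, 0) = x) ∧
    (∀ g x, ∀ t : I, H (act g x, t) = act g (H (x, t))) ∧
    ∃ x₀ : X, ∀ x, H (x, 1) ∈ orbit act x₀

end Equivariant

/-- The orbit space `X/G` with the quotient topology. -/
abbrev OrbitSpace (act : G → X → X) : Type _ := Quot (fun x y => ∃ g, act g x = y)

end PaperTC
namespace PaperTC

/-- The unit sphere `S^n ⊆ ℝ^{n+1}` (with the Euclidean metric). -/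
abbrev Sph (n : ℕ) : Set (EuclideanSpace ℝ (Fin (n + 1))) := Metric.sphere 0 1

/-- The action of `G` on the unit sphere `S^n` obtained by restricting an orthogonal
representation of `G` on `ℝ^{n+1}`. -/
noncomputable def sphereAct {G : Type*} [Monoid G] {n : ℕ}
    (ρ : G →* (EuclideanSpace ℝ (Fin (n + 1)) ≃ₗᵢ[ℝ] EuclideanSpace ℝ (Fin (n + 1)))) :
    G → ↥(Sph n) → ↥(Sph n) := fun g x =>
  ⟨ρ g x, mem_sphere_zero_iff_norm.mpr (by
    rw [(ρ g).norm_map]; exact mem_sphere_zero_iff_norm.mp x.2)⟩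

end PaperTC

open PaperTC

/-!
Write `S` for the unit sphere and `F` for its fixed subsphere, of dimension `k > 0`.

*Upper bound.* For a fixed point `a`, the complement of `-a` contracts equivariantly to `a` along
segments. The complement of `a` contracts to `a` as well: follow the segments towards a point which
moves from `a` around a great circle of fixed points. Either contraction plans motions between any
two of its points through `a`, and the values of the invariant height `⟪a, x⟫` at the two ends split
`S × S` into three sets on which one of the contractions serves both ends, or one serves each end.

*Lower bound.* Suppose that two invariant open sets cover `S × S` and admit planners. A class which
is represented by small invariant cochains has a zero divisor `u ⊗ 1 - 1 ⊗ u`. Moving the endpoints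
towards each other along the planner of one of the two sets makes the zero divisor vanish on that
set. Hence the product of the zero divisors of `u` and `v`, moved along one planner each, evaluates
to `0` on every product of a `u`-cycle and a `v`-cycle. This product evaluates to `-(∫ u) (∫ v)` if
`0 < deg u < deg v`, and to `-2 (∫ u) ^ 2` if `u = v` has even positive degree. Cochains are of
Alexander-Spanier type, cycles are cubes whose faces are matched by the action or negligible, and
evaluation is the sum over the Kuhn triangulation of a fine grid. If `k` is even, take for `u = v`
the fundamental class of `F`, with integer coefficients. Otherwise `S` is the join of `F` with a
sphere of dimension `n - k - 1` at least `2` on which `ℤ/p` acts freely, and `u`, `v` are the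
`(k + 1)`-fold suspensions of the class of degree one of the free action and of its Bockstein.
-/

namespace InvTC

open Equiv (Perm)
open Filter (Eventually atTop)

section Cochains

variable {X Y R : Type*}

/-- The pullback of a cochain along a map. -/
def pull (h : X → Y) (u : (ℕ → Y) → R) : (ℕ → X) → R := fun x => u (h ∘ x)

variable [CommRing R]

/-- The order embedding `ℕ → ℕ` which omits the value `i`. -/
def skip (i j : ℕ) : ℕ := if j < i then j else j + 1

/-- The alternating coboundary of a cochain of degree `a`. Here and below a cochain of degree `a`
on `X` is encoded as a function `φ` on all sequences in `X` with `DependsOn φ (Iic a)`, so that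
only the entries `0, …, a` matter. -/
def coboundary (a : ℕ) (φ : (ℕ → X) → R) (x : ℕ → X) : R :=
  ∑ i ∈ Finset.range (a + 2), (-1) ^ i * φ (x ∘ skip i)

/-- A cochain of degree `a` is normalized when it vanishes on degenerate simplices. -/
def IsNormalized (a : ℕ) (φ : (ℕ → X) → R) : Prop :=
  ∀ x : ℕ → X, (∃ i < a, x i = x (i + 1)) → φ x = 0

/-- The Alexander–Whitney cup product of a cochain of degree `a` with another cochain. -/
def cup (a : ℕ) (φ ψ : (ℕ → X) → R) (x : ℕ → X) : R := φ x * ψ (x ∘ (a + ·))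

theorem coboundary_cup {a : ℕ} (b : ℕ) {φ : (ℕ → X) → R} (hφ : DependsOn φ (Iic a))
    (ψ : (ℕ → X) → R) (x : ℕ → X) :
    coboundary (a + b) (cup a φ ψ) x =
      coboundary a φ x * ψ (x ∘ (a + 1 + ·)) + (-1) ^ a * φ x * coboundary b ψ (x ∘ (a + ·)) := by
  have front : ∀ i ∈ Finset.range (a + 1), (-1) ^ i * cup a φ ψ (x ∘ skip i) =
      (-1) ^ i * φ (x ∘ skip i) * ψ (x ∘ (a + 1 + ·)) := by
    intro i hi
    have tail : (x ∘ skip i) ∘ (a + ·) = x ∘ (a + 1 + ·) := by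
      funext j
      have : skip i (a + j) = a + 1 + j := by grind [skip]
      simp [this]
    rw [cup, tail, mul_assoc]
  have back : ∀ i ∈ Finset.range (b + 1), (-1) ^ (a + 1 + i) * cup a φ ψ (x ∘ skip (a + 1 + i)) =
      (-1) ^ a * φ x * ((-1) ^ (i + 1) * ψ ((x ∘ (a + ·)) ∘ skip (i + 1))) := by
    intro i _
    have head : φ (x ∘ skip (a + 1 + i)) = φ x := hφ fun j hj => by
      simp only [mem_Iic] at hj
      simp [skip, show j < a + 1 + i by omega]
    have tail : (x ∘ skip (a + 1 + i)) ∘ (a + ·) = (x ∘ (a + ·)) ∘ skip (i + 1) := by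
      funext j
      have : skip (a + 1 + i) (a + j) = a + skip (i + 1) j := by grind [skip]
      simp [this]
    rw [cup, head, tail]
    ring
  have last : φ (x ∘ skip (a + 1)) = φ x := hφ fun j hj => by
    simp [skip, show j < a + 1 from Nat.lt_succ_of_le hj]
  have first : (x ∘ (a + ·)) ∘ skip 0 = x ∘ (a + 1 + ·) := by
    funext j
    simp [skip, add_assoc, add_comm 1]
  simp only [coboundary]
  rw [show a + b + 2 = (a + 1) + (b + 1) by ring, Finset.sum_range_add, Finset.sum_congr rfl front,
    Finset.sum_congr rfl back, ← Finset.sum_mul, ← Finset.mul_sum,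
    Finset.sum_range_succ (n := a + 1), Finset.sum_range_succ' (n := b + 1), last, first]
  ring

end Cochains

section Grid

variable {X R : Type*} [CommRing R] {N : ℕ}

/-- The sign of a permutation, as an element of the coefficient ring. -/
def permSign (R : Type*) [CommRing R] {N : ℕ} : Perm (Fin N) →* R :=
  (Int.castRingHom R : ℤ →* R).comp ((Units.coeHom ℤ).comp Perm.sign)

theorem permSign_apply (ς : Perm (Fin N)) : permSign R ς = ((Perm.sign ς : ℤ) : R) := rfl

/-- The vertices of the Kuhn simplex `m ≤ m + e_{ς⁻¹ 0} ≤ m + e_{ς⁻¹ 0} + e_{ς⁻¹ 1} ≤ …` of the unit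
cube with lower corner `m`. -/
def kuhnPath (m : Fin N → ℕ) (ς : Perm (Fin N)) (j : ℕ) : Fin N → ℕ :=
  fun c => m c + if (ς c : ℕ) < j then 1 else 0

theorem kuhnPath_zero (m : Fin N → ℕ) (ς : Perm (Fin N)) : kuhnPath m ς 0 = m :=
  funext fun c => by simp [kuhnPath]

/-- The lower corners of the unit cubes in `[0, L]^N`. -/
def gridBox (L N : ℕ) : Finset (Fin N → ℕ) := Fintype.piFinset fun _ => Finset.range L

/-- The corners of `gridBox` on the lower face orthogonal to the coordinate `c`. -/
def gridFace (L : ℕ) (c : Fin N) : Finset (Fin N → ℕ) := (gridBox L N).filter (· c = 0)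

/-- The integral of a cochain `u` of degree `N` over the grid `f` of points of `X`, with the
cube `[0, L]^N` triangulated by Kuhn simplices. -/
def gridIntegral (L : ℕ) (u : (ℕ → X) → R) (f : (Fin N → ℕ) → X) : R :=
  ∑ ς : Perm (Fin N), permSign R ς * ∑ m ∈ gridBox L N, u (f ∘ kuhnPath m ς)

theorem mem_gridBox {L : ℕ} {m : Fin N → ℕ} : m ∈ gridBox L N ↔ ∀ c, m c < L := by
  simp [gridBox]

theorem mem_gridFace {L : ℕ} {c : Fin N} {m : Fin N → ℕ} :
    m ∈ gridFace L c ↔ (∀ d, m d < L) ∧ m c = 0 := by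
  simp [gridFace, mem_gridBox]

theorem sum_gridBox_eq_sum_gridFace {M : Type*} [AddCommMonoid M] {L : ℕ} (hL : 0 < L) (c : Fin N)
    (g : (Fin N → ℕ) → M) :
    ∑ m ∈ gridBox L N, g m =
      ∑ m ∈ gridFace L c, ∑ k ∈ Finset.range L, g (m + Pi.single c k) := by
  rw [← Finset.sum_product']
  refine Finset.sum_nbij' (fun m => (Function.update m c 0, m c)) (fun p => p.1 + Pi.single c p.2)
    ?_ ?_ ?_ ?_ ?_
  · intro m hm
    rw [mem_gridBox] at hm
    simp only [Finset.mem_product, mem_gridFace, Finset.mem_range]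
    grind [Function.update_apply]
  · rintro ⟨m, k⟩ hp
    simp only [Finset.mem_product, mem_gridFace, Finset.mem_range] at hp
    simp only [mem_gridBox, Pi.add_apply, Pi.single_apply]
    grind
  · intro m _
    funext d
    by_cases h : d = c <;> simp [h]
  · rintro ⟨m, k⟩ hp
    simp only [Finset.mem_product, mem_gridFace, Finset.mem_range] at hp
    refine Prod.ext (funext fun d => ?_) (by simp [hp.1.2])
    by_cases h : d = c <;> simp [h, hp.1.2]
  · intro m _
    congr 1
    funext d
    by_cases h : d = c <;> simp [h]

theorem sum_gridBox_shift_sub {M : Type*} [AddCommGroup M] {L : ℕ} (hL : 0 < L) (c : Fin N)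
    (g : (Fin N → ℕ) → M) :
    ∑ m ∈ gridBox L N, (g (m + Pi.single c 1) - g m) =
      ∑ m ∈ gridFace L c, (g (m + Pi.single c L) - g m) := by
  rw [sum_gridBox_eq_sum_gridFace hL c]
  refine Finset.sum_congr rfl fun m _ => ?_
  simp only [add_assoc, ← Pi.single_add]
  have telescope := Finset.sum_range_sub (fun k => g (m + Pi.single c k)) L
  rwa [Pi.single_zero, add_zero] at telescope

theorem kuhnPath_swap_mul (m : Fin N → ℕ) (ς : Perm (Fin N)) {i : ℕ} (hi : i + 1 < N) {j : ℕ}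
    (hj : j ≠ i + 1) :
    kuhnPath m (Equiv.swap ⟨i, by omega⟩ ⟨i + 1, hi⟩ * ς) j = kuhnPath m ς j := by
  funext c
  have : (Equiv.swap (⟨i, by omega⟩ : Fin N) ⟨i + 1, hi⟩ (ς c) : ℕ) < j ↔ (ς c : ℕ) < j := by
    rw [Equiv.swap_apply_def]
    grind
  simp only [kuhnPath, Perm.mul_apply, this]

theorem sum_permSign_mul_interior_face (φ : (ℕ → X) → R) (f : (Fin N → ℕ) → X) (m : Fin N → ℕ)
    {i : ℕ} (hi : i + 1 < N) :
    ∑ ς : Perm (Fin N), permSign R ς * φ (f ∘ kuhnPath m ς ∘ skip (i + 1)) = 0 := by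
  set s : Perm (Fin N) := Equiv.swap ⟨i, by omega⟩ ⟨i + 1, hi⟩ with hs
  have hne : (⟨i, by omega⟩ : Fin N) ≠ ⟨i + 1, hi⟩ := by simp
  have hface (ς : Perm (Fin N)) : kuhnPath m (s * ς) ∘ skip (i + 1) = kuhnPath m ς ∘ skip (i + 1) :=
    funext fun j => kuhnPath_swap_mul m ς hi (by grind [skip])
  have hsign : permSign R s = -1 := by simp [permSign_apply, hs, Perm.sign_swap hne]
  refine Finset.sum_involution (fun ς _ => s * ς) (fun ς _ => ?_) (fun ς _ _ h => ?_)
    (fun _ _ => Finset.mem_univ _) fun ς _ => ?_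
  · rw [hface, map_mul, hsign]
    ring
  · have : s = 1 := by simpa using h
    exact hne (Equiv.swap_eq_refl_iff.mp this)
  · simp [hs, ← mul_assoc]

theorem kuhnPath_finRotate_mul (m : Fin (N + 1) → ℕ) (ς : Perm (Fin (N + 1))) {j : ℕ}
    (hj : j ≤ N) :
    kuhnPath m (finRotate (N + 1) * ς) (j + 1) =
      kuhnPath (m + Pi.single (ς.symm (Fin.last N)) 1) ς j := by
  funext c
  by_cases h : ς c = Fin.last N
  · have hc : c = ς.symm (Fin.last N) := by simp [← h]
    simp [kuhnPath, ← hc, h, hj]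
  · have hc : c ≠ ς.symm (Fin.last N) := fun h' => h (by simp [h'])
    have hrot : (finRotate (N + 1) (ς c) : ℕ) = ς c + 1 := coe_finRotate_of_ne_last h
    simp only [kuhnPath, Perm.mul_apply, hrot]
    simp [hc]

theorem sum_permSign_mul_first_face {φ : (ℕ → X) → R} (hφ : DependsOn φ (Iic N))
    (f : (Fin (N + 1) → ℕ) → X) (m : Fin (N + 1) → ℕ) :
    ∑ ς : Perm (Fin (N + 1)), permSign R ς * φ (f ∘ kuhnPath m ς ∘ skip 0) =
      (-1) ^ N * ∑ ς : Perm (Fin (N + 1)), permSign R ς *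
        φ (f ∘ kuhnPath (m + Pi.single (ς.symm (Fin.last N)) 1) ς) := by
  rw [← Equiv.sum_comp (Equiv.mulLeft (finRotate (N + 1))), Finset.mul_sum]
  refine Finset.sum_congr rfl fun ς _ => ?_
  have hsign : permSign R (finRotate (N + 1)) = (-1) ^ N := by simp [permSign_apply, sign_finRotate]
  rw [Equiv.coe_mulLeft, map_mul, hsign, mul_assoc]
  congr 2
  exact hφ fun j hj => congrArg f (by simpa [skip] using kuhnPath_finRotate_mul m ς hj)

theorem sum_permSign_mul_coboundary {φ : (ℕ → X) → R} (hφ : DependsOn φ (Iic N))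
    (f : (Fin (N + 1) → ℕ) → X) (m : Fin (N + 1) → ℕ) :
    ∑ ς : Perm (Fin (N + 1)), permSign R ς * coboundary N φ (f ∘ kuhnPath m ς) =
      (-1) ^ N * ∑ ς : Perm (Fin (N + 1)), permSign R ς *
        (φ (f ∘ kuhnPath (m + Pi.single (ς.symm (Fin.last N)) 1) ς) - φ (f ∘ kuhnPath m ς)) := by
  have interior : ∑ k ∈ Finset.range N, ∑ ς : Perm (Fin (N + 1)),
      permSign R ς * ((-1) ^ (k + 1) * φ (f ∘ kuhnPath m ς ∘ skip (k + 1))) = 0 := by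
    refine Finset.sum_eq_zero fun k hk => ?_
    simp only [mul_left_comm _ ((-1 : R) ^ (k + 1)), ← Finset.mul_sum]
    rw [sum_permSign_mul_interior_face φ f m (by simpa using hk), mul_zero]
  have last (ς : Perm (Fin (N + 1))) :
      φ (f ∘ kuhnPath m ς ∘ skip (N + 1)) = φ (f ∘ kuhnPath m ς) := hφ fun j hj => by
    simp [skip, show j < N + 1 from Nat.lt_succ_of_le hj]
  simp only [coboundary, Finset.mul_sum, Function.comp_assoc]
  rw [Finset.sum_comm, Finset.sum_range_succ, Finset.sum_range_succ', interior]
  simp only [last, pow_zero, one_mul, zero_add]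
  rw [sum_permSign_mul_first_face hφ, Finset.mul_sum, ← Finset.sum_add_distrib]
  refine Finset.sum_congr rfl fun ς _ => ?_
  ring

theorem gridIntegral_coboundary {L : ℕ} (hL : 0 < L) {φ : (ℕ → X) → R} (hφ : DependsOn φ (Iic N))
    (f : (Fin (N + 1) → ℕ) → X) :
    gridIntegral L (coboundary N φ) f =
      (-1) ^ N * ∑ ς : Perm (Fin (N + 1)), permSign R ς *
        ∑ m ∈ gridFace L (ς.symm (Fin.last N)),
          (φ (f ∘ kuhnPath (m + Pi.single (ς.symm (Fin.last N)) L) ς) - φ (f ∘ kuhnPath m ς)) := by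
  simp only [gridIntegral, Finset.mul_sum (gridBox L (N + 1))]
  rw [Finset.sum_comm]
  simp only [sum_permSign_mul_coboundary hφ]
  rw [← Finset.mul_sum, Finset.sum_comm]
  refine congrArg _ (Finset.sum_congr rfl fun ς _ => ?_)
  rw [← Finset.mul_sum, sum_gridBox_shift_sub hL _ fun m => φ (f ∘ kuhnPath m ς)]

end Grid

section Blocks

variable {X Y R : Type*} [CommRing R] {N a b L : ℕ}

/-- The permutation of `Fin (a + b)` acting by `s` on the first and by `t` on the last block. -/
def blockPerm (s : Perm (Fin a)) (t : Perm (Fin b)) : Perm (Fin (a + b)) :=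
  finSumFinEquiv.permCongr (Perm.sumCongr s t)

@[simp]
theorem blockPerm_castAdd (s : Perm (Fin a)) (t : Perm (Fin b)) (i : Fin a) :
    blockPerm s t (Fin.castAdd b i) = Fin.castAdd b (s i) := by
  simp [blockPerm, Equiv.permCongr_apply]

@[simp]
theorem blockPerm_natAdd (s : Perm (Fin a)) (t : Perm (Fin b)) (i : Fin b) :
    blockPerm s t (Fin.natAdd a i) = Fin.natAdd a (t i) := by
  simp [blockPerm, Equiv.permCongr_apply]

theorem permSign_blockPerm (s : Perm (Fin a)) (t : Perm (Fin b)) :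
    permSign R (blockPerm s t) = permSign R s * permSign R t := by
  simp [permSign_apply, blockPerm, Perm.sign_permCongr, Perm.sign_sumCongr]

theorem blockPerm_injective :
    Function.Injective fun q : Perm (Fin a) × Perm (Fin b) => blockPerm q.1 q.2 :=
  finSumFinEquiv.permCongr.injective.comp Perm.sumCongrHom_injective

theorem exists_eq_blockPerm {ς : Perm (Fin (a + b))}
    (h : ∀ i : Fin a, (ς (Fin.castAdd b i) : ℕ) < a) : ∃ s t, ς = blockPerm s t := by
  have hmaps : MapsTo (finSumFinEquiv.symm.permCongr ς) (range Sum.inl) (range Sum.inl) := by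
    rintro _ ⟨i, rfl⟩
    refine ⟨⟨ς (Fin.castAdd b i), h i⟩, ?_⟩
    rw [Equiv.permCongr_apply, Equiv.eq_symm_apply]
    simp
  obtain ⟨⟨s, t⟩, hst⟩ := Perm.mem_sumCongrHom_range_of_perm_mapsTo_inl hmaps
  exact ⟨s, t, ((Equiv.symm_apply_eq _).mp hst.symm)⟩

theorem sum_perm_eq_sum_blockPerm {M : Type*} [AddCommMonoid M] {F : Perm (Fin (a + b)) → M}
    (h : ∀ ς, F ς ≠ 0 → ∀ i : Fin a, (ς (Fin.castAdd b i) : ℕ) < a) :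
    ∑ ς, F ς = ∑ s : Perm (Fin a), ∑ t : Perm (Fin b), F (blockPerm s t) := by
  rw [← Fintype.sum_prod_type']
  refine (Fintype.sum_of_injective _ blockPerm_injective _ _ (fun ς hς => ?_) fun _ => rfl).symm
  by_contra hne
  obtain ⟨s, t, rfl⟩ := exists_eq_blockPerm (h ς hne)
  exact hς ⟨(s, t), rfl⟩

theorem sum_gridBox_add {M : Type*} [AddCommMonoid M] (F : (Fin (a + b) → ℕ) → M) :
    ∑ m ∈ gridBox L (a + b), F m =
      ∑ m₁ ∈ gridBox L a, ∑ m₂ ∈ gridBox L b, F (Fin.append m₁ m₂) := by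
  rw [← Finset.sum_product']
  refine (Finset.sum_equiv (Fin.appendEquiv a b) (fun q => ?_) fun _ _ => rfl).symm
  simp [mem_gridBox, Fin.forall_fin_add]

theorem kuhnPath_append_comp_castAdd (m₁ : Fin a → ℕ) (m₂ : Fin b → ℕ) (s : Perm (Fin a))
    (t : Perm (Fin b)) (j : ℕ) :
    kuhnPath (Fin.append m₁ m₂) (blockPerm s t) j ∘ Fin.castAdd b = kuhnPath m₁ s j := by
  funext c
  simp [kuhnPath]

theorem kuhnPath_append_add (m₁ : Fin a → ℕ) (m₂ : Fin b → ℕ) (s : Perm (Fin a))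
    (t : Perm (Fin b)) (j : ℕ) :
    kuhnPath (Fin.append m₁ m₂) (blockPerm s t) (a + j) =
      Fin.append (m₁ + 1) (kuhnPath m₂ t j) := by
  funext c
  refine Fin.addCases (fun i => ?_) (fun i => ?_) c
  · simp [kuhnPath, (s i).2.trans_le (Nat.le_add_right a j)]
  · simp [kuhnPath]

theorem kuhnPath_succ_apply_of_ne {m : Fin N → ℕ} {ς : Perm (Fin N)} {j : ℕ} {c : Fin N}
    (h : (ς c : ℕ) ≠ j) : kuhnPath m ς (j + 1) c = kuhnPath m ς j c := by
  grind [kuhnPath]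

theorem IsNormalized.exists_perm_eq_of_ne_zero {n o : ℕ} {u : (ℕ → X) → R} (hu : IsNormalized n u)
    {f : (Fin a → ℕ) → X} {ι : Fin a → Fin N} {m : Fin N → ℕ} {ς : Perm (Fin N)}
    (h : u (fun j => f (kuhnPath m ς (o + j) ∘ ι)) ≠ 0) {i : ℕ} (hi : i < n) :
    ∃ c, (ς (ι c) : ℕ) = o + i := by
  by_contra! hc
  refine h (hu _ ⟨i, hi, congrArg f (funext fun c => ?_)⟩)
  exact (kuhnPath_succ_apply_of_ne (hc c)).symm

/-- Along a block of `a < n` coordinates a Kuhn path is degenerate in one of any `n` steps. -/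
theorem IsNormalized.apply_kuhnPath_comp_eq_zero {n : ℕ} {u : (ℕ → X) → R}
    (hu : IsNormalized n u) (han : a < n) (f : (Fin a → ℕ) → X) (ι : Fin a → Fin N)
    (m : Fin N → ℕ) (ς : Perm (Fin N)) (o : ℕ) :
    u (fun j => f (kuhnPath m ς (o + j) ∘ ι)) = 0 := by
  by_contra h
  choose c hc using fun i : Fin n => hu.exists_perm_eq_of_ne_zero h i.2
  have hinj : Function.Injective c := fun i j hij => Fin.ext (by
    have := hc i
    rw [hij, hc j] at this
    omega)
  exact absurd (Fintype.card_le_of_injective c hinj) (by simpa using han)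

theorem IsNormalized.perm_castAdd_lt_of_ne_zero {u : (ℕ → X) → R} (hu : IsNormalized a u)
    {f : (Fin a → ℕ) → X} {m : Fin (a + b) → ℕ} {ς : Perm (Fin (a + b))}
    (h : u (fun j => f (kuhnPath m ς j ∘ Fin.castAdd b)) ≠ 0) (c : Fin a) :
    (ς (Fin.castAdd b c) : ℕ) < a := by
  have hattained (i : Fin a) : ∃ c, (ς (Fin.castAdd b c) : ℕ) = i := by
    simpa using hu.exists_perm_eq_of_ne_zero (o := 0) (by simpa using h) i.2
  choose c' hc' using hattained
  have hinj : Function.Injective c' := fun i j hij => Fin.ext (by rw [← hc' i, hij, hc' j])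
  obtain ⟨i, rfl⟩ := Finite.injective_iff_surjective.mp hinj c
  simp [hc']

theorem gridIntegral_cup_fst_block {u : (ℕ → X) → R} (hu : IsNormalized a u)
    (w : (ℕ → Y) → R) (f : (Fin a → ℕ) → X) (g : (Fin (a + b) → ℕ) → Y) :
    gridIntegral L (cup a (pull Prod.fst u) (pull Prod.snd w))
        (fun m => (f (m ∘ Fin.castAdd b), g m)) =
      ∑ s : Perm (Fin a), permSign R s * ∑ m ∈ gridBox L a, u (f ∘ kuhnPath m s) *
        gridIntegral L w fun m' => g (Fin.append (m + 1) m') := by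
  rw [gridIntegral, sum_perm_eq_sum_blockPerm]
  · refine Finset.sum_congr rfl fun s _ => ?_
    simp only [gridIntegral, sum_gridBox_add, permSign_blockPerm, Finset.mul_sum]
    rw [Finset.sum_comm]
    refine Finset.sum_congr rfl fun m _ => Finset.sum_congr rfl fun t _ =>
      Finset.sum_congr rfl fun m' _ => ?_
    have front : Prod.fst ∘ (fun m => (f (m ∘ Fin.castAdd b), g m)) ∘
        kuhnPath (Fin.append m m') (blockPerm s t) = f ∘ kuhnPath m s :=
      funext fun j => congrArg f (kuhnPath_append_comp_castAdd m m' s t j)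
    have back : Prod.snd ∘ ((fun m => (f (m ∘ Fin.castAdd b), g m)) ∘
        kuhnPath (Fin.append m m') (blockPerm s t)) ∘ (a + ·) =
          (fun m' => g (Fin.append (m + 1) m')) ∘ kuhnPath m' t :=
      funext fun j => congrArg g (kuhnPath_append_add m m' s t j)
    rw [cup, pull, pull, front, back]
    ring
  · intro ς hς
    obtain ⟨m, -, hm⟩ := Finset.exists_ne_zero_of_sum_ne_zero (right_ne_zero_of_mul hς)
    exact hu.perm_castAdd_lt_of_ne_zero (left_ne_zero_of_mul hm)

/-- The product of two grids. -/
def prodGrid (f : (Fin a → ℕ) → X) (g : (Fin b → ℕ) → Y) : (Fin (a + b) → ℕ) → X × Y :=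
  fun m => (f (m ∘ Fin.castAdd b), g (m ∘ Fin.natAdd a))

theorem gridIntegral_cup_fst_snd {u : (ℕ → X) → R} (hu : IsNormalized a u)
    (v : (ℕ → Y) → R) (f : (Fin a → ℕ) → X) (g : (Fin b → ℕ) → Y) :
    gridIntegral L (cup a (pull Prod.fst u) (pull Prod.snd v)) (prodGrid f g) =
      gridIntegral L u f * gridIntegral L v g := by
  have hg (m : Fin a → ℕ) (m' : Fin b → ℕ) : Fin.append (m + 1) m' ∘ Fin.natAdd a = m' := by
    funext c
    simp
  refine (gridIntegral_cup_fst_block hu v f fun m => g (m ∘ Fin.natAdd a)).trans ?_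
  simp only [hg]
  simp only [gridIntegral, ← Finset.sum_mul, ← mul_assoc]

theorem IsNormalized.cup {u v : (ℕ → X) → R} (hu : IsNormalized a u) (hv : IsNormalized b v) :
    IsNormalized (a + b) (cup a u v) := by
  rintro x ⟨i, hi, hx⟩
  rcases lt_or_ge i a with hia | hai
  · rw [InvTC.cup, hu x ⟨i, hia, hx⟩, zero_mul]
  · obtain ⟨j, rfl⟩ := Nat.exists_eq_add_of_le hai
    rw [InvTC.cup, hv _ ⟨j, by omega, hx⟩, mul_zero]

theorem gridIntegral_eq_zero {u : (ℕ → X) → R} {f : (Fin N → ℕ) → X}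
    (h : ∀ ς, ∀ m ∈ gridBox L N, u (f ∘ kuhnPath m ς) = 0) : gridIntegral L u f = 0 :=
  Finset.sum_eq_zero fun ς _ => by rw [Finset.sum_eq_zero (h ς), mul_zero]

theorem gridIntegral_sub (u v : (ℕ → X) → R) (f : (Fin N → ℕ) → X) :
    gridIntegral L (u - v) f = gridIntegral L u f - gridIntegral L v f := by
  simp [gridIntegral, mul_sub]

theorem gridIntegral_add (u v : (ℕ → X) → R) (f : (Fin N → ℕ) → X) :
    gridIntegral L (u + v) f = gridIntegral L u f + gridIntegral L v f := by
  simp [gridIntegral, mul_add, Finset.sum_add_distrib]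

theorem gridIntegral_cup_fst_fst {u v : (ℕ → X) → R} (hu : IsNormalized a u)
    (hv : IsNormalized b v) (hb : 0 < b) (f : (Fin a → ℕ) → X) (g : (Fin b → ℕ) → Y) :
    gridIntegral L (cup a (pull Prod.fst u) (pull Prod.fst v)) (prodGrid f g) = 0 :=
  gridIntegral_eq_zero fun ς m _ => by
    have := (hu.cup hv).apply_kuhnPath_comp_eq_zero (Nat.lt_add_of_pos_right hb) f (Fin.castAdd b)
      m ς 0
    simp only [zero_add] at this
    exact this

theorem gridIntegral_cup_snd_snd {u v : (ℕ → Y) → R} (hu : IsNormalized a u)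
    (hv : IsNormalized b v) (ha : 0 < a) (f : (Fin a → ℕ) → X) (g : (Fin b → ℕ) → Y) :
    gridIntegral L (cup a (pull Prod.snd u) (pull Prod.snd v)) (prodGrid f g) = 0 :=
  gridIntegral_eq_zero fun ς m _ => by
    have := (hu.cup hv).apply_kuhnPath_comp_eq_zero (Nat.lt_add_of_pos_left ha) g (Fin.natAdd a)
      m ς 0
    simp only [zero_add] at this
    exact this

theorem gridIntegral_cup_snd_fst_of_lt (hab : a < b) (u : (ℕ → Y) → R) {v : (ℕ → X) → R}
    (hv : IsNormalized b v) (f : (Fin a → ℕ) → X) (g : (Fin b → ℕ) → Y) :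
    gridIntegral L (cup a (pull Prod.snd u) (pull Prod.fst v)) (prodGrid f g) = 0 :=
  gridIntegral_eq_zero fun ς m _ => mul_eq_zero_of_right _
    (hv.apply_kuhnPath_comp_eq_zero hab f (Fin.castAdd b) m ς a)

theorem gridIntegral_comp_perm (u : (ℕ → X) → R) (e : Perm (Fin N)) (f : (Fin N → ℕ) → X) :
    gridIntegral L u (fun m => f (m ∘ e)) = permSign R e⁻¹ * gridIntegral L u f := by
  rw [gridIntegral, gridIntegral, ← Equiv.sum_comp (Equiv.mulRight e⁻¹), Finset.mul_sum]
  refine Finset.sum_congr rfl fun ς _ => ?_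
  rw [Equiv.coe_mulRight, map_mul, mul_comm (permSign R ς), mul_assoc]
  congr 2
  refine Finset.sum_equiv (Equiv.arrowCongr e.symm (Equiv.refl ℕ)) (fun m => ?_) fun m _ => ?_
  · rw [mem_gridBox, mem_gridBox]
    exact (e.forall_congr_right (q := fun c => m c < L)).symm
  · congr 1
    funext j
    exact congrArg f (funext fun c => by simp [kuhnPath])

/-- The permutation of `Fin (k + k)` which exchanges the two blocks. -/
def blockSwap (k : ℕ) : Perm (Fin (k + k)) :=
  finSumFinEquiv.permCongr (Equiv.sumComm (Fin k) (Fin k))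

theorem blockSwap_comp_castAdd (k : ℕ) : blockSwap k ∘ Fin.castAdd k = Fin.natAdd k := by
  funext i
  simp [blockSwap, Equiv.permCongr_apply]

theorem blockSwap_comp_natAdd (k : ℕ) : blockSwap k ∘ Fin.natAdd k = Fin.castAdd k := by
  funext i
  rw [Function.comp_apply, blockSwap, Equiv.permCongr_apply, finSumFinEquiv_symm_apply_natAdd]
  rfl

theorem sign_blockSwap {k : ℕ} (hk : Even k) : Perm.sign (blockSwap k) = 1 := by
  have hswap : Perm.sign (Equiv.sumComm (Fin k) (Fin k) : Perm (Fin k ⊕ Fin k)) =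
      Perm.sign (Equiv.prodCongrRight fun _ : Fin k => Equiv.swap false true) := by
    refine Perm.sign_eq_sign_of_equiv _ _
      ((Equiv.boolProdEquivSum (Fin k)).symm.trans (Equiv.prodComm _ _)) ?_
    rintro (x | x) <;> simp [Equiv.boolProdEquivSum, Equiv.prodCongrRight]
  rw [blockSwap, Perm.sign_permCongr, hswap, Perm.sign_prodCongrRight]
  simp [hk.neg_one_pow]

theorem gridIntegral_cup_snd_fst_of_even {k : ℕ} (hk : Even k) {u : (ℕ → Y) → R}
    (hu : IsNormalized k u) (v : (ℕ → X) → R) (f : (Fin k → ℕ) → X) (g : (Fin k → ℕ) → Y) :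
    gridIntegral L (cup k (pull Prod.snd u) (pull Prod.fst v)) (prodGrid f g) =
      gridIntegral L u g * gridIntegral L v f := by
  have hswap : prodGrid f g = fun m => (prodGrid g f (m ∘ blockSwap k)).swap := by
    funext m
    simp only [prodGrid, Function.comp_assoc, blockSwap_comp_castAdd, blockSwap_comp_natAdd]
    rfl
  have hsign : permSign R (blockSwap k)⁻¹ = 1 := by
    simp [permSign_apply, Perm.sign_inv, sign_blockSwap hk]
  rw [hswap, gridIntegral_comp_perm _ _ fun m => (prodGrid g f m).swap, hsign, one_mul]
  exact gridIntegral_cup_fst_snd hu v g f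

/-- The zero divisor `u ⊗ 1 - 1 ⊗ u` on `X × X`. -/
def zeroDivisor (u : (ℕ → X) → R) : (ℕ → X × X) → R := pull Prod.fst u - pull Prod.snd u

theorem gridIntegral_cup_zeroDivisor {u v : (ℕ → X) → R} (hu : IsNormalized a u)
    (hv : IsNormalized b v) (ha : 0 < a) (hb : 0 < b) (f : (Fin a → ℕ) → X)
    (g : (Fin b → ℕ) → X) :
    gridIntegral L (cup a (zeroDivisor u) (zeroDivisor v)) (prodGrid f g) =
      -(gridIntegral L u f * gridIntegral L v g) -
        gridIntegral L (cup a (pull Prod.snd u) (pull Prod.fst v)) (prodGrid f g) := by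
  have hexpand : cup a (zeroDivisor u) (zeroDivisor v) =
      cup a (pull Prod.fst u) (pull Prod.fst v) + cup a (pull Prod.snd u) (pull Prod.snd v) -
        cup a (pull Prod.fst u) (pull Prod.snd v) - cup a (pull Prod.snd u) (pull Prod.fst v) := by
    funext x
    simp only [cup, zeroDivisor, Pi.add_apply, Pi.sub_apply]
    ring
  rw [hexpand, gridIntegral_sub, gridIntegral_sub, gridIntegral_add,
    gridIntegral_cup_fst_fst hu hv hb, gridIntegral_cup_snd_snd hu hv ha,
    gridIntegral_cup_fst_snd hu]
  ring

theorem gridIntegral_cup_zeroDivisor_of_lt {u v : (ℕ → X) → R} (hu : IsNormalized a u)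
    (hv : IsNormalized b v) (ha : 0 < a) (hab : a < b) (f : (Fin a → ℕ) → X)
    (g : (Fin b → ℕ) → X) :
    gridIntegral L (cup a (zeroDivisor u) (zeroDivisor v)) (prodGrid f g) =
      -(gridIntegral L u f * gridIntegral L v g) := by
  rw [gridIntegral_cup_zeroDivisor hu hv ha (ha.trans hab),
    gridIntegral_cup_snd_fst_of_lt hab u hv, sub_zero]

theorem gridIntegral_cup_zeroDivisor_self {k : ℕ} {u : (ℕ → X) → R} (hu : IsNormalized k u)
    (hk : 0 < k) (hk' : Even k) (f : (Fin k → ℕ) → X) :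
    gridIntegral L (cup k (zeroDivisor u) (zeroDivisor u)) (prodGrid f f) =
      -(2 * gridIntegral L u f ^ 2) := by
  rw [gridIntegral_cup_zeroDivisor hu hu hk hk, gridIntegral_cup_snd_fst_of_even hk' hu]
  ring

end Blocks

section Faces

variable {R G X : Type*} {M N L : ℕ}

/-- A sequence of grid points of `[0, L]^M` which pairwise differ by at most `1` in each
coordinate. -/
def IsGridSeq (L : ℕ) (x : ℕ → Fin M → ℕ) : Prop :=
  (∀ j c, x j c ≤ L) ∧ ∀ i j c, x i c ≤ x j c + 1

theorem isGridSeq_kuhnPath {m : Fin M → ℕ} (hm : m ∈ gridBox L M) (ς : Perm (Fin M)) :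
    IsGridSeq L (kuhnPath m ς) := by
  rw [mem_gridBox] at hm
  grind [IsGridSeq, kuhnPath]

/-- The part of a Kuhn path preceding the step in direction `c` may lie on the upper face. -/
theorem isGridSeq_kuhnPath_min {m : Fin M → ℕ} {c : Fin M} (hm : ∀ d ≠ c, m d < L) (hc : m c ≤ L)
    (ς : Perm (Fin M)) : IsGridSeq L fun j => kuhnPath m ς (min j (ς c)) := by
  refine ⟨fun j d => ?_, fun i j d => ?_⟩
  · rcases eq_or_ne d c with rfl | hd
    · simpa [kuhnPath] using hc
    · have := hm d hd
      grind [kuhnPath]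
  · grind [kuhnPath]

/-- `φ` takes equal values on simplices of the grid `f` which differ by an element of `G`. -/
def IsGridInvariant (act : G → X → X) (L : ℕ) (f : (Fin M → ℕ) → X) (φ : (ℕ → X) → R) : Prop :=
  ∀ g x y, IsGridSeq L x → IsGridSeq L y → (∀ j, f (y j) = act g (f (x j))) →
    φ (f ∘ y) = φ (f ∘ x)

variable {act : G → X → X} {f : (Fin (N + 1) → ℕ) → X} {φ : (ℕ → X) → R}

theorem IsGridInvariant.apply_kuhnPath_eq (hf : IsGridInvariant act L f φ)
    (hφ : DependsOn φ (Iic N)) {ς : Perm (Fin (N + 1))} {c : Fin (N + 1)} (hc : ς c = Fin.last N)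
    {m m' : Fin (N + 1) → ℕ} (hm : ∀ d ≠ c, m d < L) (hmc : m c ≤ L) (hm' : ∀ d ≠ c, m' d < L)
    (hmc' : m' c ≤ L) (g : G)
    (hg : ∀ j ≤ N, f (kuhnPath m' ς j) = act g (f (kuhnPath m ς j))) :
    φ (f ∘ kuhnPath m' ς) = φ (f ∘ kuhnPath m ς) := by
  have htrunc (m : Fin (N + 1) → ℕ) :
      φ (f ∘ kuhnPath m ς) = φ (f ∘ fun j => kuhnPath m ς (min j (ς c))) :=
    hφ fun j hj => by simp [hc, min_eq_left (mem_Iic.mp hj)]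
  rw [htrunc m, htrunc m']
  exact hf g _ _ (isGridSeq_kuhnPath_min hm hmc ς) (isGridSeq_kuhnPath_min hm' hmc' ς) fun j =>
    hg _ (by simp [hc])

theorem kuhnPath_apply_of_eq_last {ς : Perm (Fin (N + 1))} {c : Fin (N + 1)}
    (hc : ς c = Fin.last N) (m : Fin (N + 1) → ℕ) {j : ℕ} (hj : j ≤ N) :
    kuhnPath m ς j c = m c := by
  simp [kuhnPath, hc, hj]

theorem kuhnPath_add (m m' : Fin N → ℕ) (ς : Perm (Fin N)) (j : ℕ) :
    kuhnPath (m + m') ς j = kuhnPath m ς j + m' := by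
  funext c
  simp only [kuhnPath, Pi.add_apply]
  omega

theorem IsGridInvariant.apply_matched_face (hf : IsGridInvariant act L f φ)
    (hφ : DependsOn φ (Iic N)) {ς : Perm (Fin (N + 1))} {c : Fin (N + 1)} (hc : ς c = Fin.last N)
    {g : G} (hg : ∀ m, m c = 0 → f (m + Pi.single c L) = act g (f m)) {m : Fin (N + 1) → ℕ}
    (hm : m ∈ gridFace L c) :
    φ (f ∘ kuhnPath (m + Pi.single c L) ς) = φ (f ∘ kuhnPath m ς) := by
  rw [mem_gridFace] at hm
  refine hf.apply_kuhnPath_eq hφ hc (fun d _ => hm.1 d) (hm.1 c).le (fun d hd => ?_) ?_ g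
    fun j hj => ?_
  · simpa [hd] using hm.1 d
  · simp [hm.2]
  · rw [kuhnPath_add, hg]
    rw [kuhnPath_apply_of_eq_last hc m hj, hm.2]

variable [CommRing R]

theorem sum_range_mul_of_periodic {q l : ℕ} {h : ℕ → R}
    (hper : ∀ k, k + l < q * l → h (k + l) = h k) :
    ∑ k ∈ Finset.range (q * l), h k = q * ∑ k ∈ Finset.range l, h k := by
  have hrow : ∀ i < q, ∀ k < l, h (i * l + k) = h k := by
    intro i
    induction i with
    | zero => simp
    | succ i ih =>
      intro hi k hk
      have hbound : (i * l + k) + l < q * l := by nlinarith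
      rw [show (i + 1) * l + k = (i * l + k) + l by ring, hper _ hbound, ih (by omega) k hk]
  have hsum : ∀ i ≤ q, ∑ k ∈ Finset.range (i * l), h k = i * ∑ k ∈ Finset.range l, h k := by
    intro i
    induction i with
    | zero => simp
    | succ i ih =>
      intro hi
      rw [Nat.succ_mul, Finset.sum_range_add, ih (by omega),
        Finset.sum_congr rfl fun k hk => hrow i hi k (Finset.mem_range.mp hk)]
      push_cast
      ring
  exact hsum q le_rfl

theorem sum_gridFace_eq_zero_of_periodic {q l : ℕ} (hL : 0 < q * l) (hq : (q : R) = 0)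
    {c d : Fin N} (hdc : d ≠ c) {F : (Fin N → ℕ) → R}
    (hper : ∀ m ∈ gridFace (q * l) c, m d + l < q * l → F (m + Pi.single d l) = F m) :
    ∑ m ∈ gridFace (q * l) c, F m = 0 := by
  rw [gridFace, Finset.sum_filter, sum_gridBox_eq_sum_gridFace hL d]
  refine Finset.sum_eq_zero fun m hm => ?_
  rw [sum_range_mul_of_periodic fun k hk => ?_, hq, zero_mul]
  rw [mem_gridFace] at hm
  have hshift (k : ℕ) : (m + Pi.single d k : Fin N → ℕ) c = m c := by simp [hdc.symm]
  simp only [hshift]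
  split_ifs with hmc
  · rw [Pi.single_add, ← add_assoc]
    refine hper _ (mem_gridFace.mpr ⟨fun e => ?_, by rw [hshift, hmc]⟩) (by simpa [hm.2] using hk)
    rcases eq_or_ne e d with rfl | he
    · simp only [Pi.add_apply, Pi.single_eq_same, hm.2]
      omega
    · simpa [he] using hm.1 e
  · rfl

theorem IsNormalized.apply_degenerate_face (hφ : IsNormalized N φ) {ς : Perm (Fin (N + 1))}
    {c d : Fin (N + 1)} (hc : ς c = Fin.last N) (hdc : d ≠ c) {m : Fin (N + 1) → ℕ}
    (hf : ∀ m', m' c = m c → f (m' + Pi.single d 1) = f m') : φ (f ∘ kuhnPath m ς) = 0 := by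
  have hd : (ς d : ℕ) < N := by
    have : ς d ≠ Fin.last N := fun h => hdc (ς.injective (h.trans hc.symm))
    exact Fin.val_lt_last this
  refine hφ _ ⟨ς d, hd, ?_⟩
  have hstep : kuhnPath m ς (ς d + 1) = kuhnPath m ς (ς d) + Pi.single d 1 := by
    funext e
    rcases eq_or_ne e d with rfl | he
    · simp [kuhnPath]
    · have : (ς e : ℕ) ≠ ς d := fun h => he (ς.injective (Fin.ext h))
      simp [kuhnPath_succ_apply_of_ne this, he]
  rw [Function.comp_apply, Function.comp_apply, hstep, hf]
  exact kuhnPath_apply_of_eq_last hc m hd.le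

theorem IsGridInvariant.sum_periodic_face {q l : ℕ} (hL : 0 < q * l) (hq : (q : R) = 0)
    (hf : IsGridInvariant act (q * l) f φ) (hφ : DependsOn φ (Iic N)) {ς : Perm (Fin (N + 1))}
    {c d : Fin (N + 1)} (hc : ς c = Fin.last N) (hdc : d ≠ c) {E : ℕ} (hE : E ≤ q * l) {g : G}
    (hg : ∀ m, m c = E → f (m + Pi.single d l) = act g (f m)) :
    ∑ m ∈ gridFace (q * l) c, φ (f ∘ kuhnPath (m + Pi.single c E) ς) = 0 := by
  refine sum_gridFace_eq_zero_of_periodic hL hq hdc fun m hm hmd => ?_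
  rw [mem_gridFace] at hm
  refine hf.apply_kuhnPath_eq hφ hc (fun e he => ?_) ?_ (fun e he => ?_) ?_ g fun j hj => ?_
  · simpa [he] using hm.1 e
  · simpa [hm.2] using hE
  · rcases eq_or_ne e d with rfl | hed
    · simpa [he] using hmd
    · simpa [he, hed] using hm.1 e
  · simpa [hm.2, hdc.symm] using hE
  · rw [add_right_comm, kuhnPath_add, hg]
    rw [kuhnPath_apply_of_eq_last hc _ hj]
    simp [hm.2]

theorem gridFace_last_eq_image (hL : 0 < L) :
    gridFace L (Fin.last N) = (gridBox L N).image fun m => Fin.snoc (α := fun _ => ℕ) m 0 := by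
  ext m
  simp only [mem_gridFace, Finset.mem_image, mem_gridBox]
  constructor
  · rintro ⟨hm, h0⟩
    exact ⟨Fin.init m, fun c => hm c.castSucc, by rw [← h0, Fin.snoc_init_self]⟩
  · rintro ⟨m', hm', rfl⟩
    refine ⟨fun d => Fin.lastCases (by simpa using hL) (fun i => ?_) d, by simp⟩
    simpa using hm' i

theorem gridIntegral_snoc_sub {f : (Fin (N + 1) → ℕ) → X} (hL : 0 < L) (hφ : DependsOn φ (Iic N)) :
    gridIntegral L φ (fun m => f (Fin.snoc (α := fun _ => ℕ) m L)) -
        gridIntegral L φ (fun m => f (Fin.snoc (α := fun _ => ℕ) m 0)) =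
      ∑ s : Perm (Fin N), permSign R s * ∑ m ∈ gridFace L (Fin.last N),
        (φ (f ∘ kuhnPath (m + Pi.single (Fin.last N) L) (blockPerm s 1)) -
          φ (f ∘ kuhnPath m (blockPerm s (1 : Perm (Fin 1))))) := by
  have hpath (s : Perm (Fin N)) (m : Fin N → ℕ) (E : ℕ) {j : ℕ} (hj : j ≤ N) :
      kuhnPath (Fin.snoc (α := fun _ => ℕ) m E) (blockPerm s (1 : Perm (Fin 1))) j =
        Fin.snoc (α := fun _ => ℕ) (kuhnPath m s j) E := by
    funext c
    refine Fin.lastCases ?_ (fun i => ?_) c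
    · have := blockPerm_natAdd s (1 : Perm (Fin 1)) 0
      have h0 : Fin.natAdd N (0 : Fin 1) = Fin.last N := rfl
      rw [h0] at this
      simp [kuhnPath, this, hj]
    · have := blockPerm_castAdd s (1 : Perm (Fin 1)) i
      have h0 (i : Fin N) : Fin.castAdd 1 i = i.castSucc := rfl
      rw [h0, h0] at this
      simp [kuhnPath, this]
  have hshift (m : Fin N → ℕ) : Fin.snoc (α := fun _ => ℕ) m 0 + Pi.single (Fin.last N) L =
      Fin.snoc (α := fun _ => ℕ) m L := by
    funext c
    refine Fin.lastCases (by simp) (fun i => by simp) c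
  have hinj : Function.Injective fun m : Fin N → ℕ => Fin.snoc (α := fun _ => ℕ) m 0 :=
    fun m m' h => by simpa using congrArg Fin.init h
  rw [gridIntegral, gridIntegral, ← Finset.sum_sub_distrib, gridFace_last_eq_image hL]
  refine Finset.sum_congr rfl fun s _ => ?_
  rw [← mul_sub, ← Finset.sum_sub_distrib, Finset.sum_image hinj.injOn]
  refine congrArg _ (Finset.sum_congr rfl fun m _ => ?_)
  rw [hshift]
  congr 1 <;> exact hφ fun j hj => congrArg f (hpath s m _ hj).symm

theorem gridIntegral_snoc_eq (hL : 0 < L) (hφ : DependsOn φ (Iic N))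
    (hclosed : ∀ ς, ∀ m ∈ gridBox L (N + 1), coboundary N φ (f ∘ kuhnPath m ς) = 0)
    (hside : ∀ (ς : Perm (Fin (N + 1))) (c : Fin N), ς c.castSucc = Fin.last N →
      ∑ m ∈ gridFace L c.castSucc, (φ (f ∘ kuhnPath (m + Pi.single c.castSucc L) ς) -
        φ (f ∘ kuhnPath m ς)) = 0) :
    gridIntegral L φ (fun m => f (Fin.snoc (α := fun _ => ℕ) m L)) =
      gridIntegral L φ (fun m => f (Fin.snoc (α := fun _ => ℕ) m 0)) := by
  have hstokes := gridIntegral_coboundary hL hφ f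
  rw [gridIntegral_eq_zero hclosed, eq_comm,
    (isUnit_one.neg.pow N).mul_right_eq_zero] at hstokes
  rw [← sub_eq_zero, gridIntegral_snoc_sub hL hφ, ← hstokes, sum_perm_eq_sum_blockPerm]
  · refine Finset.sum_congr rfl fun s _ => ?_
    have hlast : (blockPerm s (1 : Perm (Fin 1))).symm (Fin.last N) = Fin.last N := by
      rw [Equiv.symm_apply_eq]
      exact (blockPerm_natAdd s (1 : Perm (Fin 1)) 0).symm
    rw [Fintype.sum_unique, permSign_blockPerm]
    simp only [Perm.default_eq, hlast, map_one, mul_one]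
  · intro ς hς i
    have hlast : ς.symm (Fin.last N) = Fin.last N := by
      by_contra h
      obtain ⟨c, hc⟩ := Fin.exists_castSucc_eq.mpr h
      rw [← hc] at hς
      exact hς (by rw [hside ς c (by rw [hc, Equiv.apply_symm_apply]), mul_zero])
    refine Fin.val_lt_last fun h => ?_
    have hi : ς (Fin.castAdd 1 i) = ς (Fin.last N) := by rw [h, ← (Equiv.symm_apply_eq ς).mp hlast]
    exact Fin.castSucc_ne_last i (ς.injective hi)

end Faces

section Cubes

variable {G X Z : Type*} {M N L q : ℕ}

/-- The restriction of a cube to the grid of mesh `1 / L`. -/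
noncomputable def sample (L : ℕ) (P : (Fin N → ℝ) → Z) : (Fin N → ℕ) → Z :=
  fun m => P fun c => (m c : ℝ) / L

/-- The cylinder `P × id` over a cube, with the last coordinate as time. -/
def cylinder (P : (Fin N → ℝ) → Z) : (Fin (N + 1) → ℝ) → Z × ℝ :=
  fun t => (P (Fin.init t), t (Fin.last N))

/-- The product of two cubes. -/
def prodCube {a b : ℕ} (P : (Fin a → ℝ) → X) (Q : (Fin b → ℝ) → Z) : (Fin (a + b) → ℝ) → X × Z :=
  fun t => (P (t ∘ Fin.castAdd b), Q (t ∘ Fin.natAdd a))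

/-- The action of `G` on `Z × ℝ` which fixes the time coordinate. -/
def cylinderAct (act : G → Z → Z) (g : G) (x : Z × ℝ) : Z × ℝ := (act g x.1, x.2)

/-- The componentwise action of `G × G` on `X × X`. -/
def prodAct (act : G → X → X) (g : G × G) (p : X × X) : X × X := (act g.1 p.1, act g.2 p.2)

/-- The face `t j = e` of the cube `P` contributes nothing to integrals with values in `R` of
invariant cocycles: in some other direction `P` is either constant there, or periodic with period
`1 / q` up to the action, where `q = 0` in `R`. -/
def IsNegligibleFace (R : Type*) [CommRing R] (act : G → Z → Z) (q : ℕ) (P : (Fin N → ℝ) → Z)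
    (j : Fin N) (e : ℝ) : Prop :=
  ∃ i ≠ j, (∀ t s, t j = e → P (Function.update t i s) = P t) ∨
    ((q : R) = 0 ∧ ∃ g, ∀ t, t j = e → P (Function.update t i (t i + 1 / q)) = act g (P t))

/-- The cube `P` is a cycle modulo the action: opposite faces either differ by a group element or
are negligible. -/
def IsOrbitCycle (R : Type*) [CommRing R] (act : G → Z → Z) (q : ℕ) (P : (Fin N → ℝ) → Z) : Prop :=
  ∀ j, (∃ g, ∀ t, t j = 0 → P (Function.update t j 1) = act g (P t)) ∨
    (IsNegligibleFace R act q P j 0 ∧ IsNegligibleFace R act q P j 1)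

theorem sample_add_single (P : (Fin N → ℝ) → Z) (m : Fin N → ℕ) (c : Fin N) (l : ℕ) :
    sample L P (m + Pi.single c l) =
      P (Function.update (fun d => (m d : ℝ) / L) c ((m c : ℝ) / L + l / L)) := by
  refine congrArg P (funext fun d => ?_)
  rcases eq_or_ne d c with rfl | hd
  · simp [add_div]
  · simp [hd]

theorem sample_cylinder_add_single (P : (Fin N → ℝ) → Z) (m : Fin (N + 1) → ℕ)
    (c : Fin N) (l : ℕ) :
    sample L (cylinder P) (m + Pi.single c.castSucc l) =
      (P (Function.update (fun d => (m d.castSucc : ℝ) / L) c ((m c.castSucc : ℝ) / L + l / L)),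
        (m (Fin.last N) : ℝ) / L) := by
  rw [sample_add_single]
  exact Prod.ext (congrArg P (Fin.init_update_castSucc ..))
    (by simp [cylinder, Function.update_of_ne (Fin.castSucc_ne_last c).symm])

theorem sample_cylinder_snoc (P : (Fin N → ℝ) → Z) (m : Fin N → ℕ) (k : ℕ) :
    sample L (cylinder P) (Fin.snoc (α := fun _ => ℕ) m k) = (sample L P m, (k : ℝ) / L) :=
  Prod.ext (congrArg P (funext fun c => by simp [Fin.init])) (by simp [sample, cylinder])

variable {R : Type*} [CommRing R] {act : G → Z → Z} {P : (Fin N → ℝ) → Z} {φ : (ℕ → Z × ℝ) → R}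

theorem IsNegligibleFace.sum_eq_zero {c : Fin N} {E : ℕ}
    (hP : IsNegligibleFace R act q P c ((E : ℝ) / L)) (hL : 0 < L) (hq : q ∣ L) (hE : E ≤ L)
    (hφ : DependsOn φ (Iic N)) (hφ' : IsNormalized N φ)
    (hinv : IsGridInvariant (cylinderAct act) L (sample L (cylinder P)) φ)
    {ς : Perm (Fin (N + 1))} (hς : ς c.castSucc = Fin.last N) :
    ∑ m ∈ gridFace L c.castSucc,
      φ (sample L (cylinder P) ∘ kuhnPath (m + Pi.single c.castSucc E) ς) = 0 := by
  obtain ⟨i, hic, hdeg | ⟨hqR, g, hper⟩⟩ := hP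
  · refine Finset.sum_eq_zero fun m hm => hφ'.apply_degenerate_face hς (d := i.castSucc)
      (by simpa using hic) fun m' hm' => ?_
    rw [sample_cylinder_add_single, hdeg]
    · rfl
    · simp [hm', (mem_gridFace.mp hm).2]
  · obtain ⟨l, rfl⟩ := hq
    have hq0 : (q : ℝ) ≠ 0 := Nat.cast_ne_zero.mpr (Nat.pos_of_mul_pos_right hL).ne'
    have hl0 : (l : ℝ) ≠ 0 := Nat.cast_ne_zero.mpr (Nat.pos_of_mul_pos_left hL).ne'
    refine hinv.sum_periodic_face hL hqR hφ hς (d := i.castSucc) (by simpa using hic) hE (g := g)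
      fun m hm => ?_
    have hstep : (l : ℝ) / ((q * l : ℕ) : ℝ) = 1 / q := by
      push_cast
      field_simp
    rw [sample_cylinder_add_single, hstep]
    exact Prod.ext (hper _ (by simp [hm])) rfl

/-- Stokes' theorem for the prism over an orbit cycle. -/
theorem IsOrbitCycle.gridIntegral_eq (hP : IsOrbitCycle R act q P) (hL : 0 < L) (hq : q ∣ L)
    (hφ : DependsOn φ (Iic N)) (hφ' : IsNormalized N φ)
    (hclosed : ∀ x, IsGridSeq L x → coboundary N φ (sample L (cylinder P) ∘ x) = 0)
    (hinv : IsGridInvariant (cylinderAct act) L (sample L (cylinder P)) φ) :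
    gridIntegral L φ (fun m => (sample L P m, 1)) =
      gridIntegral L φ fun m => (sample L P m, 0) := by
  have hL0 : (L : ℝ) ≠ 0 := Nat.cast_ne_zero.mpr hL.ne'
  have hprism := gridIntegral_snoc_eq (f := sample L (cylinder P)) hL hφ
    (fun ς m hm => hclosed _ (isGridSeq_kuhnPath hm ς)) fun ς c hς => ?_
  · simpa [sample_cylinder_snoc, div_self hL0] using hprism
  · rcases hP c with ⟨g, hg⟩ | ⟨h0, h1⟩
    · refine Finset.sum_eq_zero fun m hm => sub_eq_zero.mpr ?_
      refine hinv.apply_matched_face hφ hς (g := g) (fun m' hm' => ?_) hm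
      rw [sample_cylinder_add_single, hm', Nat.cast_zero, zero_div, zero_add, div_self hL0]
      exact Prod.ext (hg _ (by simp [hm'])) rfl
    · have htop := IsNegligibleFace.sum_eq_zero (E := L) (by rwa [div_self hL0]) hL hq le_rfl hφ hφ'
        hinv hς
      have hbot := IsNegligibleFace.sum_eq_zero (E := 0) (by simpa using h0) hL hq L.zero_le hφ hφ'
        hinv hς
      simp only [Pi.single_zero, add_zero] at hbot
      rw [Finset.sum_sub_distrib, htop, hbot, sub_zero]

end Cubes

section ProductCubes

variable {R G X : Type*} [CommRing R] [One G] {act : G → X → X} {a b q : ℕ}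
  {P : (Fin a → ℝ) → X} {Q : (Fin b → ℝ) → X}

theorem update_castAdd_comp_castAdd (t : Fin (a + b) → ℝ) (j : Fin a) (s : ℝ) :
    Function.update t (Fin.castAdd b j) s ∘ Fin.castAdd b =
      Function.update (t ∘ Fin.castAdd b) j s :=
  Function.update_comp_eq_of_injective _ (Fin.castAdd_injective a b) _ _

theorem update_natAdd_comp_natAdd (t : Fin (a + b) → ℝ) (j : Fin b) (s : ℝ) :
    Function.update t (Fin.natAdd a j) s ∘ Fin.natAdd a =
      Function.update (t ∘ Fin.natAdd a) j s :=
  Function.update_comp_eq_of_injective _ (Fin.natAdd_injective b a) _ _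

theorem castAdd_ne_natAdd (i : Fin a) (j : Fin b) : Fin.castAdd b i ≠ Fin.natAdd a j := by
  simp [Fin.ext_iff]
  omega

theorem prodCube_update_castAdd (t : Fin (a + b) → ℝ) (j : Fin a) (s : ℝ) :
    prodCube P Q (Function.update t (Fin.castAdd b j) s) =
      (P (Function.update (t ∘ Fin.castAdd b) j s), Q (t ∘ Fin.natAdd a)) := by
  rw [prodCube, update_castAdd_comp_castAdd,
    Function.update_comp_eq_of_forall_ne _ _ fun i => (castAdd_ne_natAdd j i).symm]

theorem prodCube_update_natAdd (t : Fin (a + b) → ℝ) (j : Fin b) (s : ℝ) :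
    prodCube P Q (Function.update t (Fin.natAdd a j) s) =
      (P (t ∘ Fin.castAdd b), Q (Function.update (t ∘ Fin.natAdd a) j s)) := by
  rw [prodCube, update_natAdd_comp_natAdd,
    Function.update_comp_eq_of_forall_ne _ _ fun i => castAdd_ne_natAdd i j]

theorem IsNegligibleFace.prodCube_castAdd (hone : ∀ x, act 1 x = x) {j : Fin a} {e : ℝ}
    (hP : IsNegligibleFace R act q P j e) :
    IsNegligibleFace R (prodAct act) q (prodCube P Q) (Fin.castAdd b j) e := by
  obtain ⟨i, hij, hP⟩ := hP
  refine ⟨Fin.castAdd b i, fun h => hij (Fin.castAdd_injective a b h), ?_⟩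
  rcases hP with hP | ⟨hq, g, hP⟩
  · refine Or.inl fun t s ht => ?_
    rw [prodCube_update_castAdd, hP _ _ ht]
    rfl
  · refine Or.inr ⟨hq, (g, 1), fun t ht => ?_⟩
    rw [prodCube_update_castAdd]
    exact Prod.ext (hP _ ht) (hone _).symm

theorem IsNegligibleFace.prodCube_natAdd (hone : ∀ x, act 1 x = x) {j : Fin b} {e : ℝ}
    (hQ : IsNegligibleFace R act q Q j e) :
    IsNegligibleFace R (prodAct act) q (prodCube P Q) (Fin.natAdd a j) e := by
  obtain ⟨i, hij, hQ⟩ := hQ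
  refine ⟨Fin.natAdd a i, fun h => hij (Fin.natAdd_injective b a h), ?_⟩
  rcases hQ with hQ | ⟨hq, g, hQ⟩
  · refine Or.inl fun t s ht => ?_
    rw [prodCube_update_natAdd, hQ _ _ ht]
    rfl
  · refine Or.inr ⟨hq, (1, g), fun t ht => ?_⟩
    rw [prodCube_update_natAdd]
    exact Prod.ext (hone _).symm (hQ _ ht)

theorem IsOrbitCycle.prodCube (hone : ∀ x, act 1 x = x) (hP : IsOrbitCycle R act q P)
    (hQ : IsOrbitCycle R act q Q) : IsOrbitCycle R (prodAct act) q (prodCube P Q) := by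
  refine fun j => Fin.addCases (fun j => ?_) (fun j => ?_) j
  · rcases hP j with ⟨g, hg⟩ | ⟨h0, h1⟩
    · refine Or.inl ⟨(g, 1), fun t ht => ?_⟩
      rw [prodCube_update_castAdd]
      exact Prod.ext (hg _ ht) (hone _).symm
    · exact Or.inr ⟨h0.prodCube_castAdd hone, h1.prodCube_castAdd hone⟩
  · rcases hQ j with ⟨g, hg⟩ | ⟨h0, h1⟩
    · refine Or.inl ⟨(1, g), fun t ht => ?_⟩
      rw [prodCube_update_natAdd]
      exact Prod.ext (hone _).symm (hg _ ht)
    · exact Or.inr ⟨h0.prodCube_natAdd hone, h1.prodCube_natAdd hone⟩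

end ProductCubes

section SmallSequences

variable {X : Type*} {M : ℕ}

/-- All entries of the sequence `x` are within `ε` of each other. -/
def IsSmall [Dist X] (ε : ℝ) (x : ℕ → X) : Prop := ∀ i j, dist (x i) (x j) ≤ ε

theorem eventually_isSmall_sample [PseudoMetricSpace X] {P : (Fin M → ℝ) → X} (hP : Continuous P)
    {ε : ℝ} (hε : 0 < ε) : ∀ᶠ L : ℕ in atTop, ∀ x, IsGridSeq L x → IsSmall ε (sample L P ∘ x) := by
  have hunif := (isCompact_Icc (a := (0 : Fin M → ℝ)) (b := 1)).uniformContinuousOn_of_continuous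
    hP.continuousOn
  obtain ⟨δ, hδ, hclose⟩ := Metric.uniformContinuousOn_iff.mp hunif ε hε
  have hmesh : ∀ᶠ L : ℕ in atTop, 1 / (L : ℝ) < δ :=
    tendsto_one_div_atTop_nhds_zero_nat.eventually (gt_mem_nhds hδ)
  filter_upwards [hmesh, Filter.eventually_gt_atTop 0] with L hLδ hL x hx i j
  have hL' : (0 : ℝ) < L := Nat.cast_pos.mpr hL
  have hmem (i : ℕ) : (fun c => (x i c : ℝ) / L) ∈ Icc (0 : Fin M → ℝ) 1 := by
    refine ⟨fun c => by simp only [Pi.zero_apply]; positivity, fun c => ?_⟩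
    rw [Pi.one_apply, div_le_one hL']
    exact_mod_cast hx.1 i c
  refine (hclose _ (hmem i) _ (hmem j) (lt_of_le_of_lt ?_ hLδ)).le
  refine (dist_pi_le_iff (by positivity)).mpr fun c => ?_
  have hij : (x i c : ℝ) ≤ x j c + 1 := mod_cast hx.2 i j c
  have hji : (x j c : ℝ) ≤ x i c + 1 := mod_cast hx.2 j i c
  rw [Real.dist_eq, ← sub_div, abs_div, abs_of_pos hL']
  gcongr
  rw [abs_le]
  constructor <;> linarith

end SmallSequences

section Cochains

variable {R X Y : Type*} {a b : ℕ}

theorem dependsOn_pull {s : Set ℕ} {u : (ℕ → Y) → R} (hu : DependsOn u s) (h : X → Y) :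
    DependsOn (pull h u) s :=
  fun _ _ hxy => hu fun i hi => congrArg h (hxy i hi)

variable [CommRing R]

theorem dependsOn_sub {s : Set ℕ} {u v : (ℕ → X) → R} (hu : DependsOn u s) (hv : DependsOn v s) :
    DependsOn (u - v) s :=
  fun _ _ hxy => congrArg₂ (· - ·) (hu hxy) (hv hxy)

theorem dependsOn_cup {u v : (ℕ → X) → R} (hu : DependsOn u (Iic a)) (hv : DependsOn v (Iic b)) :
    DependsOn (cup a u v) (Iic (a + b)) := by
  refine fun x y hxy => congrArg₂ (· * ·) (hu fun i hi => hxy i ?_) (hv fun i hi => hxy _ ?_)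
  · exact le_add_right (mem_Iic.mp hi)
  · exact Nat.add_le_add_left (mem_Iic.mp hi) a

theorem IsNormalized.pull {u : (ℕ → Y) → R} (hu : IsNormalized a u) (h : X → Y) :
    IsNormalized a (pull h u) :=
  fun _ ⟨i, hi, hx⟩ => hu _ ⟨i, hi, congrArg h hx⟩

theorem IsNormalized.sub {u v : (ℕ → X) → R} (hu : IsNormalized a u) (hv : IsNormalized a v) :
    IsNormalized a (u - v) := by
  intro x hx
  rw [Pi.sub_apply, hu x hx, hv x hx, sub_zero]

theorem coboundary_sub (u v : (ℕ → X) → R) (x : ℕ → X) :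
    coboundary a (u - v) x = coboundary a u x - coboundary a v x := by
  simp [coboundary, mul_sub]

end Cochains

section Deformation

variable {G X : Type*}

/-- A normalized cochain of degree `a` which is closed on `ε`-small simplices and which takes equal
values on `ε`-small simplices whose vertices have the same orbits. -/
structure IsInvariantCocycle {R : Type*} [CommRing R] [Dist X] (act : G → X → X) (ε : ℝ) (a : ℕ)
    (u : (ℕ → X) → R) : Prop where
  dependsOn : DependsOn u (Iic a)
  isNormalized : IsNormalized a u
  coboundary_eq_zero : ∀ x, IsSmall ε x → coboundary a u x = 0
  apply_eq : ∀ x y, IsSmall ε x → IsSmall ε y → (∀ j, ∃ g, act g (x j) = y j) → u x = u y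

/-- A motion planner over `O`, recast as a pair of equivariant homotopies defined on all of `X × X`:
they start at the two projections, and over `O` they end in a common orbit. -/
structure EndpointDeformation [TopologicalSpace X] (act : G → X → X) (O : Set (X × X)) where
  fst : (X × X) × ℝ → X
  snd : (X × X) × ℝ → X
  continuous_fst : Continuous fst
  continuous_snd : Continuous snd
  fst_act : ∀ g p τ, fst (prodAct act g p, τ) = act g.1 (fst (p, τ))
  snd_act : ∀ g p τ, snd (prodAct act g p, τ) = act g.2 (snd (p, τ))
  fst_zero : ∀ p, fst (p, 0) = p.1
  snd_zero : ∀ p, snd (p, 0) = p.2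
  same_orbit : ∀ p ∈ O, ∃ g, act g (fst (p, 1)) = snd (p, 1)

namespace EndpointDeformation

variable {R : Type*} [CommRing R] {act : G → X → X} {O : Set (X × X)} {ε : ℝ} {a b : ℕ}
  {u v : (ℕ → X) → R}

section Topological

variable [TopologicalSpace X] (D : EndpointDeformation act O)

/-- The zero divisor of `u`, deformed along `D`. -/
def zeroDivisor (u : (ℕ → X) → R) : (ℕ → (X × X) × ℝ) → R := pull D.fst u - pull D.snd u

theorem zeroDivisor_zero (u : (ℕ → X) → R) (x : ℕ → X × X) :
    D.zeroDivisor u (fun j => (x j, 0)) = InvTC.zeroDivisor u x := by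
  simp [zeroDivisor, InvTC.zeroDivisor, pull, Function.comp_def, D.fst_zero, D.snd_zero]

theorem dependsOn_zeroDivisor {s : Set ℕ} (hu : DependsOn u s) : DependsOn (D.zeroDivisor u) s :=
  dependsOn_sub (dependsOn_pull hu _) (dependsOn_pull hu _)

theorem isNormalized_zeroDivisor (hu : IsNormalized a u) : IsNormalized a (D.zeroDivisor u) :=
  (hu.pull _).sub (hu.pull _)

end Topological

variable [PseudoMetricSpace X] (D : EndpointDeformation act O)

/-- The deformed sequence stays `ε`-small along `D`. -/
def IsSmall (ε : ℝ) (x : ℕ → (X × X) × ℝ) : Prop :=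
  InvTC.IsSmall ε (D.fst ∘ x) ∧ InvTC.IsSmall ε (D.snd ∘ x)

variable {D}

theorem IsSmall.comp {x : ℕ → (X × X) × ℝ} (hx : D.IsSmall ε x) (ι : ℕ → ℕ) :
    D.IsSmall ε (x ∘ ι) :=
  ⟨fun i j => hx.1 (ι i) (ι j), fun i j => hx.2 (ι i) (ι j)⟩

theorem coboundary_zeroDivisor_eq_zero (hu : IsInvariantCocycle act ε a u)
    {x : ℕ → (X × X) × ℝ} (hx : D.IsSmall ε x) : coboundary a (D.zeroDivisor u) x = 0 := by
  rw [zeroDivisor, coboundary_sub]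
  exact (congrArg₂ (· - ·) (hu.coboundary_eq_zero _ hx.1) (hu.coboundary_eq_zero _ hx.2)).trans
    (sub_zero 0)

theorem zeroDivisor_act (hu : IsInvariantCocycle act ε a u) {g : G × G} {x y : ℕ → (X × X) × ℝ}
    (hx : D.IsSmall ε x) (hy : D.IsSmall ε y) (hxy : ∀ j, y j = cylinderAct (prodAct act) g (x j)) :
    D.zeroDivisor u y = D.zeroDivisor u x :=
  (congrArg₂ (· - ·)
    (hu.apply_eq _ _ hx.1 hy.1 fun j => ⟨g.1, by simp [hxy, cylinderAct, D.fst_act]⟩)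
    (hu.apply_eq _ _ hx.2 hy.2 fun j => ⟨g.2, by simp [hxy, cylinderAct, D.snd_act]⟩)).symm

theorem zeroDivisor_one_eq_zero (hu : IsInvariantCocycle act ε a u) {x : ℕ → X × X}
    (hx : D.IsSmall ε fun j => (x j, 1)) (hxO : ∀ j, x j ∈ O) :
    D.zeroDivisor u (fun j => (x j, 1)) = 0 :=
  sub_eq_zero.mpr (hu.apply_eq _ _ hx.1 hx.2 fun j => D.same_orbit _ (hxO j))

theorem eventually_isSmall {N : ℕ} {P : (Fin N → ℝ) → X × X} (hP : Continuous P) (hε : 0 < ε)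
    (D : EndpointDeformation act O) :
    ∀ᶠ L : ℕ in atTop, ∀ x, IsGridSeq L x → D.IsSmall ε (sample L (cylinder P) ∘ x) := by
  have hcyl : Continuous (cylinder P) := by
    unfold cylinder Fin.init
    fun_prop
  filter_upwards [eventually_isSmall_sample (D.continuous_fst.comp hcyl) hε,
    eventually_isSmall_sample (D.continuous_snd.comp hcyl) hε] with L h₁ h₂ x hx
  exact ⟨h₁ x hx, h₂ x hx⟩

end EndpointDeformation

theorem IsGridSeq.snoc_self {L N : ℕ} {x : ℕ → Fin N → ℕ} (hx : IsGridSeq L x) :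
    IsGridSeq L fun j => Fin.snoc (α := fun _ => ℕ) (x j) L := by
  refine ⟨fun j c => Fin.lastCases ?_ (fun c => ?_) c,
    fun i j c => Fin.lastCases ?_ (fun c => ?_) c⟩
  · simp
  · simpa using hx.1 j c
  · simp
  · simpa using hx.2 i j c

theorem eventually_sample_subset_or [PseudoMetricSpace X] [CompactSpace X] {N : ℕ} {O₁ O₂ : Set X}
    (hO₁ : IsOpen O₁) (hO₂ : IsOpen O₂) (hcover : O₁ ∪ O₂ = univ) {P : (Fin N → ℝ) → X}
    (hP : Continuous P) :
    ∀ᶠ L : ℕ in atTop, ∀ x, IsGridSeq L x →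
      (∀ j, sample L P (x j) ∈ O₁) ∨ ∀ j, sample L P (x j) ∈ O₂ := by
  obtain ⟨δ, hδ, hball⟩ := lebesgue_number_lemma_of_metric (s := univ) isCompact_univ
    (c := fun i : Bool => cond i O₁ O₂) (Bool.forall_bool.mpr ⟨hO₂, hO₁⟩)
    (by rw [← union_eq_iUnion, hcover])
  filter_upwards [eventually_isSmall_sample hP (half_pos hδ)] with L hL x hx
  obtain ⟨i, hi⟩ := hball (sample L P (x 0)) trivial
  have hmem (j : ℕ) : sample L P (x j) ∈ cond i O₁ O₂ :=
    hi (Metric.mem_ball.mpr ((hL x hx j 0).trans_lt (half_lt_self hδ)))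
  cases i
  · exact Or.inr hmem
  · exact Or.inl hmem

theorem EndpointDeformation.coboundary_cup_zeroDivisor_eq_zero {R : Type*} [CommRing R]
    [PseudoMetricSpace X] {act : G → X → X} {O₁ O₂ : Set (X × X)} {ε : ℝ} {a b : ℕ}
    {u v : (ℕ → X) → R} {D₁ : EndpointDeformation act O₁} {D₂ : EndpointDeformation act O₂}
    (hu : IsInvariantCocycle act ε a u) (hv : IsInvariantCocycle act ε b v)
    {x : ℕ → (X × X) × ℝ} (h₁ : D₁.IsSmall ε x) (h₂ : D₂.IsSmall ε x) :
    coboundary (a + b) (cup a (D₁.zeroDivisor u) (D₂.zeroDivisor v)) x = 0 := by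
  rw [coboundary_cup b (D₁.dependsOn_zeroDivisor hu.dependsOn),
    coboundary_zeroDivisor_eq_zero hu h₁, coboundary_zeroDivisor_eq_zero hv (h₂.comp _),
    zero_mul, mul_zero, add_zero]

theorem EndpointDeformation.cup_zeroDivisor_one_eq_zero {R : Type*} [CommRing R]
    [PseudoMetricSpace X] {act : G → X → X} {O₁ O₂ : Set (X × X)} {ε : ℝ} {a b : ℕ}
    {u v : (ℕ → X) → R} {D₁ : EndpointDeformation act O₁} {D₂ : EndpointDeformation act O₂}
    (hu : IsInvariantCocycle act ε a u) (hv : IsInvariantCocycle act ε b v)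
    {x : ℕ → X × X} (h₁ : D₁.IsSmall ε fun j => (x j, 1)) (h₂ : D₂.IsSmall ε fun j => (x j, 1))
    (hO : (∀ j, x j ∈ O₁) ∨ ∀ j, x j ∈ O₂) :
    cup a (D₁.zeroDivisor u) (D₂.zeroDivisor v) (fun j => (x j, 1)) = 0 := by
  rcases hO with hO | hO
  · exact mul_eq_zero_of_left (zeroDivisor_one_eq_zero hu h₁ hO) _
  · exact mul_eq_zero_of_right _ (zeroDivisor_one_eq_zero hv (h₂.comp _) fun j => hO (a + j))

/-- `X × X` is covered by two open sets, each with an `EndpointDeformation`. -/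
def HasDeformationCover [TopologicalSpace X] (act : G → X → X) : Prop :=
  ∃ O₁ O₂ : Set (X × X), IsOpen O₁ ∧ IsOpen O₂ ∧ O₁ ∪ O₂ = univ ∧
    Nonempty (EndpointDeformation act O₁) ∧ Nonempty (EndpointDeformation act O₂)

variable {R : Type*} [CommRing R] [One G] [PseudoMetricSpace X] [CompactSpace X]
  {act : G → X → X} {ε : ℝ} {a b q : ℕ} {u v : (ℕ → X) → R}
  {P : (Fin a → ℝ) → X} {Q : (Fin b → ℝ) → X}

/-- The deformed product of zero divisors is a cocycle on the prism over `P × Q`, and it vanishes at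
time one because one of its factors does. -/
theorem HasDeformationCover.eventually_gridIntegral_cup_zeroDivisor
    (hX : HasDeformationCover act) (hone : ∀ x, act 1 x = x) (hε : 0 < ε)
    (hu : IsInvariantCocycle act ε a u) (hv : IsInvariantCocycle act ε b v) (hP : Continuous P)
    (hQ : Continuous Q) (hP' : IsOrbitCycle R act q P) (hQ' : IsOrbitCycle R act q Q) :
    ∀ᶠ L : ℕ in atTop, q ∣ L →
      gridIntegral L (cup a (zeroDivisor u) (zeroDivisor v))
        (prodGrid (sample L P) (sample L Q)) = 0 := by
  obtain ⟨O₁, O₂, hO₁, hO₂, hcover, ⟨D₁⟩, ⟨D₂⟩⟩ := hX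
  have hPQ : Continuous (prodCube P Q) := by
    unfold prodCube
    exact (hP.comp (by fun_prop)).prodMk (hQ.comp (by fun_prop))
  filter_upwards [D₁.eventually_isSmall hPQ hε, D₂.eventually_isSmall hPQ hε,
    eventually_sample_subset_or hO₁ hO₂ hcover hPQ, Filter.eventually_gt_atTop 0]
    with L hD₁ hD₂ hO hL hqL
  have hprism := (hP'.prodCube hone hQ').gridIntegral_eq hL hqL
    (φ := cup a (D₁.zeroDivisor u) (D₂.zeroDivisor v))
    (dependsOn_cup (D₁.dependsOn_zeroDivisor hu.dependsOn) (D₂.dependsOn_zeroDivisor hv.dependsOn))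
    ((D₁.isNormalized_zeroDivisor hu.isNormalized).cup
      (D₂.isNormalized_zeroDivisor hv.isNormalized))
    (fun x hx => EndpointDeformation.coboundary_cup_zeroDivisor_eq_zero hu hv (hD₁ x hx) (hD₂ x hx))
    fun g x y hx hy hxy => congrArg₂ (· * ·)
      (EndpointDeformation.zeroDivisor_act hu (hD₁ x hx) (hD₁ y hy) hxy)
      (EndpointDeformation.zeroDivisor_act hv ((hD₂ x hx).comp _) ((hD₂ y hy).comp _)
        fun j => hxy (a + j))
  have htop : gridIntegral L (cup a (D₁.zeroDivisor u) (D₂.zeroDivisor v))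
      (fun m => (sample L (prodCube P Q) m, 1)) = 0 := by
    refine gridIntegral_eq_zero fun ς m hm => ?_
    have hL' : (L : ℝ) ≠ 0 := Nat.cast_ne_zero.mpr hL.ne'
    have hx := isGridSeq_kuhnPath hm ς
    have h₁ := hD₁ _ hx.snoc_self
    have h₂ := hD₂ _ hx.snoc_self
    simp only [Function.comp_def, sample_cylinder_snoc, div_self hL'] at h₁ h₂
    exact EndpointDeformation.cup_zeroDivisor_one_eq_zero hu hv h₁ h₂ (hO _ hx)
  refine Eq.trans ?_ (hprism.symm.trans htop)
  refine Finset.sum_congr rfl fun ς _ => congrArg _ (Finset.sum_congr rfl fun m _ => ?_)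
  exact congrArg₂ (· * ·) (D₁.zeroDivisor_zero u _).symm (D₂.zeroDivisor_zero v _).symm

theorem HasDeformationCover.eventually_gridIntegral_mul_eq_zero
    (hX : HasDeformationCover act) (hone : ∀ x, act 1 x = x) (hε : 0 < ε)
    (hu : IsInvariantCocycle act ε a u) (hv : IsInvariantCocycle act ε b v) (ha : 0 < a)
    (hab : a < b) (hP : Continuous P) (hQ : Continuous Q) (hP' : IsOrbitCycle R act q P)
    (hQ' : IsOrbitCycle R act q Q) :
    ∀ᶠ L : ℕ in atTop,
      q ∣ L → gridIntegral L u (sample L P) * gridIntegral L v (sample L Q) = 0 := by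
  filter_upwards [hX.eventually_gridIntegral_cup_zeroDivisor hone hε hu hv hP hQ hP' hQ']
    with L h hq
  rw [← neg_eq_zero, ← gridIntegral_cup_zeroDivisor_of_lt hu.isNormalized hv.isNormalized ha hab,
    h hq]

theorem HasDeformationCover.eventually_two_mul_gridIntegral_sq_eq_zero
    (hX : HasDeformationCover act) (hone : ∀ x, act 1 x = x) (hε : 0 < ε)
    (hu : IsInvariantCocycle act ε a u) (ha : 0 < a) (ha' : Even a) (hP : Continuous P)
    (hP' : IsOrbitCycle R act q P) :
    ∀ᶠ L : ℕ in atTop, q ∣ L → 2 * gridIntegral L u (sample L P) ^ 2 = 0 := by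
  filter_upwards [hX.eventually_gridIntegral_cup_zeroDivisor hone hε hu hu hP hP hP' hP']
    with L h hq
  rw [← neg_eq_zero, ← gridIntegral_cup_zeroDivisor_self hu.isNormalized ha ha', h hq]

end Deformation

section ExtendPath

variable {Z X : Type*} {d : Z → ℝ} {η : ℝ}

/-- Time `τ` at the point `z`, slowed down by a factor which is `0` for `d z ≤ η / 2` and `1` for
`η ≤ d z`. -/
noncomputable def slowTime (d : Z → ℝ) (η : ℝ) (q : Z × ℝ) : I :=
  projIcc 0 1 zero_le_one (q.2 * (projIcc 0 1 zero_le_one (2 * d q.1 / η - 1) : I))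

theorem continuous_slowTime [TopologicalSpace Z] (hd : Continuous d) :
    Continuous (slowTime d η) := by
  unfold slowTime
  exact continuous_projIcc.comp (continuous_snd.mul
    (continuous_subtype_val.comp (continuous_projIcc.comp (by fun_prop))))

theorem slowTime_zero (z : Z) : slowTime d η (z, 0) = 0 := by
  rw [slowTime, zero_mul]
  exact projIcc_left _

theorem slowTime_eq_zero (hη : 0 < η) {z : Z} (hz : d z ≤ η / 2) (τ : ℝ) :
    slowTime d η (z, τ) = 0 := by
  have hd : 2 * d z / η - 1 ≤ 0 := by
    rw [sub_nonpos, div_le_one hη]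
    linarith
  rw [slowTime, projIcc_of_le_left _ hd, mul_zero]
  exact projIcc_left _

theorem slowTime_one (hη : 0 < η) {z : Z} (hz : η ≤ d z) : slowTime d η (z, 1) = 1 := by
  have hd : 1 ≤ 2 * d z / η - 1 := by
    rw [le_sub_iff_add_le, le_div_iff₀ hη]
    linarith
  rw [slowTime, projIcc_of_right_le _ hd, one_mul]
  exact projIcc_right _

variable [TopologicalSpace X] {s : Z → C(I, X)} {c : Z → X}

open Classical in
/-- The paths `s`, defined where `0 < d`, extended by the constant paths `c` after slowing them down
towards the boundary of that region. -/
noncomputable def extendPath (d : Z → ℝ) (η : ℝ) (s : Z → C(I, X)) (c : Z → X) (q : Z × ℝ) : X :=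
  if 0 < d q.1 then s q.1 (slowTime d η q) else c q.1

theorem extendPath_of_pos {z : Z} (hz : 0 < d z) (τ : ℝ) :
    extendPath d η s c (z, τ) = s z (slowTime d η (z, τ)) :=
  if_pos hz

theorem extendPath_of_nonpos {z : Z} (hz : ¬0 < d z) (τ : ℝ) : extendPath d η s c (z, τ) = c z :=
  if_neg hz

theorem extendPath_eq_base (hsc : ∀ z, 0 < d z → s z 0 = c z) {z : Z} {τ : ℝ}
    (hτ : slowTime d η (z, τ) = 0) : extendPath d η s c (z, τ) = c z := by
  by_cases hz : 0 < d z
  · rw [extendPath_of_pos hz, hτ, hsc z hz]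
  · exact extendPath_of_nonpos hz τ

theorem extendPath_one (hη : 0 < η) {z : Z} (hz : η ≤ d z) : extendPath d η s c (z, 1) = s z 1 := by
  rw [extendPath_of_pos (hη.trans_le hz), slowTime_one hη hz]

theorem extendPath_map {γ : Z → Z} {α : X → X} (hd : ∀ z, d (γ z) = d z)
    (hc : ∀ z, c (γ z) = α (c z)) (hs : ∀ z, 0 < d z → ∀ t, s (γ z) t = α (s z t)) (z : Z) (τ : ℝ) :
    extendPath d η s c (γ z, τ) = α (extendPath d η s c (z, τ)) := by
  have htime : slowTime d η (γ z, τ) = slowTime d η (z, τ) := by simp only [slowTime, hd]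
  by_cases hz : 0 < d z
  · rw [extendPath_of_pos hz, extendPath_of_pos (by rwa [hd]), htime, hs z hz]
  · rw [extendPath_of_nonpos hz, extendPath_of_nonpos (by rwa [hd]), hc]

theorem continuous_extendPath [TopologicalSpace Z] (hd : Continuous d)
    (hη : 0 < η) (hs : ContinuousOn s {z | 0 < d z}) (hc : Continuous c)
    (hsc : ∀ z, 0 < d z → s z 0 = c z) : Continuous (extendPath d η s c) := by
  rw [continuous_iff_continuousAt]
  rintro ⟨z, τ⟩
  have hd' : ContinuousAt (fun q : Z × ℝ => d q.1) (z, τ) := (hd.comp continuous_fst).continuousAt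
  by_cases hz : 0 < d z
  · have hs' : ContinuousAt (fun q : Z × ℝ => s q.1) (z, τ) :=
      (hs.continuousAt ((isOpen_lt continuous_const hd).mem_nhds hz)).comp continuousAt_fst
    refine (hs'.eval (continuous_slowTime (η := η) hd).continuousAt).congr ?_
    filter_upwards [hd'.eventually (lt_mem_nhds hz)] with q hq
    exact (extendPath_of_pos hq q.2).symm
  · refine (hc.comp continuous_fst).continuousAt.congr ?_
    filter_upwards [hd'.eventually (gt_mem_nhds (by linarith : d z < η / 2))] with q hq
    exact (extendPath_eq_base hsc (slowTime_eq_zero hη hq.le q.2)).symm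

end ExtendPath

section Depth

variable {Z : Type*} [PseudoMetricSpace Z] {U : Set Z}

/-- The distance to the complement of `U`, truncated at `1` so that it also makes sense for
`U = univ`. -/
noncomputable def depth (U : Set Z) (z : Z) : ℝ := (min 1 (Metric.infEDist z Uᶜ)).toReal

theorem continuous_depth (U : Set Z) : Continuous (depth U) :=
  ENNReal.continuousOn_toReal.comp_continuous (continuous_const.min Metric.continuous_infEDist)
    fun _ => ((min_le_left _ _).trans_lt ENNReal.one_lt_top).ne

theorem depth_pos_iff (hU : IsOpen U) {z : Z} : 0 < depth U z ↔ z ∈ U := by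
  have hfin : min 1 (Metric.infEDist z Uᶜ) < ⊤ := (min_le_left _ _).trans_lt ENNReal.one_lt_top
  rw [depth, ENNReal.toReal_pos_iff, and_iff_left hfin, lt_min_iff, and_iff_right one_pos,
    Metric.infEDist_pos_iff_notMem_closure, hU.isClosed_compl.closure_eq, notMem_compl_iff]

theorem depth_isometry {γ : Z → Z} (hγ : Isometry γ) (hU : γ '' Uᶜ = Uᶜ) (z : Z) :
    depth U (γ z) = depth U z := by
  rw [depth, depth, ← Metric.infEDist_image hγ (x := z), hU]

theorem exists_pos_lt_depth_or [CompactSpace Z] {V : Set Z} (hU : IsOpen U) (hV : IsOpen V)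
    (hcover : U ∪ V = univ) : ∃ η > 0, ∀ z, η < depth U z ∨ η < depth V z := by
  obtain ⟨δ, hδ, hle⟩ := isCompact_univ.exists_forall_le' (a := 0)
    (f := fun z => max (depth U z) (depth V z))
    ((continuous_depth U).max (continuous_depth V)).continuousOn fun z _ => by
      rw [lt_max_iff, depth_pos_iff hU, depth_pos_iff hV]
      exact hcover.symm.subset (mem_univ z)
  exact ⟨δ / 2, half_pos hδ, fun z => lt_max_iff.mp ((half_lt_self hδ).trans_le (hle z trivial))⟩

end Depth

section Planner

variable {G X : Type*} {act : G → X → X} {U : Set (X × X)}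

/-- `s₁`, `s₂` form an equivariant motion planner over `U`, as in `invTCcover`. -/
structure IsInvariantPlanner [TopologicalSpace X] (act : G → X → X) (U : Set (X × X))
    (s₁ s₂ : X × X → C(I, X)) : Prop where
  mem_of_mem : ∀ g₁ g₂ : G, ∀ p, p ∈ U → (act g₁ p.1, act g₂ p.2) ∈ U
  continuousOn_left : ContinuousOn s₁ U
  continuousOn_right : ContinuousOn s₂ U
  endpoints : ∀ p ∈ U, s₁ p 0 = p.1 ∧ s₂ p 1 = p.2 ∧ orbit act (s₁ p 1) = orbit act (s₂ p 0)
  equivariant : ∀ g₁ g₂ : G, ∀ p, p ∈ U → ∀ t : I,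
    s₁ (act g₁ p.1, act g₂ p.2) t = act g₁ (s₁ p t) ∧
      s₂ (act g₁ p.1, act g₂ p.2) t = act g₂ (s₂ p t)

theorem invTCcover_iff [TopologicalSpace X] {m : ℕ} :
    invTCcover act m ↔ ∃ U : Fin m → Set (X × X), (∀ i, IsOpen (U i)) ∧ ⋃ i, U i = univ ∧
      ∀ i, ∃ s₁ s₂, IsInvariantPlanner act (U i) s₁ s₂ := by
  refine exists_congr fun U => and_congr_right' (and_congr_right' (forall_congr' fun i =>
    ⟨?_, ?_⟩))
  · rintro ⟨hinv, s₁, s₂, hs₁, hs₂, hend, heq⟩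
    exact ⟨s₁, s₂, hinv, hs₁, hs₂, hend, heq⟩
  · rintro ⟨s₁, s₂, hinv, hs₁, hs₂, hend, heq⟩
    exact ⟨hinv, s₁, s₂, hs₁, hs₂, hend, heq⟩

variable [Group G]

theorem image_prodAct_compl (hone : ∀ x, act 1 x = x)
    (hmul : ∀ g h x, act (g * h) x = act g (act h x))
    (hU : ∀ g₁ g₂ : G, ∀ p, p ∈ U → (act g₁ p.1, act g₂ p.2) ∈ U) (g : G × G) :
    prodAct act g '' Uᶜ = Uᶜ := by
  have hinv (g : G × G) (p : X × X) : prodAct act g⁻¹ (prodAct act g p) = p := by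
    simp [prodAct, ← hmul, hone]
  have hinv' (p : X × X) : prodAct act g (prodAct act g⁻¹ p) = p := by simpa using hinv g⁻¹ p
  refine Subset.antisymm ?_ fun p hp => ⟨prodAct act g⁻¹ p, fun h => hp ?_, hinv' p⟩
  · rintro _ ⟨p, hp, rfl⟩ h
    exact hp (hinv g p ▸ hU g⁻¹.1 g⁻¹.2 _ h)
  · exact hinv' p ▸ hU g.1 g.2 _ h

variable [PseudoMetricSpace X]

/-- The paths of the planner are extended to `X × X` with `extendPath`; the second one is run
backwards. -/
theorem IsInvariantPlanner.nonempty_endpointDeformation {s₁ s₂ : X × X → C(I, X)}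
    (hs : IsInvariantPlanner act U s₁ s₂) (hU : IsOpen U) (hone : ∀ x, act 1 x = x)
    (hmul : ∀ g h x, act (g * h) x = act g (act h x)) (hiso : ∀ g, Isometry (act g)) {η : ℝ}
    (hη : 0 < η) : Nonempty (EndpointDeformation act {p | η < depth U p}) := by
  let rev : C(I, I) := ⟨unitInterval.symm, continuous_symm⟩
  have hd := continuous_depth U
  have hdepth (g : G × G) (p : X × X) : depth U (prodAct act g p) = depth U p :=
    depth_isometry ((hiso g.1).prodMap (hiso g.2)) (image_prodAct_compl hone hmul hs.mem_of_mem g) p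
  have hmem : {p | 0 < depth U p} ⊆ U := fun p hp => (depth_pos_iff hU).mp hp
  have hstart₁ (p : X × X) (hp : 0 < depth U p) : s₁ p 0 = p.1 := (hs.endpoints p (hmem hp)).1
  have hstart₂ (p : X × X) (hp : 0 < depth U p) : (s₂ p).comp rev 0 = p.2 := by
    simpa [rev] using (hs.endpoints p (hmem hp)).2.1
  refine ⟨{
    fst := extendPath (depth U) η s₁ Prod.fst
    snd := extendPath (depth U) η (fun p => (s₂ p).comp rev) Prod.snd
    continuous_fst :=
      continuous_extendPath hd hη (hs.continuousOn_left.mono hmem) continuous_fst hstart₁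
    continuous_snd := continuous_extendPath hd hη ((ContinuousMap.continuous_precomp
      rev).comp_continuousOn (hs.continuousOn_right.mono hmem)) continuous_snd hstart₂
    fst_act := fun g => extendPath_map (hdepth g) (fun _ => rfl)
      fun p hp t => (hs.equivariant g.1 g.2 p (hmem hp) t).1
    snd_act := fun g => extendPath_map (hdepth g) (fun _ => rfl)
      fun p hp t => (hs.equivariant g.1 g.2 p (hmem hp) _).2
    fst_zero := fun p => extendPath_eq_base hstart₁ (slowTime_zero p)
    snd_zero := fun p => extendPath_eq_base hstart₂ (slowTime_zero p)
    same_orbit := fun p hp => ?_ }⟩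
  rw [extendPath_one hη (mem_ofPred.mp hp).le, extendPath_one hη (mem_ofPred.mp hp).le]
  have horbit : s₂ p 0 ∈ orbit act (s₁ p 1) :=
    (hs.endpoints p (hmem (hη.trans hp))).2.2 ▸ ⟨1, hone _⟩
  simpa [rev, orbit] using horbit

theorem hasDeformationCover_of_invTCcover_two [CompactSpace X] (hone : ∀ x, act 1 x = x)
    (hmul : ∀ g h x, act (g * h) x = act g (act h x)) (hiso : ∀ g, Isometry (act g))
    (hX : invTCcover act 2) : HasDeformationCover act := by
  obtain ⟨U, hU, hcover, hplanner⟩ := invTCcover_iff.mp hX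
  choose s₁ s₂ hs using hplanner
  have hcover' : U 0 ∪ U 1 = univ := by
    rw [← hcover]
    ext p
    simp [Fin.exists_fin_two]
  obtain ⟨η, hη, hdepth⟩ := exists_pos_lt_depth_or (hU 0) (hU 1) hcover'
  exact ⟨_, _, isOpen_lt continuous_const (continuous_depth (U 0)),
    isOpen_lt continuous_const (continuous_depth (U 1)), eq_univ_of_forall hdepth,
    (hs 0).nonempty_endpointDeformation (hU 0) hone hmul hiso hη,
    (hs 1).nonempty_endpointDeformation (hU 1) hone hmul hiso hη⟩

end Planner

section FixedSet

variable {G X : Type*} [TopologicalSpace X] {act : G → X → X} {O : Set (X × X)} {Y : Set X}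

/-- The restriction to a set of fixed points, with its trivial action. -/
def EndpointDeformation.restrictFixed (D : EndpointDeformation act O)
    (hY : ∀ x, x ∈ Y ↔ ∀ g, act g x = x) :
    EndpointDeformation (fun (_ : G) (y : Y) => y) {p | ((p.1 : X), (p.2 : X)) ∈ O} :=
  have hfix (g : G) (p : Y × Y) : prodAct act (g, g) (p.1, p.2) = (↑p.1, ↑p.2) :=
    Prod.ext ((hY _).mp p.1.2 g) ((hY _).mp p.2.2 g)
  have hfst (p : Y × Y) (τ : ℝ) : D.fst ((↑p.1, ↑p.2), τ) ∈ Y :=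
    (hY _).mpr fun g => by rw [← D.fst_act (g, g), hfix]
  have hsnd (p : Y × Y) (τ : ℝ) : D.snd ((↑p.1, ↑p.2), τ) ∈ Y :=
    (hY _).mpr fun g => by rw [← D.snd_act (g, g), hfix]
  { fst := fun q => ⟨D.fst ((q.1.1, q.1.2), q.2), hfst q.1 q.2⟩
    snd := fun q => ⟨D.snd ((q.1.1, q.1.2), q.2), hsnd q.1 q.2⟩
    continuous_fst := (D.continuous_fst.comp (by fun_prop)).subtype_mk _
    continuous_snd := (D.continuous_snd.comp (by fun_prop)).subtype_mk _
    fst_act := fun _ _ _ => rfl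
    snd_act := fun _ _ _ => rfl
    fst_zero := fun _ => Subtype.ext (D.fst_zero _)
    snd_zero := fun _ => Subtype.ext (D.snd_zero _)
    same_orbit := fun p hp => by
      obtain ⟨g, hg⟩ := D.same_orbit _ hp
      exact ⟨g, Subtype.ext (((hY _).mp (hfst p 1) g).symm.trans hg)⟩ }

theorem HasDeformationCover.restrictFixed (hX : HasDeformationCover act)
    (hY : ∀ x, x ∈ Y ↔ ∀ g, act g x = x) : HasDeformationCover fun (_ : G) (y : Y) => y := by
  obtain ⟨O₁, O₂, hO₁, hO₂, hcover, ⟨D₁⟩, ⟨D₂⟩⟩ := hX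
  exact ⟨_, _, hO₁.preimage (by fun_prop), hO₂.preimage (by fun_prop),
    eq_univ_of_forall fun p => hcover.symm.subset (mem_univ ((p.1 : X), (p.2 : X))),
    ⟨D₁.restrictFixed hY⟩, ⟨D₂.restrictFixed hY⟩⟩

end FixedSet

section Jumps

variable {X Y R : Type*} [CommRing R] {r : ℕ}

/-- The coboundary of a function on vertices, as a cochain of degree `1`. -/
def difference (κ : X → R) (x : ℕ → X) : R := κ (x 1) - κ (x 0)

theorem dependsOn_difference (κ : X → R) : DependsOn (difference κ) (Iic 1) := fun x y hxy => by
  rw [difference, difference, hxy 0 (by simp), hxy 1 (by simp)]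

theorem isNormalized_difference (κ : X → R) : IsNormalized 1 (difference κ) := by
  rintro x ⟨i, hi, hx⟩
  obtain rfl : i = 0 := by omega
  rw [difference, ← hx, sub_self]

theorem coboundary_one (u : (ℕ → X) → R) (x : ℕ → X) :
    coboundary 1 u x = u (x ∘ skip 0) - u (x ∘ skip 1) + u (x ∘ skip 2) := by
  simp only [coboundary, Finset.sum_range_succ, Finset.sum_range_zero]
  ring

theorem coboundary_difference (κ : X → R) (x : ℕ → X) : coboundary 1 (difference κ) x = 0 := by
  simp [coboundary_one, difference, skip]

/-- The iterated cup product of the differences of `r` functions on vertices. -/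
def jumpCochain (κ : Fin r → X → R) (x : ℕ → X) : R := ∏ i, difference (κ i) (x ∘ (i.val + ·))

theorem jumpCochain_apply (κ : Fin r → X → R) (x : ℕ → X) :
    jumpCochain κ x = ∏ i, (κ i (x (i + 1)) - κ i (x i)) := rfl

theorem jumpCochain_congr {κ : Fin r → X → R} {κ' : Fin r → Y → R} {x : ℕ → X} {y : ℕ → Y}
    (h : ∀ i j, κ i (x j) = κ' i (y j)) : jumpCochain κ x = jumpCochain κ' y :=
  Finset.prod_congr rfl fun i _ => congrArg₂ (· - ·) (h i _) (h i _)

theorem dependsOn_jumpCochain (κ : Fin r → X → R) : DependsOn (jumpCochain κ) (Iic r) := by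
  intro x y hxy
  simp only [jumpCochain_apply]
  refine Finset.prod_congr rfl fun i _ => ?_
  rw [hxy i (mem_Iic.mpr i.2.le), hxy (i + 1) (mem_Iic.mpr i.2)]

theorem isNormalized_jumpCochain (κ : Fin r → X → R) : IsNormalized r (jumpCochain κ) := by
  rintro x ⟨i, hi, hx⟩
  exact Finset.prod_eq_zero (Finset.mem_univ ⟨i, hi⟩) (by simp [difference, hx])

theorem jumpCochain_succ (κ : Fin (r + 1) → X → R) :
    jumpCochain κ = cup r (jumpCochain fun i => κ i.castSucc) (difference (κ (Fin.last r))) := by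
  funext x
  simp [jumpCochain, cup, Fin.prod_univ_castSucc]

theorem coboundary_jumpCochain (κ : Fin r → X → R) (x : ℕ → X) :
    coboundary r (jumpCochain κ) x = 0 := by
  induction r with
  | zero => simp [coboundary, jumpCochain, Finset.sum_range_succ]
  | succ r ih =>
    rw [jumpCochain_succ, coboundary_cup 1 (dependsOn_jumpCochain _), ih, coboundary_difference]
    simp

end Jumps

section GridJumps

variable {R Y : Type*} [CommRing R] {r d L m₀ : ℕ}

theorem eq_one_and_eq_const_of_jumpCochain_kuhnPath_ne_zero {s : Perm (Fin r)} {m : Fin r → ℕ}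
    (h : jumpCochain (fun i m => if m₀ < m i then (1 : R) else 0) (kuhnPath m s) ≠ 0) :
    s = 1 ∧ m = fun _ => m₀ := by
  have hfactor (i : Fin r) : s i = i ∧ m i = m₀ := by
    have hi : (if m₀ < kuhnPath m s (i + 1) i then (1 : R) else 0) -
        (if m₀ < kuhnPath m s i i then 1 else 0) ≠ 0 :=
      fun hi => h (Finset.prod_eq_zero (Finset.mem_univ i) hi)
    have hs : (s i : ℕ) = i := by
      by_contra hne
      exact hi (by rw [kuhnPath_succ_apply_of_ne hne, sub_self])
    refine ⟨Fin.ext hs, ?_⟩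
    by_contra hne
    refine hi (sub_eq_zero.mpr (if_congr ?_ rfl rfl))
    simp only [kuhnPath, hs, lt_add_one, if_true, lt_self_iff_false, if_false]
    omega
  exact ⟨Equiv.ext fun i => (hfactor i).1, funext fun i => (hfactor i).2⟩

theorem sum_jumpCochain_kuhnPath (hm₀ : m₀ < L) (D : (Fin r → ℕ) → R) :
    ∑ s : Perm (Fin r), permSign R s * ∑ m ∈ gridBox L r,
      jumpCochain (fun i m => if m₀ < m i then (1 : R) else 0) (kuhnPath m s) * D m =
      D fun _ => m₀ := by
  rw [Finset.sum_eq_single (1 : Perm (Fin r)), Finset.sum_eq_single fun _ => m₀]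
  · simp [jumpCochain_apply, kuhnPath]
  · intro m _ hm
    by_contra h
    exact hm (eq_one_and_eq_const_of_jumpCochain_kuhnPath_ne_zero (left_ne_zero_of_mul h)).2
  · exact fun h => absurd (mem_gridBox.mpr fun _ => hm₀) h
  · intro s _ hs
    refine mul_eq_zero_of_right _ (Finset.sum_eq_zero fun m _ => ?_)
    by_contra h
    exact hs (eq_one_and_eq_const_of_jumpCochain_kuhnPath_ne_zero (left_ne_zero_of_mul h)).1
  · exact fun h => absurd (Finset.mem_univ _) h

theorem gridIntegral_cup_jumpCochain (hm₀ : m₀ < L) (w : (ℕ → Y) → R)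
    (g : (Fin (r + d) → ℕ) → Y) :
    gridIntegral L (cup r (pull Prod.fst (jumpCochain fun i m => if m₀ < m i then (1 : R) else 0))
        (pull Prod.snd w)) (fun m => (m ∘ Fin.castAdd d, g m)) =
      gridIntegral L w fun m => g (Fin.append (fun _ => m₀ + 1) m) :=
  (gridIntegral_cup_fst_block (isNormalized_jumpCochain _) w id g).trans
    (sum_jumpCochain_kuhnPath hm₀ _)

end GridJumps

section Suspension

variable {G X R : Type*} [CommRing R] {r d L : ℕ} {ε : ℝ} {act : G → X → X}
  {A : Fin r → X → ℝ} {τ : (ℕ → X) → R}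

/-- The indicator function of the positive reals, with values in `R`. -/
noncomputable def heaviside (R : Type*) [CommRing R] (t : ℝ) : R := if 0 < t then 1 else 0

/-- The `r`-fold suspension of a cochain `τ` on the common zero set of the coordinates `A i`: the
product of `τ` with the classes which are Poincaré dual to the hypersurfaces `A i = 0`. -/
noncomputable def suspension (A : Fin r → X → ℝ) (τ : (ℕ → X) → R) : (ℕ → X) → R :=
  cup r (jumpCochain fun i => heaviside R ∘ A i) τ

theorem gridIntegral_suspension (hL : 0 < L) {f : (Fin (r + d) → ℕ) → X}
    (hf : ∀ x, IsGridSeq L x → τ (f ∘ x ∘ (r + ·)) ≠ 0 →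
      ∀ i j, 0 < A i (f (x j)) ↔ L < 2 * x j (Fin.castAdd d i)) :
    gridIntegral L (suspension A τ) f =
      gridIntegral L τ fun m => f (Fin.append (fun _ => L / 2 + 1) m) := by
  rw [← gridIntegral_cup_jumpCochain (Nat.div_lt_self hL one_lt_two) τ f]
  refine Finset.sum_congr rfl fun ς _ => congrArg _ (Finset.sum_congr rfl fun m hm => ?_)
  by_cases hτ : τ (f ∘ kuhnPath m ς ∘ (r + ·)) = 0
  · exact (mul_eq_zero_of_right _ hτ).trans (mul_eq_zero_of_right _ hτ).symm
  · refine congrArg₂ (· * ·) (jumpCochain_congr fun i j => if_congr ?_ rfl rfl) rfl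
    refine (hf _ (isGridSeq_kuhnPath hm ς) hτ i j).trans ?_
    simp only [Function.comp_apply]
    omega

/-- The conditions of `IsInvariantCocycle`, with closedness and invariance only for simplices with
vertices in `S`. -/
structure IsInvariantCocycleOn [Dist X] (act : G → X → X) (ε : ℝ) (S : Set X) (d : ℕ)
    (τ : (ℕ → X) → R) : Prop where
  dependsOn : DependsOn τ (Iic d)
  isNormalized : IsNormalized d τ
  coboundary_eq_zero : ∀ x, IsSmall ε x → (∀ j, x j ∈ S) → coboundary d τ x = 0
  apply_eq : ∀ x y, IsSmall ε x → IsSmall ε y → (∀ j, x j ∈ S) → (∀ j, y j ∈ S) →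
    (∀ j, ∃ g, act g (x j) = y j) → τ x = τ y

variable [PseudoMetricSpace X]

theorem abs_le_of_jumpCochain_heaviside_ne_zero (hA : ∀ i, LipschitzWith 1 (A i)) {x : ℕ → X}
    (hx : IsSmall ε x) (h : jumpCochain (fun i => heaviside R ∘ A i) x ≠ 0) (i : Fin r) (j : ℕ) :
    |A i (x j)| ≤ 2 * ε := by
  have hi : heaviside R (A i (x (i + 1))) - heaviside R (A i (x i)) ≠ 0 :=
    fun hi => h (Finset.prod_eq_zero (Finset.mem_univ i) hi)
  have hclose (j l : ℕ) : |A i (x j) - A i (x l)| ≤ ε := by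
    simpa [Real.dist_eq] using ((hA i).dist_le_mul _ _).trans (by simpa using hx j l)
  have hstep := abs_le.mp (hclose (i + 1) i)
  have hjump := abs_le.mp (hclose j i)
  have hsign : ¬(0 < A i (x (i + 1)) ↔ 0 < A i (x i)) :=
    fun hsign => hi (sub_eq_zero.mpr (if_congr hsign rfl rfl))
  rw [abs_le]
  grind

theorem IsInvariantCocycleOn.suspension (hA : ∀ i, LipschitzWith 1 (A i))
    (hAact : ∀ i g x, A i (act g x) = A i x)
    (hτ : IsInvariantCocycleOn act ε {x | ∀ i, |A i x| ≤ 2 * ε} d τ) :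
    IsInvariantCocycle act ε (r + d) (suspension A τ) where
  dependsOn := dependsOn_cup (dependsOn_jumpCochain _) hτ.dependsOn
  isNormalized := (isNormalized_jumpCochain _).cup hτ.isNormalized
  coboundary_eq_zero x hx := by
    rw [InvTC.suspension, coboundary_cup d (dependsOn_jumpCochain _), coboundary_jumpCochain,
      zero_mul, zero_add]
    by_cases hJ : jumpCochain (fun i => heaviside R ∘ A i) x = 0
    · simp [hJ]
    · rw [hτ.coboundary_eq_zero (x ∘ (r + ·)) (fun i j => hx _ _)
        fun j i => abs_le_of_jumpCochain_heaviside_ne_zero hA hx hJ i _, mul_zero]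
  apply_eq x y hx hy hxy := by
    have hJ : jumpCochain (fun i => heaviside R ∘ A i) x =
        jumpCochain (fun i => heaviside R ∘ A i) y := jumpCochain_congr fun i j => by
      obtain ⟨g, hg⟩ := hxy j
      simp [← hg, hAact]
    by_cases hJx : jumpCochain (fun i => heaviside R ∘ A i) x = 0
    · simp [InvTC.suspension, cup, ← hJ, hJx]
    · exact congrArg₂ (· * ·) hJ (hτ.apply_eq _ _ (fun i j => hx _ _) (fun i j => hy _ _)
        (fun j i => abs_le_of_jumpCochain_heaviside_ne_zero hA hx hJx i _)
        (fun j i => abs_le_of_jumpCochain_heaviside_ne_zero hA hy (hJ ▸ hJx) i _) fun j => hxy _)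

end Suspension

section FreeOrbits

variable {G X : Type*} {act : G → X → X} {ε : ℝ}

theorem exists_pos_forall_lt_dist [Finite G] [One G] [MetricSpace X] [CompactSpace X]
    (hact : ∀ g, Continuous (act g)) {ι : Type*} [Finite ι] {A : ι → X → ℝ}
    (hA : ∀ i, Continuous (A i)) (hfree : ∀ x, (∀ i, A i x = 0) → ∀ g ≠ 1, act g x ≠ x) :
    ∃ ε > 0, ∀ x, (∀ i, |A i x| ≤ 2 * ε) → ∀ g ≠ 1, 2 * ε < dist (act g x) x := by
  cases nonempty_fintype ι
  have hone (g : G) : ∀ᶠ ε : ℝ in nhdsWithin 0 (Ioi 0), ∀ x, (∀ i, |A i x| ≤ 2 * ε) → g ≠ 1 →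
      2 * ε < dist (act g x) x := by
    by_cases hg : g = 1
    · simp [hg]
    have hcont : Continuous fun x => dist (act g x) x + ∑ i, |A i x| := by
      have := hact g
      fun_prop
    obtain ⟨δ, hδ, hle⟩ :=
      isCompact_univ.exists_forall_le' (a := 0) hcont.continuousOn fun x _ => by
      by_cases hx : ∀ i, A i x = 0
      · exact add_pos_of_pos_of_nonneg (dist_pos.mpr (hfree x hx g hg)) (by positivity)
      · obtain ⟨i, hi⟩ := not_forall.mp hx
        exact add_pos_of_nonneg_of_pos dist_nonneg
          (Finset.sum_pos' (fun i _ => abs_nonneg _) ⟨i, Finset.mem_univ i, abs_pos.mpr hi⟩)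
    have hlim :
        Filter.Tendsto (fun ε : ℝ => 2 * ε + Fintype.card ι * (2 * ε)) (nhds 0) (nhds 0) := by
      have : Continuous fun ε : ℝ => 2 * ε + Fintype.card ι * (2 * ε) := by fun_prop
      simpa using this.tendsto 0
    filter_upwards [nhdsWithin_le_nhds (hlim.eventually (gt_mem_nhds hδ))] with ε hε x hx _
    have hsum : ∑ i, |A i x| ≤ Fintype.card ι * (2 * ε) := by
      simpa using Finset.sum_le_card_nsmul Finset.univ _ _ fun i _ => hx i
    linarith [hle x (mem_univ x)]
  obtain ⟨ε, hε, hpos⟩ := ((Filter.eventually_all.mpr hone).and self_mem_nhdsWithin).exists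
  exact ⟨ε, hpos, fun x hx g hg => hε g x hx hg⟩

theorem IsSmall.exists_forall_act_eq [Group G] [PseudoMetricSpace X]
    (hmul : ∀ g h x, act (g * h) x = act g (act h x)) (hiso : ∀ g, Isometry (act g)) {x y : ℕ → X}
    (hx : IsSmall ε x) (hy : IsSmall ε y)
    (hdist : ∀ j, ∀ g ≠ 1, 2 * ε < dist (act g (x j)) (x j)) (hxy : ∀ j, ∃ g, act g (x j) = y j) :
    ∃ g, ∀ j, act g (x j) = y j := by
  choose g hg using hxy
  refine ⟨g 0, fun j => ?_⟩
  suffices (g j)⁻¹ * g 0 = 1 by rw [← inv_mul_eq_one.mp this, hg]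
  by_contra hne
  have hlt := hdist j _ hne
  rw [← (hiso (g j)).dist_eq, ← hmul, mul_inv_cancel_left, hg] at hlt
  have htri := dist_triangle (act (g 0) (x j)) (act (g 0) (x 0)) (y j)
  rw [(hiso (g 0)).dist_eq, hg] at htri
  linarith [hx j 0, hy 0 j]

/-- `h` identifies each free orbit with the group `A`, written additively. -/
def IsOrbitCoordinate {A : Type*} [AddGroup A] (act : Multiplicative A → X → X) (h : X → A) :
    Prop :=
  ∀ x, (∀ g, act g x = x → g = 1) → ∀ g, h (act g x) = g.toAdd + h x

theorem exists_isOrbitCoordinate {A : Type*} [AddGroup A] {act : Multiplicative A → X → X}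
    (hone : ∀ x, act 1 x = x) (hmul : ∀ g h x, act (g * h) x = act g (act h x)) :
    ∃ h, IsOrbitCoordinate act h := by
  have hinv (g : Multiplicative A) (x : X) : act g⁻¹ (act g x) = x := by
    rw [← hmul, inv_mul_cancel, hone]
  have horbit (g : Multiplicative A) (x : X) : orbit act (act g x) = orbit act x := by
    ext y
    constructor
    · rintro ⟨k, rfl⟩
      exact ⟨k * g, hmul k g x⟩
    · rintro ⟨k, rfl⟩
      exact ⟨k * g⁻¹, by rw [hmul, hinv]⟩
  have hrep (O : range (orbit act)) : ∃ b : X, b ∈ O.1 := by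
    obtain ⟨_, x, rfl⟩ := O
    exact ⟨x, 1, hone x⟩
  choose rep hrep using hrep
  have hcoord (x : X) : ∃ g, act g (rep ⟨orbit act x, x, rfl⟩) = x := by
    obtain ⟨g, hg⟩ := hrep ⟨orbit act x, x, rfl⟩
    exact ⟨g⁻¹, by rw [← hg, hinv]⟩
  choose h hh using hcoord
  refine ⟨fun x => (h x).toAdd, fun x hx g => ?_⟩
  have hbase : rep ⟨orbit act (act g x), _, rfl⟩ = act (h x)⁻¹ x := by
    rw [← hinv (h x) (rep _)]
    exact congrArg (act _) ((congrArg _ (congrArg rep (Subtype.ext (horbit g x)))).trans (hh x))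
  have hfix := hh (act g x)
  rw [hbase, ← hmul] at hfix
  have hstab : g⁻¹ * (h (act g x) * (h x)⁻¹) = 1 := hx _ (by rw [hmul, hfix, hinv])
  rw [inv_mul_eq_one, eq_mul_inv_iff_mul_eq] at hstab
  exact congrArg Multiplicative.toAdd hstab.symm

theorem IsOrbitCoordinate.isInvariantCocycleOn {A R : Type*} [AddGroup A] [CommRing R]
    [PseudoMetricSpace X] {act : Multiplicative A → X → X} {h : X → A}
    (hh : IsOrbitCoordinate act h) (hmul : ∀ g h x, act (g * h) x = act g (act h x))
    (hiso : ∀ g, Isometry (act g)) {S : Set X}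
    (hS : ∀ x ∈ S, ∀ g ≠ 1, 2 * ε < dist (act g x) x) {d : ℕ} {τ : (ℕ → X) → R}
    (hdep : DependsOn τ (Iic d)) (hnorm : IsNormalized d τ) (hclosed : ∀ x, coboundary d τ x = 0)
    (hτ : ∀ x y c, (∀ j, h (y j) = c + h (x j)) → τ x = τ y) :
    IsInvariantCocycleOn act ε S d τ where
  dependsOn := hdep
  isNormalized := hnorm
  coboundary_eq_zero x _ _ := hclosed x
  apply_eq x y hx hy hxS _ hxy := by
    obtain ⟨g, hg⟩ := hx.exists_forall_act_eq hmul hiso hy (fun j => hS _ (hxS j)) hxy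
    refine hτ x y g.toAdd fun j => ?_
    rw [← hg j]
    refine hh _ (fun g' hg' => ?_) g
    by_contra hne
    have hlt := hS _ (hxS j) g' hne
    have hle := hx j j
    rw [hg', dist_self] at hlt
    rw [dist_self] at hle
    linarith

end FreeOrbits

section Bockstein

variable {p : ℕ} {X : Type*} {h : X → ZMod p}

/-- The lift of the cochain `difference h` to the integers. -/
def intLift (h : X → ZMod p) (x : ℕ → X) : ℤ := (difference h x).val

/-- The integral Bockstein cochain of `difference h`; the division by `p` is exact. -/
def intBockstein (h : X → ZMod p) (x : ℕ → X) : ℤ := coboundary 1 (intLift h) x / p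

/-- The Bockstein cochain of `difference h`. -/
def bockstein (h : X → ZMod p) (x : ℕ → X) : ZMod p := intBockstein h x

theorem dependsOn_intLift : DependsOn (intLift h) (Iic 1) := fun _ _ hxy =>
  congrArg (fun a : ZMod p => (a.val : ℤ)) (dependsOn_difference h hxy)

theorem isNormalized_intLift : IsNormalized 1 (intLift h) := fun x hx => by
  simp [intLift, isNormalized_difference h x hx]

theorem dependsOn_bockstein : DependsOn (bockstein h) (Iic 2) := fun x y hxy => by
  simp [bockstein, intBockstein, coboundary_one, intLift, difference, skip, hxy 0, hxy 1, hxy 2]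

theorem isNormalized_bockstein : IsNormalized 2 (bockstein h) := by
  rintro x ⟨i, hi, hx⟩
  interval_cases i <;>
    simp_all [bockstein, intBockstein, coboundary_one, intLift, difference, skip]

theorem bockstein_eq_of_forall_eq_add {x y : ℕ → X} {c : ZMod p}
    (hxy : ∀ j, h (y j) = c + h (x j)) : bockstein h x = bockstein h y := by
  simp [bockstein, intBockstein, coboundary_one, intLift, difference, hxy]

variable [NeZero p]

theorem cast_intLift (x : ℕ → X) : (intLift h x : ZMod p) = difference h x := by simp [intLift]

theorem mul_intBockstein (x : ℕ → X) : p * intBockstein h x = coboundary 1 (intLift h) x := by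
  refine Int.mul_ediv_cancel' ((ZMod.intCast_zmod_eq_zero_iff_dvd _ p).mp ?_)
  simpa [coboundary_one, cast_intLift] using coboundary_difference h x

theorem coboundary_bockstein (x : ℕ → X) : coboundary 2 (bockstein h) x = 0 := by
  have hint : coboundary 2 (intBockstein h) x = 0 := by
    refine mul_left_cancel₀ (Nat.cast_ne_zero.mpr (NeZero.ne p))
      (Eq.trans ?_ (mul_zero (p : ℤ)).symm)
    simp only [coboundary, Finset.mul_sum, mul_left_comm (p : ℤ), mul_intBockstein]
    simp [Finset.sum_range_succ, intLift, difference, skip]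
    ring
  simpa [coboundary, bockstein] using congrArg (Int.cast : ℤ → ZMod p) hint

end Bockstein

section Evaluation

variable {X R : Type*} [CommRing R] {L : ℕ}

theorem gridIntegral_difference (hL : 0 < L) (κ : X → R) (f : (Fin 1 → ℕ) → X) :
    gridIntegral L (difference κ) f = κ (f fun _ => L) - κ (f 0) := by
  have hzero : gridFace L (0 : Fin 1) = {0} := by
    ext m
    simp only [mem_gridFace, Fin.forall_fin_one, Finset.mem_singleton, funext_iff, Pi.zero_apply]
    omega
  have hκ : difference κ = coboundary 0 fun x => κ (x 0) := by
    funext x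
    simp [coboundary, difference, Finset.sum_range_succ, skip, sub_eq_add_neg]
  have htop : (0 + Pi.single 0 L : Fin 1 → ℕ) = fun _ => L := by
    funext c
    simp [Subsingleton.elim c 0]
  rw [hκ, gridIntegral_coboundary hL fun x y hxy => congrArg κ (hxy 0 (by simp)),
    Fintype.sum_eq_single 1 fun ς hς => (hς (Subsingleton.elim (α := Perm (Fin 1)) _ _)).elim]
  have hsymm : (1 : Perm (Fin (0 + 1))).symm (Fin.last 0) = 0 := rfl
  rw [hsymm, hzero, Finset.sum_singleton, htop]
  simp [permSign_apply, kuhnPath_zero]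

theorem sum_gridFace_one (F : (Fin 2 → ℕ) → R) :
    ∑ m ∈ gridFace L (1 : Fin 2), F m = ∑ a ∈ Finset.range L, F (Pi.single 0 a) := by
  refine Finset.sum_nbij' (fun m => m 0) (fun a => Pi.single 0 a) (fun m hm => ?_) (fun a ha => ?_)
    (fun m hm => ?_) (fun a _ => Pi.single_eq_same (M := fun _ : Fin 2 => ℕ) 0 a) fun m hm => ?_
  · exact Finset.mem_range.mpr ((mem_gridFace.mp hm).1 0)
  · have haL := Finset.mem_range.mp ha
    simpa [mem_gridFace, Fin.forall_fin_two, haL] using (Nat.zero_le a).trans_lt haL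
  all_goals
    have hm1 := (mem_gridFace.mp hm).2
    have hsingle : Pi.single 0 (m 0) = m := by
      ext c
      fin_cases c <;> simp [hm1]
    simp only [hsingle]

theorem gridIntegral_coboundary_one (hL : 0 < L) {c : (ℕ → X) → R} (hc : DependsOn c (Iic 1))
    (hc' : IsNormalized 1 c) {f : (Fin 2 → ℕ) → X}
    (hside : ∀ m, m 0 = 0 → f (m + Pi.single 0 L) = f m)
    (htop : ∀ m, m 1 = L → f (m + Pi.single 0 1) = f m) :
    gridIntegral L (coboundary 1 c) f =
      ∑ a ∈ Finset.range L, c (f ∘ kuhnPath (Pi.single 0 a) 1) := by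
  have hperm : (Finset.univ : Finset (Perm (Fin 2))) = {1, Equiv.swap 0 1} := by decide
  have hne : (1 : Perm (Fin 2)) ≠ Equiv.swap 0 1 := by decide
  have hlast : (1 : Perm (Fin 2)).symm (Fin.last 1) = 1 := rfl
  have hfirst : (Equiv.swap 0 1 : Perm (Fin 2)).symm (Fin.last 1) = 0 := by decide
  rw [gridIntegral_coboundary hL hc, hperm, Finset.sum_pair hne, hlast, hfirst]
  have hzero : ∀ m ∈ gridFace L (0 : Fin 2), c (f ∘ kuhnPath (m + Pi.single 0 L) (Equiv.swap 0 1)) -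
      c (f ∘ kuhnPath m (Equiv.swap 0 1)) = 0 := fun m hm => by
    refine sub_eq_zero.mpr (hc fun j hj => ?_)
    rw [Function.comp_apply, kuhnPath_add, hside]
    · rfl
    · rw [kuhnPath_apply_of_eq_last (by decide) m hj, (mem_gridFace.mp hm).2]
  have hone : ∀ m ∈ gridFace L (1 : Fin 2),
      c (f ∘ kuhnPath (m + Pi.single 1 L) 1) = 0 := fun m hm =>
    hc'.apply_degenerate_face (c := 1) (d := 0) rfl (by decide) fun m' hm' =>
      htop m' (by simp [hm', (mem_gridFace.mp hm).2])
  rw [Finset.sum_eq_zero hzero, Finset.sum_sub_distrib, Finset.sum_eq_zero hone, sum_gridFace_one]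
  simp

theorem gridIntegral_bockstein {p l : ℕ} [NeZero p] (hl : 0 < l) {h : X → ZMod p}
    {f : (Fin 2 → ℕ) → X} {g : ZMod p}
    (hside : ∀ m, m 0 = 0 → f (m + Pi.single 0 (p * l)) = f m)
    (htop : ∀ m, m 1 = p * l → f (m + Pi.single 0 1) = f m)
    (hbot : ∀ m, m 1 = 0 → h (f (m + Pi.single 0 l)) = g + h (f m)) :
    gridIntegral (p * l) (bockstein h) f = g := by
  have hp : 0 < p := NeZero.pos p
  have hint : gridIntegral (p * l) (intBockstein h) f =
      ∑ a ∈ Finset.range l, intLift h (f ∘ kuhnPath (Pi.single 0 a) 1) := by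
    refine mul_left_cancel₀ (Nat.cast_ne_zero.mpr hp.ne' : (p : ℤ) ≠ 0) ?_
    rw [← sum_range_mul_of_periodic fun a _ => ?_, ← gridIntegral_coboundary_one
      (Nat.mul_pos hp hl) dependsOn_intLift isNormalized_intLift hside htop]
    · simp only [gridIntegral, Finset.mul_sum, ← mul_intBockstein, mul_left_comm (p : ℤ)]
    · have hstep (j : ℕ) (hj : j ≤ 1) : h (f (kuhnPath (Pi.single 0 (a + l)) 1 j)) =
          g + h (f (kuhnPath (Pi.single 0 a) 1 j)) := by
        rw [Pi.single_add, kuhnPath_add, hbot _ (by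
          rw [kuhnPath_apply_of_eq_last (by decide) _ hj]; simp)]
      simp [intLift, difference, hstep]
  calc gridIntegral (p * l) (bockstein h) f
      = ((gridIntegral (p * l) (intBockstein h) f : ℤ) : ZMod p) := by
        simp [gridIntegral, permSign_apply, bockstein]
    _ = ∑ a ∈ Finset.range l, (h (f (Pi.single 0 (a + 1))) - h (f (Pi.single 0 a))) := by
        rw [hint, Int.cast_sum]
        refine Finset.sum_congr rfl fun a _ => ?_
        have hsucc : kuhnPath (Pi.single 0 a) 1 1 = (Pi.single 0 (a + 1) : Fin 2 → ℕ) := by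
          funext c
          fin_cases c <;> simp [kuhnPath]
        rw [cast_intLift, difference, Function.comp_apply, Function.comp_apply, hsucc,
          kuhnPath_zero]
    _ = h (f (0 + Pi.single 0 l)) - h (f 0) := by
        rw [Finset.sum_range_sub fun a => h (f (Pi.single 0 a)), zero_add, Pi.single_zero]
    _ = g := by rw [hbot 0 rfl, add_sub_cancel_right]

theorem gridIntegral_difference_sample (hL : 0 < L) (κ : X → R) (P : (Fin 1 → ℝ) → X) :
    gridIntegral L (difference κ) (sample L P) = κ (P fun _ => 1) - κ (P fun _ => 0) := by
  rw [gridIntegral_difference hL]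
  simp [sample, hL.ne']

theorem gridIntegral_bockstein_sample {p : ℕ} [NeZero p] (hL : 0 < L) (hpL : p ∣ L)
    {h : X → ZMod p} {P : (Fin 2 → ℝ) → X} {g : ZMod p}
    (hside : ∀ t, t 0 = 0 → P (Function.update t 0 1) = P t)
    (htop : ∀ t s, t 1 = 1 → P (Function.update t 0 s) = P t)
    (hbot : ∀ t, t 1 = 0 → h (P (Function.update t 0 (t 0 + 1 / p))) = g + h (P t)) :
    gridIntegral L (bockstein h) (sample L P) = g := by
  have hL0 : (L : ℝ) ≠ 0 := Nat.cast_ne_zero.mpr hL.ne'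
  obtain ⟨l, rfl⟩ := hpL
  have hp0 : (p : ℝ) ≠ 0 := Nat.cast_ne_zero.mpr (NeZero.ne p)
  have hl : 0 < l := Nat.pos_of_mul_pos_left hL
  refine gridIntegral_bockstein hl (fun m hm => ?_) (fun m hm => ?_) fun m hm => ?_
  · rw [sample_add_single, hm, Nat.cast_zero, zero_div, zero_add, div_self hL0,
      hside _ (by simp [hm])]
    rfl
  · rw [sample_add_single, htop _ _ (by rw [hm, div_self hL0])]
    rfl
  · have hstep : (l : ℝ) / ((p * l : ℕ) : ℝ) = 1 / p := by
      have : (l : ℝ) ≠ 0 := Nat.cast_ne_zero.mpr hl.ne'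
      push_cast
      field_simp
    rw [sample_add_single, hstep]
    exact hbot _ (by simp [hm])

end Evaluation

section EquivariantLoop

variable {p : ℕ} {E : Type*} [NormedAddCommGroup E] [NormedSpace ℝ E]
  {ρ : Multiplicative (ZMod p) →* (E ≃ₗᵢ[ℝ] E)} {W : Submodule ℝ E}

theorem exists_mem_forall_notMem {K M ι : Type*} [Field K] [Infinite K] [AddCommGroup M]
    [Module K M] [Finite ι] {W : Submodule K M} {S : ι → Submodule K M} (h : ∀ i, ¬W ≤ S i) :
    ∃ w ∈ W, ∀ i, w ∉ S i := by
  by_contra! hcon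
  obtain ⟨i, hi⟩ := Subspace.exists_eq_top_of_iUnion_eq_univ
    (p := fun i => (S i).comap W.subtype) (eq_univ_of_forall fun w =>
      mem_iUnion.mpr (hcon w w.2))
  exact h i (Submodule.comap_subtype_eq_top.mp hi)

/-- The closed path which moves from `0` to `ρ i z / 2` and back to `0` along a straight line as
`y` runs through the interval of length one around the integer `i`. -/
noncomputable def zigzag (ρ : Multiplicative (ZMod p) →* (E ≃ₗᵢ[ℝ] E)) (z : E) (y : ℝ) : E :=
  (1 / 2 - |y - round y|) • ρ (.ofAdd (round y : ZMod p)) z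

theorem continuous_zigzag (z : E) : Continuous (zigzag ρ z) := by
  have hcoeff : Continuous fun y : ℝ => 1 / 2 - |y - round y| := by
    simp only [← UnitAddCircle.norm_eq]
    exact continuous_const.sub (continuous_norm.comp (AddCircle.continuous_mk' 1))
  refine continuous_iff_continuousAt.mpr fun y => ?_
  rcases (abs_sub_round y).lt_or_eq with hlt | heq
  · have hround : ∀ᶠ y' in nhds y, round y' = round y := by
      rw [abs_lt] at hlt
      filter_upwards [Ioo_mem_nhds (a := (round y : ℝ) - 1 / 2) (b := round y + 1 / 2)
        (by linarith) (by linarith)] with y' hy'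
      exact round_eq_iff.mpr (Ioo_subset_Ico_self hy')
    refine
      (hcoeff.smul (continuous_const (y := ρ (.ofAdd (round y : ZMod p)) z))).continuousAt.congr
        (hround.mono fun y' hy' => ?_)
    simp only [zigzag, hy', Pi.smul_apply']
  · have hzero : zigzag ρ z y = 0 := by simp [zigzag, heq]
    have hnorm (y' : ℝ) : ‖zigzag ρ z y'‖ = (1 / 2 - |y' - round y'|) * ‖z‖ := by
      rw [zigzag, norm_smul, LinearIsometryEquiv.norm_map,
        Real.norm_of_nonneg (sub_nonneg.mpr (abs_sub_round y'))]
    rw [ContinuousAt, hzero, tendsto_zero_iff_norm_tendsto_zero]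
    simp only [hnorm]
    have hlim : Filter.Tendsto (fun y' : ℝ => (1 / 2 - |y' - round y'|) * ‖z‖) _ _ :=
      (hcoeff.mul continuous_const).tendsto y
    simpa [heq] using hlim

theorem zigzag_add_one (z : E) (y : ℝ) : zigzag ρ z (y + 1) = ρ (.ofAdd 1) (zigzag ρ z y) := by
  simp only [zigzag, round_add_one, Int.cast_add, Int.cast_one, add_sub_add_right_eq_sub, map_smul]
  rw [add_comm, ofAdd_add, map_mul]
  rfl

theorem zigzag_add_natCast (z : E) (y : ℝ) : zigzag ρ z (y + p) = zigzag ρ z y := by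
  simp [zigzag, round_add_natCast]

/-- `lam` is a loop in `W \ 0` of period one which is equivariant for the action of `ℤ/p` through
rotations of the circle, and which contracts along straight lines in `W \ 0` to the point `q`. -/
structure IsEquivariantLoop (ρ : Multiplicative (ZMod p) →* (E ≃ₗᵢ[ℝ] E)) (W : Submodule ℝ E)
    (lam : ℝ → E) (q : E) : Prop where
  continuous : Continuous lam
  mem (θ : ℝ) : lam θ ∈ W
  base_mem : q ∈ W
  map_add_inv (θ : ℝ) : lam (θ + 1 / p) = ρ (.ofAdd 1) (lam θ)
  map_add_one (θ : ℝ) : lam (θ + 1) = lam θ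
  segment_ne_zero (θ s : ℝ) : (1 - s) • lam θ + s • q ≠ 0

theorem zigzag_add_zigzag_ne_zero {z z' : E} (hz : z ≠ 0)
    (hz' : ∀ g, z' ∉ Submodule.span ℝ {ρ g z}) (y : ℝ) :
    zigzag ρ z y + zigzag ρ z' (y - 1 / 2) ≠ 0 := by
  intro h
  set g : Multiplicative (ZMod p) := .ofAdd (round y : ZMod p)
  set g' : Multiplicative (ZMod p) := .ofAdd (round (y - 1 / 2) : ZMod p)
  have hβ : 1 / 2 - |y - 1 / 2 - round (y - 1 / 2)| = 0 := by
    by_contra hβ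
    refine hz' (g'⁻¹ * g) ((Submodule.smul_mem_iff _ hβ).mp (Submodule.mem_span_singleton.mpr
      ⟨-(1 / 2 - |y - round y|), (ρ g').injective ?_⟩))
    rw [map_smul, map_smul, map_mul, map_inv, LinearIsometryEquiv.coe_mul, Function.comp_apply,
      LinearIsometryEquiv.coe_inv, LinearIsometryEquiv.apply_symm_apply, neg_smul]
    exact neg_eq_of_add_eq_zero_right h
  have hα : 1 / 2 - |y - round y| = 0 := by
    have hzz : zigzag ρ z y = 0 := by rwa [zigzag.eq_1 ρ z', hβ, zero_smul, add_zero] at h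
    exact (smul_eq_zero.mp hzz).resolve_right ((map_ne_zero_iff _ (ρ g).injective).mpr hz)
  have hhalf {x : ℝ} (hx : 1 / 2 - |x - round x| = 0) : ∃ n : ℤ, x = n + 1 / 2 := by
    rcases eq_or_eq_neg_of_abs_eq (sub_eq_zero.mp hx).symm with hx | hx
    · exact ⟨round x, by linarith⟩
    · exact ⟨round x - 1, by push_cast; linarith⟩
  obtain ⟨n, hn⟩ := hhalf hα
  obtain ⟨m, hm⟩ := hhalf hβ
  have hparity : 2 * n = 2 * m + 1 := by exact_mod_cast (by linarith : (2 * n : ℝ) = 2 * m + 1)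
  omega

theorem exists_isEquivariantLoop [NeZero p] (hW : ∀ g, ∀ w ∈ W, ρ g w ∈ W)
    (h3 : 3 ≤ Module.finrank ℝ W) : ∃ lam q, IsEquivariantLoop ρ W lam q := by
  classical
  have hp : (p : ℝ) ≠ 0 := Nat.cast_ne_zero.mpr (NeZero.ne p)
  have hspan {s : Finset E} (hs : s.card ≤ 2) : ¬W ≤ Submodule.span ℝ s := fun h => by
    have := (Submodule.finrank_mono h).trans (finrank_span_finset_le_card s)
    omega
  obtain ⟨z, hzW, hz⟩ := W.ne_bot_iff.mp (by rintro rfl; simp at h3)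
  obtain ⟨z', hzW', hz'⟩ := exists_mem_forall_notMem (W := W)
    (S := fun g : Multiplicative (ZMod p) => Submodule.span ℝ {ρ g z})
    fun g => by simpa using hspan (s := {ρ g z}) (by simp)
  obtain ⟨q, hqW, hq⟩ := exists_mem_forall_notMem (W := W)
    (S := fun g : Multiplicative (ZMod p) × Multiplicative (ZMod p) =>
      Submodule.span ℝ {ρ g.1 z, ρ g.2 z'})
    fun g => by simpa using hspan (s := {ρ g.1 z, ρ g.2 z'}) Finset.card_le_two
  refine ⟨fun θ => zigzag ρ z (p * θ) + zigzag ρ z' (p * θ - 1 / 2), q, ?_, fun θ => ?_, hqW,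
    fun θ => ?_, fun θ => ?_, fun θ s h => ?_⟩
  · exact ((continuous_zigzag z).comp (by fun_prop)).add ((continuous_zigzag z').comp (by fun_prop))
  · exact W.add_mem (W.smul_mem _ (hW _ z hzW)) (W.smul_mem _ (hW _ z' hzW'))
  · have hshift : (p : ℝ) * (θ + 1 / p) = p * θ + 1 := by field_simp
    rw [hshift, add_sub_right_comm, zigzag_add_one, zigzag_add_one, map_add]
  · rw [mul_add, mul_one, add_sub_right_comm, zigzag_add_natCast, zigzag_add_natCast]
  · by_cases hs : s = 0
    · exact zigzag_add_zigzag_ne_zero hz hz' (p * θ) (by simpa [hs] using h)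
    · refine hq (.ofAdd (round (p * θ) : ZMod p), .ofAdd (round (p * θ - 1 / 2) : ZMod p))
        ((Submodule.smul_mem_iff _ hs).mp ?_)
      rw [← neg_eq_of_add_eq_zero_right h]
      exact Submodule.neg_mem _ (Submodule.smul_mem _ _ (Submodule.mem_span_pair.mpr ⟨_, _, rfl⟩))

end EquivariantLoop

section SphereMaps

variable {E : Type*} [NormedAddCommGroup E] [NormedSpace ℝ E] {Z : Type*} {Φ : Z → E}

/-- The radial projection to the unit sphere of a map to `E \ 0`. -/
noncomputable def sphereMap (Φ : Z → E) (hΦ : ∀ z, Φ z ≠ 0) (z : Z) :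
    Metric.sphere (0 : E) 1 :=
  ⟨NormedSpace.normalize (Φ z),
    mem_sphere_zero_iff_norm.mpr (NormedSpace.norm_normalize_eq_one_iff.mpr (hΦ z))⟩

theorem coe_sphereMap (hΦ : ∀ z, Φ z ≠ 0) (z : Z) :
    (sphereMap Φ hΦ z : E) = ‖Φ z‖⁻¹ • Φ z := rfl

theorem continuous_sphereMap [TopologicalSpace Z] (hΦ : ∀ z, Φ z ≠ 0) (hcont : Continuous Φ) :
    Continuous (sphereMap Φ hΦ) :=
  ((hcont.norm.inv₀ fun z => norm_ne_zero_iff.mpr (hΦ z)).smul hcont).subtype_mk _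

theorem inner_sphereMap_pos_iff {F : Type*} [NormedAddCommGroup F] [InnerProductSpace ℝ F]
    {Φ : Z → F} (hΦ : ∀ z, Φ z ≠ 0) (e : F) (z : Z) :
    0 < inner ℝ e (sphereMap Φ hΦ z : F) ↔ 0 < inner ℝ e (Φ z) := by
  rw [coe_sphereMap, real_inner_smul_right,
    mul_pos_iff_of_pos_left (inv_pos.mpr (norm_pos_iff.mpr (hΦ z)))]

theorem sphereMap_congr (hΦ : ∀ z, Φ z ≠ 0) {y z : Z} (h : Φ y = Φ z) :
    sphereMap Φ hΦ y = sphereMap Φ hΦ z :=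
  Subtype.ext (congrArg NormedSpace.normalize h)

theorem sphereMap_mem_iff (hΦ : ∀ z, Φ z ≠ 0) (V : Submodule ℝ E) (z : Z) :
    (sphereMap Φ hΦ z : E) ∈ V ↔ Φ z ∈ V := by
  rw [coe_sphereMap, V.smul_mem_iff (inv_ne_zero (norm_ne_zero_iff.mpr (hΦ z)))]

theorem sphereAct_sphereMap {G : Type*} [Monoid G] {n : ℕ}
    {ρ : G →* (EuclideanSpace ℝ (Fin (n + 1)) ≃ₗᵢ[ℝ] EuclideanSpace ℝ (Fin (n + 1)))}
    {Φ : Z → EuclideanSpace ℝ (Fin (n + 1))} (hΦ : ∀ z, Φ z ≠ 0) {g : G}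
    {y z : Z} (h : Φ y = ρ g (Φ z)) :
    sphereMap Φ hΦ y = sphereAct ρ g (sphereMap Φ hΦ z) :=
  Subtype.ext (by simp [sphereAct, coe_sphereMap, h])

end SphereMaps

section SuspensionCubes

variable {E : Type*} [NormedAddCommGroup E] [InnerProductSpace ℝ E] {r d : ℕ}

/-- The affine map of the cube `[0, 1]^r` onto `[-1, 1]^r`. -/
def centered (t : Fin r → ℝ) (i : Fin r) : ℝ := 2 * t i - 1

theorem continuous_centered : Continuous (centered (r := r)) := by
  unfold centered
  fun_prop

theorem one_le_norm_centered {t : Fin r → ℝ} {i : Fin r} (h : t i = 0 ∨ t i = 1) :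
    1 ≤ ‖centered t‖ := by
  refine le_trans ?_ (norm_le_pi_norm (centered t) i)
  rcases h with h | h <;> norm_num [centered, h]

theorem norm_centered_le {t : Fin r → ℝ} {δ : ℝ} (hδ : 0 ≤ δ) (h : ∀ i, |t i - 1 / 2| ≤ δ / 2) :
    ‖centered t‖ ≤ δ := by
  refine (pi_norm_le_iff_of_nonneg hδ).mpr fun i => ?_
  have := abs_le.mp (h i)
  rw [Real.norm_eq_abs, abs_le, centered]
  constructor <;> linarith

variable {V : Submodule ℝ E} (e : OrthonormalBasis (Fin r) ℝ V) {F : (Fin d → ℝ) → E}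

/-- The `r`-fold suspension of the cube `F` in the orthogonal complement of `V`: the join of `F`
with the unit sphere of `V`, where the first `r` coordinates of the cube are the coordinates of
`V`. -/
noncomputable def suspensionCube (F : (Fin d → ℝ) → E) (t : Fin (r + d) → ℝ) : E :=
  e.repr.symm (WithLp.toLp 2 (centered (t ∘ Fin.castAdd d))) +
    max 0 (1 - ‖centered (t ∘ Fin.castAdd d)‖) • F (t ∘ Fin.natAdd r)

theorem inner_suspensionCube (hF : ∀ t, F t ∈ Vᗮ) (t : Fin (r + d) → ℝ) (i : Fin r) :
    inner ℝ (e i : E) (suspensionCube e F t) = 2 * t (Fin.castAdd d i) - 1 := by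
  rw [suspensionCube, inner_add_right, real_inner_smul_right, hF _ _ (e i).2, mul_zero, add_zero,
    ← Submodule.coe_inner, ← e.repr_apply_apply]
  simp [centered]

theorem suspensionCube_ne_zero (hF : ∀ t, F t ∈ Vᗮ) (hF0 : ∀ t, F t ≠ 0) (t : Fin (r + d) → ℝ) :
    suspensionCube e F t ≠ 0 := by
  intro h
  have hs : centered (t ∘ Fin.castAdd d) = 0 := funext fun i => by
    simpa [h, centered] using (inner_suspensionCube e hF t i).symm
  simp [suspensionCube, hs, hF0] at h

theorem continuous_suspensionCube (hF : Continuous F) : Continuous (suspensionCube e F) := by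
  have hs : Continuous fun t : Fin (r + d) → ℝ => centered (t ∘ Fin.castAdd d) :=
    continuous_centered.comp (by fun_prop)
  unfold suspensionCube
  fun_prop

theorem suspensionCube_mem_iff (hF : ∀ t, F t ∈ Vᗮ) (hF0 : ∀ t, F t ≠ 0) {t : Fin (r + d) → ℝ} :
    suspensionCube e F t ∈ V ↔ 1 ≤ ‖centered (t ∘ Fin.castAdd d)‖ := by
  rw [suspensionCube, V.add_mem_iff_right (SetLike.coe_mem _)]
  by_cases h : 1 ≤ ‖centered (t ∘ Fin.castAdd d)‖
  · simp [h]
  · have hpos : max 0 (1 - ‖centered (t ∘ Fin.castAdd d)‖) ≠ 0 :=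
      (lt_max_of_lt_right (by linarith)).ne'
    rw [V.smul_mem_iff hpos, iff_false_right h]
    refine fun hV => hF0 (t ∘ Fin.natAdd r) ((Submodule.mem_bot ℝ).mp ?_)
    rw [← V.inf_orthogonal_eq_bot]
    exact ⟨hV, hF _⟩

theorem suspensionCube_eq_apply (f : E ≃ₗᵢ[ℝ] E) (hf : ∀ v ∈ V, f v = v) {s t : Fin (r + d) → ℝ}
    (hbase : s ∘ Fin.castAdd d = t ∘ Fin.castAdd d)
    (hfiber : F (s ∘ Fin.natAdd r) = f (F (t ∘ Fin.natAdd r))) :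
    suspensionCube e F s = f (suspensionCube e F t) := by
  simp [suspensionCube, hbase, hfiber, hf]

theorem suspensionCube_update_natAdd_of_boundary {t : Fin (r + d) → ℝ} {i : Fin r} (j : Fin d)
    (s : ℝ) (hi : t (Fin.castAdd d i) = 0 ∨ t (Fin.castAdd d i) = 1) :
    suspensionCube e F (Function.update t (Fin.natAdd r j) s) = suspensionCube e F t := by
  have hbase : Function.update t (Fin.natAdd r j) s ∘ Fin.castAdd d = t ∘ Fin.castAdd d :=
    Function.update_comp_eq_of_forall_ne _ _ fun i => castAdd_ne_natAdd i j
  have hnorm : max 0 (1 - ‖centered (t ∘ Fin.castAdd d)‖) = 0 :=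
    max_eq_left (sub_nonpos.mpr (one_le_norm_centered hi))
  simp [suspensionCube, hbase, hnorm]

end SuspensionCubes

section OrbitCycles

variable {G R E : Type*} [CommRing R] [Monoid G] [NormedAddCommGroup E] [InnerProductSpace ℝ E]
  {N r d q : ℕ}

theorem IsNegligibleFace.sphereMap {n : ℕ}
    {ρ : G →* (EuclideanSpace ℝ (Fin (n + 1)) ≃ₗᵢ[ℝ] EuclideanSpace ℝ (Fin (n + 1)))}
    {Φ : (Fin N → ℝ) → EuclideanSpace ℝ (Fin (n + 1))} {j : Fin N} {c : ℝ}
    (h : IsNegligibleFace R (fun g => ρ g) q Φ j c) (hΦ : ∀ t, Φ t ≠ 0) :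
    IsNegligibleFace R (sphereAct ρ) q (sphereMap Φ hΦ) j c := by
  obtain ⟨i, hij, hconst | ⟨hq, g, hg⟩⟩ := h
  · exact ⟨i, hij, .inl fun t s ht => sphereMap_congr hΦ (hconst t s ht)⟩
  · exact ⟨i, hij, .inr ⟨hq, g, fun t ht => sphereAct_sphereMap hΦ (hg t ht)⟩⟩

theorem IsOrbitCycle.sphereMap {n : ℕ}
    {ρ : G →* (EuclideanSpace ℝ (Fin (n + 1)) ≃ₗᵢ[ℝ] EuclideanSpace ℝ (Fin (n + 1)))}
    {Φ : (Fin N → ℝ) → EuclideanSpace ℝ (Fin (n + 1))}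
    (h : IsOrbitCycle R (fun g => ρ g) q Φ) (hΦ : ∀ t, Φ t ≠ 0) :
    IsOrbitCycle R (sphereAct ρ) q (sphereMap Φ hΦ) := fun j =>
  (h j).imp (fun ⟨g, hg⟩ => ⟨g, fun t ht => sphereAct_sphereMap hΦ (hg t ht)⟩)
    fun ⟨h₀, h₁⟩ => ⟨h₀.sphereMap hΦ, h₁.sphereMap hΦ⟩

variable {ρ : G →* (E ≃ₗᵢ[ℝ] E)} {V : Submodule ℝ E} (e : OrthonormalBasis (Fin r) ℝ V)
  {F : (Fin d → ℝ) → E}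

theorem IsNegligibleFace.suspensionCube (hρ : ∀ g, ∀ v ∈ V, ρ g v = v) {j : Fin d} {c : ℝ}
    (h : IsNegligibleFace R (fun g => ρ g) q F j c) :
    IsNegligibleFace R (fun g => ρ g) q (suspensionCube e F) (Fin.natAdd r j) c := by
  have hbase (t : Fin (r + d) → ℝ) (i : Fin d) (s : ℝ) :
      Function.update t (Fin.natAdd r i) s ∘ Fin.castAdd d = t ∘ Fin.castAdd d :=
    Function.update_comp_eq_of_forall_ne _ _ fun l => castAdd_ne_natAdd l i
  obtain ⟨i, hij, hconst | ⟨hq, g, hg⟩⟩ := h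
  · refine ⟨Fin.natAdd r i, by simpa using hij, .inl fun t s ht => ?_⟩
    refine suspensionCube_eq_apply e 1 (fun _ _ => rfl) (hbase t i s) ?_
    rw [update_natAdd_comp_natAdd]
    exact hconst (t ∘ Fin.natAdd r) s ht
  · refine ⟨Fin.natAdd r i, by simpa using hij, .inr ⟨hq, g, fun t ht => ?_⟩⟩
    refine suspensionCube_eq_apply e (ρ g) (hρ g) (hbase t i _) ?_
    rw [update_natAdd_comp_natAdd]
    exact hg (t ∘ Fin.natAdd r) ht

theorem IsOrbitCycle.suspensionCube [NeZero d] (hρ : ∀ g, ∀ v ∈ V, ρ g v = v)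
    (h : IsOrbitCycle R (fun g => ρ g) q F) :
    IsOrbitCycle R (fun g => ρ g) q (suspensionCube e F) := by
  refine Fin.addCases (fun i => .inr ⟨?_, ?_⟩) fun j => ?_
  · exact ⟨Fin.natAdd r 0, (castAdd_ne_natAdd i 0).symm, .inl fun t s ht =>
      suspensionCube_update_natAdd_of_boundary e 0 s (.inl ht)⟩
  · exact ⟨Fin.natAdd r 0, (castAdd_ne_natAdd i 0).symm, .inl fun t s ht =>
      suspensionCube_update_natAdd_of_boundary e 0 s (.inr ht)⟩
  · refine (h j).imp (fun ⟨g, hg⟩ => ⟨g, fun t ht => ?_⟩) fun ⟨h₀, h₁⟩ =>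
      ⟨h₀.suspensionCube e hρ, h₁.suspensionCube e hρ⟩
    refine suspensionCube_eq_apply e (ρ g) (hρ g)
      (Function.update_comp_eq_of_forall_ne _ _ fun l => castAdd_ne_natAdd l j) ?_
    rw [update_natAdd_comp_natAdd]
    exact hg (t ∘ Fin.natAdd r) ht

end OrbitCycles

section SphereAction

variable {G : Type*} [Monoid G] {n : ℕ}
  (ρ : G →* (EuclideanSpace ℝ (Fin (n + 1)) ≃ₗᵢ[ℝ] EuclideanSpace ℝ (Fin (n + 1))))

theorem sphereAct_one (x : Sph n) : sphereAct ρ 1 x = x := Subtype.ext (by simp [sphereAct])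

theorem sphereAct_mul (g h : G) (x : Sph n) :
    sphereAct ρ (g * h) x = sphereAct ρ g (sphereAct ρ h x) :=
  Subtype.ext (by simp [sphereAct])

theorem isometry_sphereAct (g : G) : Isometry (sphereAct ρ g) :=
  Isometry.of_dist_eq fun x y => (ρ g).dist_map x y

end SphereAction

section Coordinates

theorem norm_centered_midpoint_le {r L : ℕ} (hL : 0 < L) :
    ‖centered fun _ : Fin r => ((L / 2 + 1 : ℕ) : ℝ) / L‖ ≤ 2 / L := by
  have hL' : (0 : ℝ) < L := Nat.cast_pos.mpr hL
  have hdiv : (L : ℝ) = 2 * (L / 2 : ℕ) + (L % 2 : ℕ) := mod_cast (Nat.div_add_mod L 2).symm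
  have hmod : ((L % 2 : ℕ) : ℝ) ≤ 1 := mod_cast Nat.le_of_lt_succ (Nat.mod_lt L two_pos)
  refine norm_centered_le (by positivity) fun i => ?_
  rw [abs_le]
  push_cast
  constructor <;> field_simp <;> linarith

variable {E : Type*} [NormedAddCommGroup E] [InnerProductSpace ℝ E] {V : Submodule ℝ E}
  {ι : Type*} [Fintype ι] (e : OrthonormalBasis ι ℝ V)

/-- The `i`-th coordinate of the orthogonal projection to `V` of a point of the unit sphere. -/
noncomputable def coordinate (i : ι) (x : Metric.sphere (0 : E) 1) : ℝ := inner ℝ (e i : E) (x : E)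

theorem lipschitzWith_coordinate (i : ι) : LipschitzWith 1 (coordinate e i) := by
  refine LipschitzWith.mk_one fun x y => ?_
  rw [Real.dist_eq, coordinate, coordinate, ← inner_sub_right, Subtype.dist_eq, dist_eq_norm]
  simpa [Submodule.norm_coe, e.norm_eq_one] using abs_real_inner_le_norm (e i : E) ((x : E) - y)

theorem mem_orthogonal_of_forall_inner_eq_zero {x : E} (h : ∀ i, inner ℝ (e i : E) x = 0) :
    x ∈ Vᗮ := fun v hv => by
  change inner ℝ ((⟨v, hv⟩ : V) : E) x = 0
  rw [← e.sum_repr ⟨v, hv⟩, Submodule.coe_sum, sum_inner]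
  simp [real_inner_smul_left, h]

theorem coordinate_sphereAct {G : Type*} [Monoid G] {n : ℕ}
    {ρ : G →* (EuclideanSpace ℝ (Fin (n + 1)) ≃ₗᵢ[ℝ] EuclideanSpace ℝ (Fin (n + 1)))}
    {V : Submodule ℝ (EuclideanSpace ℝ (Fin (n + 1)))} (e : OrthonormalBasis ι ℝ V)
    (hρ : ∀ g, ∀ v ∈ V, ρ g v = v) (i : ι) (g : G) (x : Sph n) :
    coordinate e i (sphereAct ρ g x) = coordinate e i x := by
  rw [coordinate, sphereAct, ← hρ g (e i) (e i).2, LinearIsometryEquiv.inner_map_map]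
  rfl

theorem gridIntegral_suspension_sample {R : Type*} [CommRing R] {r d L : ℕ} (hL : 0 < L)
    (e : OrthonormalBasis (Fin r) ℝ V) {F : (Fin d → ℝ) → E} (hF : ∀ t, F t ∈ Vᗮ)
    (hΦ : ∀ t, suspensionCube e F t ≠ 0) (τ : (ℕ → Metric.sphere (0 : E) 1) → R) :
    gridIntegral L (suspension (coordinate e) τ) (sample L (sphereMap (suspensionCube e F) hΦ)) =
      gridIntegral L τ (sample L fun t => sphereMap (suspensionCube e F) hΦ
        (Fin.append (fun _ => ((L / 2 + 1 : ℕ) : ℝ) / L) t)) := by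
  have hL' : (0 : ℝ) < L := Nat.cast_pos.mpr hL
  rw [gridIntegral_suspension hL fun x _ _ i j => ?_]
  · refine congrArg (gridIntegral L τ) (funext fun m => ?_)
    refine congrArg (sphereMap (suspensionCube e F) hΦ) (funext fun c => ?_)
    refine Fin.addCases (fun i => ?_) (fun i => ?_) c <;> simp
  · rw [coordinate, sample, inner_sphereMap_pos_iff, inner_suspensionCube e hF, sub_pos,
      ← mul_div_assoc, one_lt_div hL']
    exact_mod_cast Iff.rfl

end Coordinates

section SemiFree

variable {p n r d : ℕ}
  {ρ : Multiplicative (ZMod p) →*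
    (EuclideanSpace ℝ (Fin (n + 1)) ≃ₗᵢ[ℝ] EuclideanSpace ℝ (Fin (n + 1)))}
  {V : Submodule ℝ (EuclideanSpace ℝ (Fin (n + 1)))} (e : OrthonormalBasis (Fin r) ℝ V)

theorem IsOrbitCoordinate.apply_suspensionCube {h : Sph n → ZMod p}
    (hh : IsOrbitCoordinate (sphereAct ρ) h) (hρ : ∀ g, ∀ v ∈ V, ρ g v = v)
    (hfree : ∀ g ≠ 1, ∀ x, ρ g x = x → x ∈ V)
    {F : (Fin d → ℝ) → EuclideanSpace ℝ (Fin (n + 1))} (hF : ∀ t, F t ∈ Vᗮ) (hF0 : ∀ t, F t ≠ 0)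
    {c : Fin r → ℝ} (hc : ‖centered c‖ < 1) {g : Multiplicative (ZMod p)} {s t : Fin d → ℝ}
    (hst : F s = ρ g (F t)) :
    h (sphereMap (suspensionCube e F) (suspensionCube_ne_zero e hF hF0) (Fin.append c s)) =
      g.toAdd + h (sphereMap (suspensionCube e F) (suspensionCube_ne_zero e hF hF0)
        (Fin.append c t)) := by
  have hbase (u : Fin d → ℝ) : Fin.append c u ∘ Fin.castAdd d = c := by ext; simp
  have hfiber (u : Fin d → ℝ) : Fin.append c u ∘ Fin.natAdd r = u := by ext; simp
  rw [sphereAct_sphereMap (ρ := ρ) (g := g) _ (suspensionCube_eq_apply e (ρ g) (hρ g) _ _)]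
  · refine hh _ (fun g hg => by_contra fun hne => hc.not_ge ?_) g
    have hV := hfree g hne _ (congrArg Subtype.val hg)
    rwa [sphereMap_mem_iff, suspensionCube_mem_iff e hF hF0, hbase] at hV
  · rw [hbase, hbase]
  · rwa [hfiber, hfiber]

theorem exists_isInvariantCocycle_suspension [NeZero p] (hρ : ∀ g, ∀ v ∈ V, ρ g v = v)
    (hfree : ∀ g ≠ 1, ∀ x, ρ g x = x → x ∈ V) {h : Sph n → ZMod p}
    (hh : IsOrbitCoordinate (sphereAct ρ) h) :
    ∃ ε > 0, IsInvariantCocycle (sphereAct ρ) ε (r + 1) (suspension (coordinate e) (difference h)) ∧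
      IsInvariantCocycle (sphereAct ρ) ε (r + 2) (suspension (coordinate e) (bockstein h)) := by
  obtain ⟨ε, hε, hdist⟩ := exists_pos_forall_lt_dist (act := sphereAct ρ)
    (A := coordinate e) (fun g => (isometry_sphereAct ρ g).continuous)
    (fun i => (lipschitzWith_coordinate e i).continuous) fun x hx g hg hgx => by
      have hV := hfree g hg x (congrArg Subtype.val hgx)
      have hbot : (x : EuclideanSpace ℝ (Fin (n + 1))) ∈ V ⊓ Vᗮ :=
        ⟨hV, mem_orthogonal_of_forall_inner_eq_zero e hx⟩
      rw [V.inf_orthogonal_eq_bot, Submodule.mem_bot] at hbot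
      exact ne_zero_of_mem_unit_sphere x hbot
  have hcocycle {d : ℕ} {τ : (ℕ → Sph n) → ZMod p} (hdep : DependsOn τ (Iic d))
      (hnorm : IsNormalized d τ) (hclosed : ∀ x, coboundary d τ x = 0)
      (hτ : ∀ x y c, (∀ j, h (y j) = c + h (x j)) → τ x = τ y) :
      IsInvariantCocycle (sphereAct ρ) ε (r + d) (suspension (coordinate e) τ) :=
    (hh.isInvariantCocycleOn (sphereAct_mul ρ) (isometry_sphereAct ρ) hdist hdep hnorm hclosed
      hτ).suspension (lipschitzWith_coordinate e) (coordinate_sphereAct e hρ)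
  exact ⟨ε, hε,
    hcocycle (dependsOn_difference h) (isNormalized_difference h) (coboundary_difference h)
      fun x y c hxy => by simp [difference, hxy],
    hcocycle dependsOn_bockstein isNormalized_bockstein coboundary_bockstein
      fun x y c hxy => bockstein_eq_of_forall_eq_add hxy⟩

end SemiFree

section EquivariantLoopCubes

variable {p : ℕ} {E : Type*} [NormedAddCommGroup E] [NormedSpace ℝ E]
  {ρ : Multiplicative (ZMod p) →* (E ≃ₗᵢ[ℝ] E)} {W : Submodule ℝ E} {lam : ℝ → E} {q : E}

/-- The arc of `lam` from a point to its translate by the generator, as a `1`-cube. -/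
noncomputable def arcCube (p : ℕ) (lam : ℝ → E) (t : Fin 1 → ℝ) : E := lam (t 0 / p)

/-- The cone over the closed path `lam` with apex `q`, as a `2`-cube. -/
def coneCube (lam : ℝ → E) (q : E) (t : Fin 2 → ℝ) : E := (1 - t 1) • lam (t 0) + t 1 • q

theorem coneCube_update_of_eq_one {t : Fin 2 → ℝ} (ht : t 1 = 1) (s : ℝ) :
    coneCube lam q (Function.update t 0 s) = coneCube lam q t := by
  simp [coneCube, ht]

namespace IsEquivariantLoop

variable (hlam : IsEquivariantLoop ρ W lam q)

include hlam

theorem continuous_arcCube : Continuous (arcCube p lam) :=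
  hlam.continuous.comp (by fun_prop)

theorem continuous_coneCube : Continuous (coneCube lam q) := by
  have := hlam.continuous
  unfold coneCube
  fun_prop

theorem coneCube_mem (t : Fin 2 → ℝ) : coneCube lam q t ∈ W :=
  add_mem (W.smul_mem _ (hlam.mem _)) (W.smul_mem _ hlam.base_mem)

theorem arcCube_ne_zero (t : Fin 1 → ℝ) : arcCube p lam t ≠ 0 := by
  simpa [arcCube] using hlam.segment_ne_zero (t 0 / p) 0

theorem arcCube_one : arcCube p lam (fun _ => 1) = ρ (.ofAdd 1) (arcCube p lam fun _ => 0) := by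
  simpa [arcCube] using hlam.map_add_inv 0

theorem coneCube_update_one {t : Fin 2 → ℝ} (ht : t 0 = 0) :
    coneCube lam q (Function.update t 0 1) = coneCube lam q t := by
  simpa [coneCube, ht] using congrArg (fun v => (1 - t 1) • v) (hlam.map_add_one 0)

theorem coneCube_update_add_inv {t : Fin 2 → ℝ} (ht : t 1 = 0) :
    coneCube lam q (Function.update t 0 (t 0 + 1 / p)) = ρ (.ofAdd 1) (coneCube lam q t) := by
  simpa [coneCube, ht] using hlam.map_add_inv (t 0)

theorem isOrbitCycle_arcCube : IsOrbitCycle (ZMod p) (fun g => ρ g) p (arcCube p lam) := fun j => by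
  rw [Subsingleton.elim j 0]
  refine .inl ⟨.ofAdd 1, fun t ht => ?_⟩
  simpa [arcCube, ht] using hlam.map_add_inv 0

theorem isOrbitCycle_coneCube : IsOrbitCycle (ZMod p) (fun g => ρ g) p (coneCube lam q) :=
  Fin.forall_fin_two.mpr
    ⟨.inl ⟨1, fun t ht => by simpa using hlam.coneCube_update_one ht⟩,
      .inr ⟨⟨0, zero_ne_one, .inr ⟨CharP.cast_eq_zero _ p, _, fun t ht =>
          hlam.coneCube_update_add_inv ht⟩⟩,
        ⟨0, zero_ne_one, .inl fun t s ht => coneCube_update_of_eq_one ht s⟩⟩⟩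

end IsEquivariantLoop

end EquivariantLoopCubes

section LowerBound

variable {p n r : ℕ}
  {ρ : Multiplicative (ZMod p) →*
    (EuclideanSpace ℝ (Fin (n + 1)) ≃ₗᵢ[ℝ] EuclideanSpace ℝ (Fin (n + 1)))}
  {V : Submodule ℝ (EuclideanSpace ℝ (Fin (n + 1)))} {lam : ℝ → EuclideanSpace ℝ (Fin (n + 1))}
  {q : EuclideanSpace ℝ (Fin (n + 1))} {h : Sph n → ZMod p} {L : ℕ}

theorem IsEquivariantLoop.gridIntegral_suspension_arcCube (hlam : IsEquivariantLoop ρ Vᗮ lam q)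
    (e : OrthonormalBasis (Fin r) ℝ V) (hρ : ∀ g, ∀ v ∈ V, ρ g v = v)
    (hfree : ∀ g ≠ 1, ∀ x, ρ g x = x → x ∈ V) (hh : IsOrbitCoordinate (sphereAct ρ) h)
    (hL : 2 < L) (h0 : ∀ t, suspensionCube e (arcCube p lam) t ≠ 0) :
    gridIntegral L (suspension (coordinate e) (difference h))
      (sample L (sphereMap (suspensionCube e (arcCube p lam)) h0)) = 1 := by
  have hmem (t : Fin 1 → ℝ) : arcCube p lam t ∈ Vᗮ := hlam.mem _
  have hmid := (norm_centered_midpoint_le (r := r) (two_pos.trans hL)).trans_lt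
    ((div_lt_one (by positivity)).mpr (by exact_mod_cast hL : (2 : ℝ) < L))
  rw [gridIntegral_suspension_sample (two_pos.trans hL) e hmem,
    gridIntegral_difference_sample (two_pos.trans hL),
    hh.apply_suspensionCube e hρ hfree hmem hlam.arcCube_ne_zero hmid (t := fun _ => 0)
      (g := .ofAdd 1) hlam.arcCube_one]
  simp

theorem IsEquivariantLoop.gridIntegral_suspension_coneCube [NeZero p]
    (hlam : IsEquivariantLoop ρ Vᗮ lam q)
    (e : OrthonormalBasis (Fin r) ℝ V) (hρ : ∀ g, ∀ v ∈ V, ρ g v = v)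
    (hfree : ∀ g ≠ 1, ∀ x, ρ g x = x → x ∈ V) (hh : IsOrbitCoordinate (sphereAct ρ) h)
    (hL : 2 < L) (hpL : p ∣ L) (h0 : ∀ t, suspensionCube e (coneCube lam q) t ≠ 0) :
    gridIntegral L (suspension (coordinate e) (bockstein h))
      (sample L (sphereMap (suspensionCube e (coneCube lam q)) h0)) = 1 := by
  have hmid := (norm_centered_midpoint_le (r := r) (two_pos.trans hL)).trans_lt
    ((div_lt_one (by positivity)).mpr (by exact_mod_cast hL : (2 : ℝ) < L))
  have hslice {s t : Fin 2 → ℝ} (hst : coneCube lam q s = coneCube lam q t) (c : Fin r → ℝ) :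
      sphereMap (suspensionCube e (coneCube lam q)) h0 (Fin.append c s) =
        sphereMap (suspensionCube e (coneCube lam q)) h0 (Fin.append c t) := by
    refine sphereMap_congr h0 (suspensionCube_eq_apply e 1 (fun _ _ => rfl) ?_ ?_)
    · ext; simp
    · simpa [Function.comp_def] using hst
  rw [gridIntegral_suspension_sample (two_pos.trans hL) e hlam.coneCube_mem]
  exact gridIntegral_bockstein_sample (two_pos.trans hL) hpL
    (fun t ht => hslice (hlam.coneCube_update_one ht) _)
    (fun t s ht => hslice (coneCube_update_of_eq_one ht s) _)
    fun t ht => hh.apply_suspensionCube e hρ hfree hlam.coneCube_mem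
      (fun t => hlam.segment_ne_zero (t 0) (t 1)) hmid (hlam.coneCube_update_add_inv ht)

theorem apply_mem_orthogonal {G E : Type*} [Group G] [NormedAddCommGroup E] [InnerProductSpace ℝ E]
    {ρ : G →* (E ≃ₗᵢ[ℝ] E)} {V : Submodule ℝ E} (hρ : ∀ g, ∀ v ∈ V, ρ g v = v) (g : G) {w : E}
    (hw : w ∈ Vᗮ) : ρ g w ∈ Vᗮ := fun v hv => by
  rw [← hρ g v hv, LinearIsometryEquiv.inner_map_map]
  exact hw v hv

theorem not_hasDeformationCover_of_three_le_finrank [NeZero p] (hp : 1 < p)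
    (hρ : ∀ g, ∀ v ∈ V, ρ g v = v)
    (hfree : ∀ g ≠ 1, ∀ x, ρ g x = x → x ∈ V) (h3 : 3 ≤ Module.finrank ℝ Vᗮ) :
    ¬HasDeformationCover (sphereAct ρ) := fun hX => by
  have : Fact (1 < p) := ⟨hp⟩
  obtain ⟨lam, q, hlam⟩ := exists_isEquivariantLoop (ρ := ρ)
    (fun g w hw => apply_mem_orthogonal hρ g hw) h3
  obtain ⟨h, hh⟩ := exists_isOrbitCoordinate (sphereAct_one ρ) (sphereAct_mul ρ)
  let e := stdOrthonormalBasis ℝ V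
  obtain ⟨ε, hε, hu, hv⟩ := exists_isInvariantCocycle_suspension e hρ hfree hh
  have hP0 := suspensionCube_ne_zero e (F := arcCube p lam) (fun _ => hlam.mem _)
    hlam.arcCube_ne_zero
  have hQ0 := suspensionCube_ne_zero e hlam.coneCube_mem
    fun t => hlam.segment_ne_zero (t 0) (t 1)
  have hprod := hX.eventually_gridIntegral_mul_eq_zero (sphereAct_one ρ) hε hu hv (Nat.succ_pos _)
    (Nat.lt_succ_self _)
    (continuous_sphereMap hP0 (continuous_suspensionCube e hlam.continuous_arcCube))
    (continuous_sphereMap hQ0 (continuous_suspensionCube e hlam.continuous_coneCube))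
    ((hlam.isOrbitCycle_arcCube.suspensionCube e hρ).sphereMap hP0)
    ((hlam.isOrbitCycle_coneCube.suspensionCube e hρ).sphereMap hQ0)
  obtain ⟨L₀, hL₀⟩ := Filter.eventually_atTop.mp hprod
  have hL : L₀ + 3 ≤ p * (L₀ + 3) := Nat.le_mul_of_pos_left _ (NeZero.pos p)
  have hzero := hL₀ (p * (L₀ + 3)) (by omega) (dvd_mul_right _ _)
  rw [hlam.gridIntegral_suspension_arcCube e hρ hfree hh (by omega),
    hlam.gridIntegral_suspension_coneCube e hρ hfree hh (by omega) (dvd_mul_right _ _)] at hzero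
  exact one_ne_zero ((mul_one (1 : ZMod p)).symm.trans hzero)

end LowerBound

section FixedSphere

theorem isInvariantCocycleOn_heaviside {G X R : Type*} [PseudoMetricSpace X] [CommRing R]
    {act : G → X → X} {ε : ℝ} {S : Set X} {A : X → ℝ} (hA : LipschitzWith 1 A)
    (hAact : ∀ g x, A (act g x) = A x) (hS : ∀ x ∈ S, ε < |A x|) :
    IsInvariantCocycleOn act ε S 0 fun x => heaviside R (A (x 0)) where
  dependsOn x y hxy := by simp only [hxy 0 self_mem_Iic]
  isNormalized x hx := by simp at hx
  coboundary_eq_zero x hx hxS := by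
    have hdist := (hA.dist_le_mul (x 1) (x 0)).trans (by simpa using hx 1 0)
    rw [Real.dist_eq, abs_le] at hdist
    have hsign : 0 < A (x 1) ↔ 0 < A (x 0) := by
      have := lt_abs.mp (hS _ (hxS 0))
      have := lt_abs.mp (hS _ (hxS 1))
      grind
    have hheaviside : heaviside R (A (x 1)) = heaviside R (A (x 0)) := if_congr hsign rfl rfl
    simp [coboundary, Finset.sum_range_succ, skip, hheaviside]
  apply_eq x y _ _ _ _ hxy := by
    obtain ⟨g, hg⟩ := hxy 0
    simp only [← hg, hAact]

variable {E : Type*} [NormedAddCommGroup E] [InnerProductSpace ℝ E] {V : Submodule ℝ E} {k L : ℕ}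
  (e : OrthonormalBasis (Fin (k + 1)) ℝ V)

theorem sum_coordinate_sq {x : Metric.sphere (0 : E) 1} (hx : (x : E) ∈ V) :
    ∑ i, coordinate e i x ^ 2 = 1 := by
  have hnorm : ‖(⟨x, hx⟩ : V)‖ = 1 := norm_eq_of_mem_sphere x
  simpa [hnorm, coordinate] using e.sum_sq_inner_right ⟨x, hx⟩

/-- A cube in `V \ 0` which wraps once around the unit sphere: the center goes to the direction of
the last basis vector, the boundary is collapsed to its opposite. -/
noncomputable def wrappingCube (t : Fin k → ℝ) : E :=
  e.repr.symm (WithLp.toLp 2 (Fin.snoc (max 0 (1 - ‖centered t‖) • centered t)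
    (2 * max 0 (1 - ‖centered t‖) - 1)))

theorem inner_castSucc_wrappingCube (t : Fin k → ℝ) (i : Fin k) :
    inner ℝ (e i.castSucc : E) (wrappingCube e t) =
      max 0 (1 - ‖centered t‖) * (2 * t i - 1) := by
  rw [wrappingCube, ← Submodule.coe_inner, ← e.repr_apply_apply]
  simp [centered]

theorem inner_last_wrappingCube (t : Fin k → ℝ) :
    inner ℝ (e (Fin.last k) : E) (wrappingCube e t) = 2 * max 0 (1 - ‖centered t‖) - 1 := by
  rw [wrappingCube, ← Submodule.coe_inner, ← e.repr_apply_apply]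
  simp

theorem inner_last_wrappingCube_pos_iff (t : Fin k → ℝ) :
    0 < inner ℝ (e (Fin.last k) : E) (wrappingCube e t) ↔ ‖centered t‖ < 1 / 2 := by
  rw [inner_last_wrappingCube]
  constructor <;> intro h
  · by_contra! hle
    have : max 0 (1 - ‖centered t‖) ≤ 1 / 2 := max_le (by norm_num) (by linarith)
    linarith
  · have := le_max_right 0 (1 - ‖centered t‖)
    linarith

theorem wrappingCube_ne_zero (t : Fin k → ℝ) : wrappingCube e t ≠ 0 := by
  intro h
  have hlast := inner_last_wrappingCube e t
  rw [h, inner_zero_right] at hlast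
  have hmax : max 0 (1 - ‖centered t‖) = 1 / 2 := by linarith
  have hcentered : centered t = 0 := funext fun i => by
    have hi := inner_castSucc_wrappingCube e t i
    rw [h, inner_zero_right, hmax] at hi
    simp only [centered, Pi.zero_apply]
    linarith
  norm_num [hcentered] at hmax

theorem continuous_wrappingCube : Continuous (wrappingCube e) := by
  have hsnoc : Continuous fun t : Fin k → ℝ =>
      (Fin.snoc (max 0 (1 - ‖centered t‖) • centered t) (2 * max 0 (1 - ‖centered t‖) - 1) :
        Fin (k + 1) → ℝ) := by
    have := continuous_centered (r := k)
    exact Continuous.finSnoc (by fun_prop) (by fun_prop)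
  unfold wrappingCube
  fun_prop

theorem wrappingCube_eq_of_boundary {s t : Fin k → ℝ} {i j : Fin k} (hs : s i = 0 ∨ s i = 1)
    (ht : t j = 0 ∨ t j = 1) : wrappingCube e s = wrappingCube e t := by
  rw [wrappingCube, wrappingCube, max_eq_left (sub_nonpos.mpr (one_le_norm_centered hs)),
    max_eq_left (sub_nonpos.mpr (one_le_norm_centered ht)), zero_smul, zero_smul]

/-- `wrappingCube` as a cube in the unit sphere of `V`. -/
noncomputable def fixedSphereCube (t : Fin k → ℝ) : {x : Metric.sphere (0 : E) 1 | (x : E) ∈ V} :=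
  ⟨sphereMap (wrappingCube e) (wrappingCube_ne_zero e) t,
    (sphereMap_mem_iff _ V t).mpr (SetLike.coe_mem _)⟩

theorem continuous_fixedSphereCube : Continuous (fixedSphereCube e) :=
  (continuous_sphereMap _ (continuous_wrappingCube e)).subtype_mk _

theorem isOrbitCycle_fixedSphereCube {G R : Type*} [CommRing R] {q : ℕ} (hk : 1 < k) :
    IsOrbitCycle R (fun (_ : G) x => x) q (fixedSphereCube e) := fun j => by
  have hnegligible {c : ℝ} (hc : c = 0 ∨ c = 1) :
      IsNegligibleFace R (fun (_ : G) x => x) q (fixedSphereCube e) j c := by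
    have : Nontrivial (Fin k) := Fin.nontrivial_iff_two_le.mpr hk
    obtain ⟨i, hi⟩ := exists_ne j
    refine ⟨i, hi, .inl fun t s ht => Subtype.ext (sphereMap_congr (wrappingCube_ne_zero e) ?_)⟩
    exact wrappingCube_eq_of_boundary e (i := j) (j := j) (by simpa [hi.symm, ht] using hc)
      (ht ▸ hc)
  exact .inr ⟨hnegligible (.inl rfl), hnegligible (.inr rfl)⟩

/-- The fundamental cocycle of the unit sphere of `V`, as an iterated suspension. -/
noncomputable def fundamentalCocycle :
    (ℕ → {x : Metric.sphere (0 : E) 1 | (x : E) ∈ V}) → ℤ :=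
  suspension (fun (i : Fin k) x => coordinate e i.castSucc x.1) fun x =>
    heaviside ℤ (coordinate e (Fin.last k) (x 0).1)

theorem exists_isInvariantCocycle_fundamentalCocycle {G : Type*} :
    ∃ ε > 0, IsInvariantCocycle (fun (_ : G) x => x) ε k (fundamentalCocycle e) := by
  have hlip (i : Fin (k + 1)) : LipschitzWith 1
      fun x : {x : Metric.sphere (0 : E) 1 | (x : E) ∈ V} => coordinate e i x.1 :=
    by simpa using! (lipschitzWith_coordinate e i).comp (LipschitzWith.subtype_val _)
  refine ⟨1 / (4 * (k + 1)), by positivity, ?_⟩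
  refine (isInvariantCocycleOn_heaviside (hlip _) (fun _ _ => rfl) fun x hx => ?_).suspension
    (fun i => hlip i.castSucc) fun _ _ _ => rfl
  by_contra! hlast
  have hk : (0 : ℝ) < k + 1 := by positivity
  have hle : ∀ i, |coordinate e i x.1| ≤ 2 * (1 / (4 * (k + 1))) := by
    refine Fin.lastCases (hlast.trans ?_) hx
    linarith [one_div_pos.mpr (mul_pos four_pos hk)]
  have hsum : ∑ i, coordinate e i x.1 ^ 2 ≤ (k + 1) * (2 * (1 / (4 * (k + 1)))) ^ 2 := by
    simpa using Finset.sum_le_sum fun i (_ : i ∈ Finset.univ) =>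
      sq_le_sq' (neg_le_of_abs_le (hle i)) (le_of_abs_le (hle i))
  rw [sum_coordinate_sq e x.2] at hsum
  field_simp at hsum
  linarith

theorem IsGridSeq.dist_centered_le (hL : 0 < L) {x : ℕ → Fin k → ℕ} (hx : IsGridSeq L x) (i j : ℕ) :
    dist (centered fun c => (x i c : ℝ) / L) (centered fun c => (x j c : ℝ) / L) ≤ 2 / L := by
  have hL' : (0 : ℝ) < L := Nat.cast_pos.mpr hL
  refine (dist_pi_le_iff (by positivity)).mpr fun c => ?_
  have hij : (x i c : ℝ) ≤ x j c + 1 := mod_cast hx.2 i j c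
  have hji : (x j c : ℝ) ≤ x i c + 1 := mod_cast hx.2 j i c
  rw [Real.dist_eq, abs_le, centered, centered]
  constructor <;> field_simp <;> linarith

theorem gridIntegral_of_dim_zero {X R : Type*} [CommRing R] (κ : X → R) (f : (Fin 0 → ℕ) → X) :
    gridIntegral L (fun x => κ (x 0)) f = κ (f 0) := by
  simp [gridIntegral, gridBox, Subsingleton.elim (kuhnPath _ _ _) (0 : Fin 0 → ℕ), permSign_apply]

theorem gridIntegral_fundamentalCocycle (hL : 4 < L) :
    gridIntegral L (fundamentalCocycle e) (sample L (fixedSphereCube e)) = 1 := by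
  have hL0 : 0 < L := by omega
  have hL' : (0 : ℝ) < L := Nat.cast_pos.mpr hL0
  have h2L : (2 : ℝ) / L < 1 / 2 := by
    rw [div_lt_div_iff₀ hL' two_pos]
    exact_mod_cast (by omega : 2 * 2 < 1 * L)
  have hpos (i : Fin (k + 1)) (t : Fin k → ℝ) : 0 < coordinate e i (fixedSphereCube e t).1 ↔
      0 < inner ℝ (e i : E) (wrappingCube e t) :=
    inner_sphereMap_pos_iff (wrappingCube_ne_zero e) _ t
  rw [fundamentalCocycle, gridIntegral_suspension (d := 0) hL0 fun x hx hτ i j => ?_]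
  · have hlast := (inner_last_wrappingCube_pos_iff e _).mpr
      ((norm_centered_midpoint_le (r := k) hL0).trans_lt h2L)
    have happend :
        Fin.append (fun _ : Fin k => L / 2 + 1) (0 : Fin 0 → ℕ) = fun _ => L / 2 + 1 := by
      rw [Fin.append_right_nil _ _ rfl]
      rfl
    refine (gridIntegral_of_dim_zero (fun x : {x : Metric.sphere (0 : E) 1 | (x : E) ∈ V} =>
      heaviside ℤ (coordinate e (Fin.last k) x.1)) _).trans ?_
    rw [happend]
    exact if_pos ((hpos _ _).mpr hlast)
  · have hlast : ‖centered fun c => (x k c : ℝ) / L‖ < 1 / 2 := by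
      rw [← inner_last_wrappingCube_pos_iff e, ← hpos]
      by_contra hneg
      exact hτ (if_neg hneg)
    have hnorm : ‖centered fun c => (x j c : ℝ) / L‖ < 1 := by
      have := norm_le_norm_add_norm_sub' (centered fun c => (x j c : ℝ) / L)
        (centered fun c => (x k c : ℝ) / L)
      have := hx.dist_centered_le hL0 j k
      rw [dist_eq_norm] at this
      linarith
    refine (hpos _ _).trans ?_
    rw [inner_castSucc_wrappingCube]
    refine (mul_pos_iff_of_pos_left (lt_max_of_lt_right (sub_pos.mpr hnorm))).trans ?_
    rw [sub_pos, ← mul_div_assoc, one_lt_div hL']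
    exact_mod_cast Iff.rfl

theorem not_hasDeformationCover_of_even {G : Type*} [Group G] {n : ℕ} (hk : 0 < k) (hk' : Even k)
    (ρ : G →* (EuclideanSpace ℝ (Fin (n + 1)) ≃ₗᵢ[ℝ] EuclideanSpace ℝ (Fin (n + 1))))
    (V : Submodule ℝ (EuclideanSpace ℝ (Fin (n + 1)))) (hV : Module.finrank ℝ V = k + 1)
    (hfix : ∀ x, x ∈ V ↔ ∀ g, ρ g x = x) : ¬HasDeformationCover (sphereAct ρ) := fun hX => by
  let e : OrthonormalBasis (Fin (k + 1)) ℝ V := (stdOrthonormalBasis ℝ V).reindex (finCongr hV)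
  have hY := hX.restrictFixed (Y := {x : Sph n | (x : EuclideanSpace ℝ (Fin (n + 1))) ∈ V})
    fun x => (hfix x).trans (forall_congr' fun g =>
      ⟨fun h => Subtype.ext h, congrArg Subtype.val⟩)
  have : CompactSpace {x : Sph n | (x : EuclideanSpace ℝ (Fin (n + 1))) ∈ V} :=
    isCompact_iff_compactSpace.mp
      (V.closed_of_finiteDimensional.preimage continuous_subtype_val).isCompact
  obtain ⟨ε, hε, hu⟩ := exists_isInvariantCocycle_fundamentalCocycle e (G := G)
  have hsq := hY.eventually_two_mul_gridIntegral_sq_eq_zero (fun _ => rfl) hε hu hk hk'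
    (continuous_fixedSphereCube e) (isOrbitCycle_fixedSphereCube (q := 1) e (by grind))
  obtain ⟨L, hL, hL4⟩ := (hsq.and (Filter.eventually_gt_atTop 4)).exists
  rw [gridIntegral_fundamentalCocycle e hL4] at hL
  exact absurd (hL (one_dvd L)) (by norm_num)

end FixedSphere

section UpperBound

variable {G X : Type*} [TopologicalSpace X] {act : G → X → X} {a : X} {A B : Set X}

/-- The set `A` contracts in `X` to the point `a`, equivariantly under the operations of `G` that
stay in `A`. The homotopy is a family of paths indexed by `X`, with arbitrary values off `A`. -/
def IsEquivariantlyContractible (act : G → X → X) (a : X) (A : Set X) : Prop :=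
  ∃ H : X → C(I, X), ContinuousOn H A ∧ (∀ x ∈ A, H x 0 = x ∧ H x 1 = a) ∧
    ∀ g, ∀ x ∈ A, act g x ∈ A → ∀ t, H (act g x) t = act g (H x t)

theorem IsEquivariantlyContractible.exists_isInvariantPlanner {U : Set (X × X)}
    (hA : IsEquivariantlyContractible act a A) (hB : IsEquivariantlyContractible act a B)
    (hU : ∀ g₁ g₂ : G, ∀ p, p ∈ U → (act g₁ p.1, act g₂ p.2) ∈ U) (hAB : U ⊆ A ×ˢ B) :
    ∃ s₁ s₂, IsInvariantPlanner act U s₁ s₂ := by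
  obtain ⟨H, hH, hHend, hHact⟩ := hA
  obtain ⟨K, hK, hKend, hKact⟩ := hB
  let rev : C(I, I) := ⟨unitInterval.symm, continuous_symm⟩
  refine ⟨fun p => H p.1, fun p => (K p.2).comp rev, hU,
    hH.comp continuousOn_fst fun p hp => (hAB hp).1,
    (ContinuousMap.continuous_precomp rev).comp_continuousOn
      (hK.comp continuousOn_snd fun p hp => (hAB hp).2), fun p hp => ?_, fun g₁ g₂ p hp t => ?_⟩
  · obtain ⟨hH0, hH1⟩ := hHend p.1 (hAB hp).1
    obtain ⟨hK0, hK1⟩ := hKend p.2 (hAB hp).2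
    simp [rev, hH0, hH1, hK0, hK1]
  · have hgp := hAB (hU g₁ g₂ p hp)
    exact ⟨hHact g₁ _ (hAB hp).1 hgp.1 t, hKact g₂ _ (hAB hp).2 hgp.2 _⟩

open Classical in
theorem continuousOn_piecewise_of_disjoint {Z Y : Type*} [TopologicalSpace Z] [TopologicalSpace Y]
    {U V : Set Z} {f g : Z → Y} (hU : IsOpen U) (hV : IsOpen V) (hUV : Disjoint U V)
    (hf : ContinuousOn f U) (hg : ContinuousOn g V) : ContinuousOn (U.piecewise f g) (U ∪ V) := by
  refine .union_of_isOpen (hf.congr (piecewise_eqOn U f g)) (hg.congr fun z hz => ?_) hU hV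
  exact piecewise_eq_of_notMem _ _ _ (hUV.notMem_of_mem_right hz)

open Classical in
theorem IsInvariantPlanner.union {U V : Set (X × X)} {s₁ s₂ r₁ r₂ : X × X → C(I, X)}
    (hs : IsInvariantPlanner act U s₁ s₂) (hr : IsInvariantPlanner act V r₁ r₂) (hU : IsOpen U)
    (hV : IsOpen V) (hUV : Disjoint U V) :
    IsInvariantPlanner act (U ∪ V) (U.piecewise s₁ r₁) (U.piecewise s₂ r₂) where
  mem_of_mem g₁ g₂ p := Or.imp (hs.mem_of_mem g₁ g₂ p) (hr.mem_of_mem g₁ g₂ p)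
  continuousOn_left := continuousOn_piecewise_of_disjoint hU hV hUV hs.continuousOn_left
    hr.continuousOn_left
  continuousOn_right := continuousOn_piecewise_of_disjoint hU hV hUV hs.continuousOn_right
    hr.continuousOn_right
  endpoints p hp := by
    rcases hp with hp | hp
    · simpa [hp] using! hs.endpoints p hp
    · simpa [hUV.notMem_of_mem_right hp] using! hr.endpoints p hp
  equivariant g₁ g₂ p hp t := by
    rcases hp with hp | hp
    · simpa [hp, hs.mem_of_mem g₁ g₂ p hp] using hs.equivariant g₁ g₂ p hp t
    · simpa [hUV.notMem_of_mem_right hp, hUV.notMem_of_mem_right (hr.mem_of_mem g₁ g₂ p hp)]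
        using hr.equivariant g₁ g₂ p hp t

theorem exists_isInvariantPlanner_ne {Y : Type*} [LinearOrder Y] [TopologicalSpace Y]
    [OrderClosedTopology Y] {d : X → Y} (hd : Continuous d) (hact : ∀ g x, d (act g x) = d x)
    {α β : Y} (hαβ : ∀ x, d x ∈ Icc α β) (hA : IsEquivariantlyContractible act a {x | d x ≠ β})
    (hB : IsEquivariantlyContractible act a {x | d x ≠ α}) :
    ∃ s₁ s₂, IsInvariantPlanner act {p | d p.1 ≠ d p.2} s₁ s₂ := by
  have hlt : IsOpen {p : X × X | d p.1 < d p.2} := by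
    exact isOpen_lt (hd.comp continuous_fst) (hd.comp continuous_snd)
  have hgt : IsOpen {p : X × X | d p.2 < d p.1} := by
    exact isOpen_lt (hd.comp continuous_snd) (hd.comp continuous_fst)
  obtain ⟨s₁, s₂, hs⟩ := hA.exists_isInvariantPlanner hB (U := {p | d p.1 < d p.2})
    (by simp [hact]) fun p hp => ⟨(hp.trans_le (hαβ _).2).ne, ((hαβ _).1.trans_lt hp).ne'⟩
  obtain ⟨r₁, r₂, hr⟩ := hB.exists_isInvariantPlanner hA (U := {p | d p.2 < d p.1})
    (by simp [hact]) fun p hp => ⟨((hαβ _).1.trans_lt hp).ne', (hp.trans_le (hαβ _).2).ne⟩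
  have hunion : {p : X × X | d p.1 ≠ d p.2} = {p | d p.1 < d p.2} ∪ {p | d p.2 < d p.1} :=
    ext fun p => ne_iff_lt_or_gt
  exact hunion ▸ ⟨_, _, hs.union hr hlt hgt (disjoint_left.mpr fun p h h' => lt_asymm h h')⟩

theorem invTCcover_three_of_isEquivariantlyContractible {Y : Type*} [LinearOrder Y]
    [TopologicalSpace Y] [OrderClosedTopology Y] {d : X → Y} (hd : Continuous d)
    (hact : ∀ g x, d (act g x) = d x) {α β : Y} (hne : α ≠ β) (hαβ : ∀ x, d x ∈ Icc α β)
    (hA : IsEquivariantlyContractible act a {x | d x ≠ β})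
    (hB : IsEquivariantlyContractible act a {x | d x ≠ α}) : invTCcover act 3 := by
  have hopen (c : Y) : IsOpen {x | d x ≠ c} := isOpen_ne_fun hd continuous_const
  refine invTCcover_iff.mpr ⟨![{x | d x ≠ β} ×ˢ {x | d x ≠ β}, {p | d p.1 ≠ d p.2},
    {x | d x ≠ α} ×ˢ {x | d x ≠ α}], ?_, ?_, ?_⟩
  · simp only [Fin.forall_fin_succ, Fin.forall_fin_zero]
    exact ⟨(hopen β).prod (hopen β),
      isOpen_ne_fun (hd.comp continuous_fst) (hd.comp continuous_snd), (hopen α).prod (hopen α),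
      trivial⟩
  · refine eq_univ_of_forall fun p => mem_iUnion.mpr ?_
    by_cases hp : d p.1 = d p.2
    · by_cases hβ : d p.2 = β
      · exact ⟨2, by simp [hp, hβ, hne.symm]⟩
      · exact ⟨0, by simp [hp, hβ]⟩
    · exact ⟨1, hp⟩
  · simp only [Fin.forall_fin_succ, Fin.forall_fin_zero]
    exact ⟨hA.exists_isInvariantPlanner hA (by simp [hact]) subset_rfl,
      exists_isInvariantPlanner_ne hd hact hαβ hA hB,
      hB.exists_isInvariantPlanner hB (by simp [hact]) subset_rfl, trivial⟩

theorem isEquivariantlyContractible_of_continuous {A : Set X} (F : A × I → X) (hF : Continuous F)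
    (hzero : ∀ x, F (x, 0) = x) (hone : ∀ x, F (x, 1) = a)
    (hact : ∀ g (x y : A), (y : X) = act g x → ∀ t, F (y, t) = act g (F (x, t))) :
    IsEquivariantlyContractible act a A := by
  classical
  let K : C(A, C(I, X)) := ContinuousMap.curry ⟨F, hF⟩
  let H (x : X) : C(I, X) := if h : x ∈ A then K ⟨x, h⟩ else .const I a
  have hH {x : X} (hx : x ∈ A) : H x = K ⟨x, hx⟩ := dif_pos hx
  refine ⟨H, ?_, fun x hx => ?_, fun g x hx hgx t => ?_⟩
  · rw [continuousOn_iff_continuous_domRestrict]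
    exact K.continuous.congr fun x => (hH x.2).symm
  · rw [hH hx]
    exact ⟨hzero _, hone _⟩
  · rw [hH hx, hH hgx]
    exact hact g _ _ rfl t

end UpperBound

section SphereContraction

variable {G : Type*} [Monoid G] {n : ℕ}
  (ρ : G →* (EuclideanSpace ℝ (Fin (n + 1)) ≃ₗᵢ[ℝ] EuclideanSpace ℝ (Fin (n + 1))))

theorem segment_to_unit_ne_zero {E : Type*} [NormedAddCommGroup E] [NormedSpace ℝ E] {x : E}
    {c : ℝ → E} (hx : ‖x‖ = 1) (hc : ∀ t, ‖c t‖ = 1) (hne : x ≠ -c (1 / 2)) (t : I) :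
    (1 - t : ℝ) • x + (t : ℝ) • c t ≠ 0 := fun h => by
  have hnorm := congrArg norm (eq_neg_of_add_eq_zero_left h)
  have ht : (t : ℝ) = 1 / 2 := by
    rw [norm_neg, norm_smul, norm_smul, hx, hc, mul_one, mul_one,
      Real.norm_of_nonneg (one_minus_nonneg t), Real.norm_of_nonneg nonneg'] at hnorm
    linarith
  rw [ht, show (1 - 1 / 2 : ℝ) = 1 / 2 by norm_num, ← smul_add,
    smul_eq_zero_iff_right (by norm_num)] at h
  exact hne (eq_neg_of_add_eq_zero_left h)

/-- The radial projection of the segment from `x` to the moving point `c t`: at time `t` it passes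
through the origin only if `t = 1 / 2` and `x = -c (1 / 2)`. -/
theorem isEquivariantlyContractible_sphereAct {c : ℝ → EuclideanSpace ℝ (Fin (n + 1))}
    (hc : Continuous c) (hnorm : ∀ t, ‖c t‖ = 1) (hfix : ∀ g t, ρ g (c t) = c t) {a : Sph n}
    (ha : c 1 = a) :
    IsEquivariantlyContractible (sphereAct ρ) a
      {x | (x : EuclideanSpace ℝ (Fin (n + 1))) ≠ -c (1 / 2)} := by
  let W : Set (Sph n) := {x | (x : EuclideanSpace ℝ (Fin (n + 1))) ≠ -c (1 / 2)}
  let Φ (z : W × I) : EuclideanSpace ℝ (Fin (n + 1)) :=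
    (1 - z.2 : ℝ) • (z.1 : EuclideanSpace ℝ (Fin (n + 1))) + (z.2 : ℝ) • c z.2
  have hΦ (z : W × I) : Φ z ≠ 0 :=
    segment_to_unit_ne_zero (norm_eq_of_mem_sphere _) hnorm z.1.2 z.2
  refine isEquivariantlyContractible_of_continuous (sphereMap Φ hΦ)
    (continuous_sphereMap hΦ (by fun_prop)) (fun x => Subtype.ext ?_) (fun x => Subtype.ext ?_)
    fun g x y hxy t => sphereAct_sphereMap hΦ ?_
  · simp [coe_sphereMap, Φ]
  · simp [coe_sphereMap, Φ, ha]
  · have hy : (y : EuclideanSpace ℝ (Fin (n + 1))) = ρ g x := congrArg Subtype.val hxy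
    simp [Φ, hy, hfix]

theorem norm_cos_smul_add_sin_smul {E : Type*} [NormedAddCommGroup E] [InnerProductSpace ℝ E]
    {a b : E} (ha : ‖a‖ = 1) (hb : ‖b‖ = 1) (hab : inner ℝ a b = 0) (θ : ℝ) :
    ‖Real.cos θ • a + Real.sin θ • b‖ = 1 := by
  rw [← sq_eq_sq₀ (norm_nonneg _) zero_le_one, norm_add_sq_real, norm_smul, norm_smul,
    real_inner_smul_left, real_inner_smul_right, hab, ha, hb]
  simp

theorem invTCcover_sphereAct_three {a : Sph n} {b : EuclideanSpace ℝ (Fin (n + 1))}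
    (ha : ∀ g, ρ g a = a) (hb : ∀ g, ρ g b = b) (hbnorm : ‖b‖ = 1)
    (hab : inner ℝ (a : EuclideanSpace ℝ (Fin (n + 1))) b = 0) : invTCcover (sphereAct ρ) 3 := by
  have hnorm (x : Sph n) : ‖(x : EuclideanSpace ℝ (Fin (n + 1)))‖ = 1 := norm_eq_of_mem_sphere x
  have hdirect := isEquivariantlyContractible_sphereAct ρ (c := fun _ => a) continuous_const
    (fun _ => hnorm a) (fun g _ => ha g) rfl
  let c (t : ℝ) : EuclideanSpace ℝ (Fin (n + 1)) :=
    Real.cos (2 * Real.pi * t) • (a : EuclideanSpace ℝ (Fin (n + 1))) +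
      Real.sin (2 * Real.pi * t) • b
  have hmid : -c (1 / 2) = a := by simp [c, show 2 * Real.pi * 2⁻¹ = Real.pi by ring]
  have haround := isEquivariantlyContractible_sphereAct ρ (c := c) (by fun_prop)
    (fun t => norm_cos_smul_add_sin_smul (hnorm a) hbnorm hab _) (fun g t => by simp [c, ha, hb])
    (a := a) (by simp [c])
  refine invTCcover_three_of_isEquivariantlyContractible (a := a)
    (d := fun x : Sph n => inner ℝ (a : EuclideanSpace ℝ (Fin (n + 1))) x) (by fun_prop)
    (fun g x => ?_) (show (-1 : ℝ) ≠ 1 by norm_num) (fun x => ?_) ?_ ?_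
  · conv_lhs => rw [← ha g]
    exact (ρ g).inner_map_map a x
  · have hle := abs_real_inner_le_norm (a : EuclideanSpace ℝ (Fin (n + 1))) x
    rw [hnorm, hnorm, one_mul] at hle
    exact abs_le.mp hle
  · convert haround using 3 with x
    rw [Ne, inner_eq_one_iff_of_norm_eq_one (hnorm a) (hnorm x), hmid, eq_comm]
  · convert hdirect using 3 with x
    rw [Ne, inner_eq_neg_one_iff_of_norm_eq_one (hnorm a) (hnorm x), eq_comm, neg_eq_iff_eq_neg]

end SphereContraction

section MinCover

theorem invTCcover_mono {G X : Type*} [TopologicalSpace X] {act : G → X → X} {i m : ℕ}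
    (hi : 1 ≤ i) (him : i ≤ m) (h : invTCcover act i) : invTCcover act m := by
  obtain ⟨U, hU, hcover, hplanner⟩ := h
  have : Nonempty (Fin i) := ⟨⟨0, hi⟩⟩
  have hsurj := Function.invFun_surjective (Fin.castLE_injective him)
  exact ⟨U ∘ Function.invFun (Fin.castLE him), fun j => hU _, (hsurj.iUnion_comp U).trans hcover,
    fun j => hplanner _⟩

theorem invTC_eq_add_one {G X : Type*} [TopologicalSpace X] {act : G → X → X} {m : ℕ}
    (hm : invTCcover act (m + 1)) (hm' : ¬invTCcover act m) : invTC act = m + 1 := by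
  rw [invTC, minCover]
  refine le_antisymm (sInf_le ⟨m + 1, by simp, by omega, hm⟩) (le_sInf ?_)
  rintro _ ⟨i, rfl, hi, h⟩
  exact_mod_cast not_le.mp fun him => hm' (invTCcover_mono hi him h)

end MinCover

theorem exists_orthonormal_pair {E : Type*} [NormedAddCommGroup E] [InnerProductSpace ℝ E]
    {V : Submodule ℝ E} (hV : 1 < Module.finrank ℝ V) :
    ∃ a ∈ V, ∃ b ∈ V, ‖a‖ = 1 ∧ ‖b‖ = 1 ∧ inner ℝ a b = 0 := by
  have := FiniteDimensional.of_finrank_pos (zero_lt_one.trans hV)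
  let e := stdOrthonormalBasis ℝ V
  exact ⟨e ⟨0, by omega⟩, SetLike.coe_mem _, e ⟨1, hV⟩, SetLike.coe_mem _, e.norm_eq_one _,
    e.norm_eq_one _, e.inner_eq_zero (by simp)⟩

theorem apply_eq_self_of_prime_card {E G : Type*} [NormedAddCommGroup E] [NormedSpace ℝ E]
    [Group G] {p : ℕ} [Fact p.Prime] (hG : Nat.card G = p) (ρ : G →* (E ≃ₗᵢ[ℝ] E)) {g : G}
    (hg : g ≠ 1) {x : E} (hx : ρ g x = x) (h : G) : ρ h x = x := by
  obtain ⟨j, rfl⟩ := mem_powers_of_prime_card (g' := h) hG hg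
  induction j with
  | zero => simp
  | succ j ih => simpa [pow_succ, hx] using ih

theorem mem_of_apply_eq_of_forall_sphereAct {G : Type*} [Monoid G] {n : ℕ}
    {ρ : G →* (EuclideanSpace ℝ (Fin (n + 1)) ≃ₗᵢ[ℝ] EuclideanSpace ℝ (Fin (n + 1)))}
    {V : Submodule ℝ (EuclideanSpace ℝ (Fin (n + 1)))}
    (hV : ∀ x : Sph n, (∀ g, sphereAct ρ g x = x) → (x : EuclideanSpace ℝ (Fin (n + 1))) ∈ V)
    {x : EuclideanSpace ℝ (Fin (n + 1))} (hx : ∀ g, ρ g x = x) : x ∈ V := by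
  rcases eq_or_ne x 0 with rfl | hx0
  · exact V.zero_mem
  · exact (sphereMap_mem_iff (Φ := fun _ : Unit => x) (fun _ => hx0) V ()).mp
      (hV _ fun g => (sphereAct_sphereMap _ (hx g).symm).symm)

end InvTC

open InvTC

theorem invTC_linear_zmod_sphere_eq_three_general {p n k : ℕ} (hp : 1 < p) (hk : 0 < k)
    (ρ : Multiplicative (ZMod p) →*
      (EuclideanSpace ℝ (Fin (n + 1)) ≃ₗᵢ[ℝ] EuclideanSpace ℝ (Fin (n + 1))))
    (V : Submodule ℝ (EuclideanSpace ℝ (Fin (n + 1)))) (hV : Module.finrank ℝ V = k + 1)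
    (hVfix : ∀ g, ∀ v ∈ V, ρ g v = v) (hfree : ∀ g ≠ 1, ∀ x, ρ g x = x → x ∈ V)
    (hcase : k + 3 ≤ n ∨ Even k) : invTC (sphereAct ρ) = 3 := by
  have : NeZero p := ⟨by omega⟩
  have : Fact (1 < p) := ⟨hp⟩
  obtain ⟨a, ha, b, hb, hanorm, hbnorm, hab⟩ := exists_orthonormal_pair (V := V) (by omega)
  have hupper : invTCcover (sphereAct ρ) (2 + 1) :=
    invTCcover_sphereAct_three ρ (a := ⟨a, mem_sphere_zero_iff_norm.mpr hanorm⟩)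
      (fun g => hVfix g a ha) (fun g => hVfix g b hb) hbnorm hab
  refine (invTC_eq_add_one hupper fun hcover => ?_).trans (by norm_num)
  have hdeform := hasDeformationCover_of_invTCcover_two (sphereAct_one ρ) (sphereAct_mul ρ)
    (isometry_sphereAct ρ) hcover
  rcases hcase with hkn | heven
  · have hdim := V.finrank_add_finrank_orthogonal
    rw [hV, finrank_euclideanSpace_fin] at hdim
    exact not_hasDeformationCover_of_three_le_finrank hp hVfix hfree (by omega) hdeform
  · exact not_hasDeformationCover_of_even hk heven ρ V hV (fun x => ⟨fun hx g => hVfix g x hx,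
      fun hx => hfree (.ofAdd 1) (by simp) x (hx _)⟩) hdeform

/-- Let `ℤ/p` (`p` prime) act linearly on `S^n` with fixed point set the
great `k`-sphere cut out by a pointwise-fixed subspace `V` of dimension `k + 1`, where
`0 < k < n`.  If either (i) `k < n - 2`, or (ii) `k = n - 2` and `n` is even, or
(iii) `k = n - 1` and `n` is odd, then `TC^{ℤ/p}(S^n) = 3`. -/
theorem invTC_linear_zmod_sphere_eq_three (p : ℕ) (hp : p.Prime) (n k : ℕ)
    (hk : 0 < k) (hkn : k < n)
    (ρ : Multiplicative (ZMod p) →*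
      (EuclideanSpace ℝ (Fin (n + 1)) ≃ₗᵢ[ℝ] EuclideanSpace ℝ (Fin (n + 1))))
    (V : Submodule ℝ (EuclideanSpace ℝ (Fin (n + 1))))
    (hV : Module.finrank ℝ V = k + 1)
    (hVfix : ∀ g : Multiplicative (ZMod p), ∀ v ∈ V, ρ g v = v)
    (hfixV : ∀ x : ↥(Sph n),
      (∀ g : Multiplicative (ZMod p), sphereAct ρ g x = x) ↔
        (x : EuclideanSpace ℝ (Fin (n + 1))) ∈ V)
    (hcase : k < n - 2 ∨ (k = n - 2 ∧ Even n) ∨ (k = n - 1 ∧ Odd n)) :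
    invTC (sphereAct ρ) = 3 := by
  have : Fact p.Prime := ⟨hp⟩
  exact invTC_linear_zmod_sphere_eq_three_general hp.one_lt hk ρ V hV hVfix
    (fun g hg x hx => mem_of_apply_eq_of_forall_sphereAct (fun y => (hfixV y).mp)
      (apply_eq_self_of_prime_card (p := p) (by simp) ρ hg hx)) (by grind)
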